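/- arXiv:2302.02995 — 4 statements merged into one kernel-verified Lean document; each statement's English description precedes it below -/
import Mathlib

section
/- Every finite simple graph of pathwidth strictly less than a that contains no path on 2^b vertices as a subgraph has treedepth at most 10ab (for all positive integers a, b). -/
/-- `G` contains a path on `ℓ` vertices as a subgraph: `ℓ` distinct vertices with
consecutive ones adjacent. -/
def HasPathOn {V : Type*} (G : SimpleGraph V) (ℓ : ℕ) : Prop :=
  ∃ f : Fin ℓ → V, Function.Injective f ∧
    ∀ (i : ℕ) (h : i + 1 < ℓ), G.Adj (f ⟨i, Nat.lt_of_succ_lt h⟩) (f ⟨i + 1, h⟩)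

/-- A forest order: a partial order in which the set of ancestors (predecessors)
of every element is a chain. Forest orders correspond to rooted forests, where
`le u v` means `u` is an ancestor of `v` (or `u = v`). -/
def IsForestOrder {V : Type*} (le : V → V → Prop) : Prop :=
  (∀ v, le v v) ∧ (∀ u v, le u v → le v u → u = v) ∧
  (∀ u v w, le u v → le v w → le u w) ∧
  (∀ u w v, le u v → le w v → le u w ∨ le w u)

/-- An elimination forest of `G`: a rooted forest on the vertices of `G` such that
for every edge, one endpoint is an ancestor of the other. -/
def IsElimForest {V : Type*} (G : SimpleGraph V) (le : V → V → Prop) : Prop :=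
  IsForestOrder le ∧ ∀ u v, G.Adj u v → le u v ∨ le v u

/-- The height of a rooted forest: the maximum number of vertices on a
root-to-leaf path, i.e. the maximum size of a set of ancestors of a vertex. -/
noncomputable def forestHeight {V : Type*} (le : V → V → Prop) : ℕ :=
  ⨆ v, {u | le u v}.ncard

/-- Treedepth: the minimum height of an elimination forest. -/
noncomputable def treedepth {V : Type*} (G : SimpleGraph V) : ℕ :=
  sInf { n | ∃ le : V → V → Prop, IsElimForest G le ∧ forestHeight le = n }

/-- A path decomposition of `G`: bags indexed by the nodes `0, …, n-1` of a path,
covering all vertices and edges, such that the set of bags containing any fixed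
vertex forms a non-empty interval. -/
structure PathDecomp {V : Type*} (G : SimpleGraph V) where
  n : ℕ
  bag : Fin n → Set V
  mem_bag : ∀ v : V, ∃ t, v ∈ bag t
  edge_bag : ∀ u v : V, G.Adj u v → ∃ t, u ∈ bag t ∧ v ∈ bag t
  convex : ∀ (v : V) (s u t : Fin n), s ≤ u → u ≤ t → v ∈ bag s → v ∈ bag t → v ∈ bag u

/-- The width of a path decomposition: maximum bag size minus 1. -/
noncomputable def PathDecomp.width {V : Type*} {G : SimpleGraph V} (D : PathDecomp G) : ℕ :=
  (⨆ t, (D.bag t).ncard) - 1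

/-- Pathwidth: the minimum width of a path decomposition. -/
noncomputable def pathwidth {V : Type*} (G : SimpleGraph V) : ℕ :=
  sInf { w | ∃ D : PathDecomp G, D.width = w }


/-! ## Abstract elimination predicate -/

inductive TD {V : Type*} [DecidableEq V] (G : SimpleGraph V) : Finset V → ℕ → Prop
  | empty : TD G ∅ 0
  | ins (v : V) (S : Finset V) (n : ℕ) : TD G S n → TD G (insert v S) (n + 1)
  | union (S T : Finset V) (n : ℕ) : (∀ u ∈ S, ∀ v ∈ T, ¬ G.Adj u v) → Disjoint S T →
      TD G S n → TD G T n → TD G (S ∪ T) n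
  | mono (S : Finset V) (n m : ℕ) : n ≤ m → TD G S n → TD G S m

section TDlemmas
set_option linter.unusedSectionVars false
variable {V : Type*} [DecidableEq V] {G : SimpleGraph V}

theorem TD.subset {S : Finset V} {n : ℕ} (h : TD G S n) : ∀ T ⊆ S, TD G T n := by
  induction h with
  | empty => intro T hT; rw [Finset.subset_empty.1 hT]; exact TD.empty
  | ins v S n _ ih =>
    intro T hT
    by_cases hv : v ∈ T
    · rw [← Finset.insert_erase hv]
      refine TD.ins _ _ _ (ih _ ?_)
      intro x hx
      have h1 := hT (Finset.mem_of_mem_erase hx)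
      have h2 := Finset.ne_of_mem_erase hx
      simpa [h2] using h1
    · refine TD.mono _ n _ (Nat.le_succ n) (ih _ ?_)
      intro x hx
      have h1 := hT hx
      have h2 : x ≠ v := fun h => hv (h ▸ hx)
      simpa [h2] using h1
  | union S U n hadj hd _ _ ih1 ih2 =>
    intro T hT
    have : T = (T ∩ S) ∪ (T ∩ U) := by
      rw [← Finset.inter_union_distrib_left, Finset.inter_eq_left.2 hT]
    rw [this]
    refine TD.union _ _ _ ?_ ?_ (ih1 _ Finset.inter_subset_right) (ih2 _ Finset.inter_subset_right)
    · intro u hu v hv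
      exact hadj u (Finset.mem_inter.1 hu).2 v (Finset.mem_inter.1 hv).2
    · exact hd.mono Finset.inter_subset_right Finset.inter_subset_right
  | mono S n m hnm _ ih => intro T hT; exact TD.mono _ _ _ hnm (ih T hT)

theorem TD.add_set {S : Finset V} {n : ℕ} (X : Finset V) (h : TD G S n) :
    TD G (X ∪ S) (n + X.card) := by
  induction X using Finset.induction_on with
  | empty => simpa using h
  | insert a X ha ih =>
    rw [Finset.insert_union, Finset.card_insert_of_notMem ha, ← add_assoc]
    exact TD.ins _ _ _ ih

theorem TD.forest {S : Finset V} {n : ℕ} (h : TD G S n) :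
    ∃ le : V → V → Prop, IsForestOrder le ∧ (∀ u v, le u v → u = v ∨ (u ∈ S ∧ v ∈ S)) ∧
      (∀ u ∈ S, ∀ v ∈ S, G.Adj u v → le u v ∨ le v u) ∧
      (∀ v ∈ S, ∃ A : Finset V, A.card ≤ n ∧ ∀ u, le u v → u ∈ A) := by
  induction h with
  | empty =>
    refine ⟨fun u v => u = v, ⟨?_, ?_, ?_, ?_⟩, ?_, ?_, ?_⟩ <;> simp +contextual
  | ins v S n _ ih =>
    obtain ⟨le, ⟨h1, h2, h3, h4⟩, hS, hadj, hc⟩ := ih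
    by_cases hv : v ∈ S
    · rw [Finset.insert_eq_of_mem hv]
      refine ⟨le, ⟨h1, h2, h3, h4⟩, hS, hadj, fun v hv => ?_⟩
      obtain ⟨A, hA, hA'⟩ := hc v hv
      exact ⟨A, hA.trans (Nat.le_succ n), hA'⟩
    · refine ⟨fun x y => (x = v ∧ y ∈ S) ∨ le x y, ⟨?_, ?_, ?_, ?_⟩, ?_, ?_, ?_⟩
      · grind
      · grind
      · grind
      · grind
      · grind
      · grind
      · intro y hy
        by_cases hyv : y = v
        · refine ⟨{v}, by simp, ?_⟩
          grind
        · have hyS : y ∈ S := by simpa [hyv] using hy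
          obtain ⟨A, hA, hA'⟩ := hc y hyS
          refine ⟨insert v A, (Finset.card_insert_le _ _).trans (by omega), ?_⟩
          grind
  | union S T n hadj hd _ _ ih1 ih2 =>
    obtain ⟨le, ⟨h1, h2, h3, h4⟩, hS, hadj1, hc⟩ := ih1
    obtain ⟨le', ⟨h1', h2', h3', h4'⟩, hS', hadj1', hc'⟩ := ih2
    have hd' : ∀ x, x ∈ S → x ∈ T → False := fun x hx hy => Finset.disjoint_left.1 hd hx hy
    have hadj' : ∀ u ∈ S, ∀ v ∈ T, ¬ G.Adj v u := fun u hu v hv h => hadj u hu v hv h.symm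
    refine ⟨fun x y => le x y ∨ le' x y, ⟨?_, ?_, ?_, ?_⟩, ?_, ?_, ?_⟩
    · grind
    · grind
    · grind
    · grind
    · grind
    · grind
    · intro y hy
      rcases Finset.mem_union.1 hy with hy | hy
      · obtain ⟨A, hA, hA'⟩ := hc y hy
        refine ⟨A, hA, ?_⟩
        grind
      · obtain ⟨A, hA, hA'⟩ := hc' y hy
        refine ⟨A, hA, ?_⟩
        grind
  | mono S n m hnm _ ih =>
    obtain ⟨le, h1, hS, hadj, hc⟩ := ih
    refine ⟨le, h1, hS, hadj, fun v hv => ?_⟩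
    obtain ⟨A, hA, hA'⟩ := hc v hv
    exact ⟨A, hA.trans hnm, hA'⟩

theorem TD.treedepth_le [Fintype V] {n : ℕ} (h : TD G Finset.univ n) : treedepth G ≤ n := by
  obtain ⟨le, h1, -, hadj, hc⟩ := h.forest
  have h2 : treedepth G ≤ forestHeight le :=
    Nat.sInf_le ⟨le, ⟨h1, fun u v huv => hadj u (Finset.mem_univ _) v (Finset.mem_univ _) huv⟩, rfl⟩
  refine h2.trans (ciSup_le' fun v => ?_)
  obtain ⟨A, hA, hA'⟩ := hc v (Finset.mem_univ _)
  refine le_trans ?_ hA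
  rw [← Set.ncard_coe_finset]
  exact Set.ncard_le_ncard (fun u hu => hA' u hu) A.finite_toSet

/-- The component of `v` in the subgraph induced on `S`. -/
noncomputable def comp (G : SimpleGraph V) (S : Finset V) (v : V) : Finset V :=
  open Classical in
  S.filter (fun u => Relation.ReflTransGen (fun x y => G.Adj x y ∧ x ∈ S ∧ y ∈ S) v u)

theorem mem_comp {S : Finset V} {v u : V} : u ∈ comp G S v ↔
    u ∈ S ∧ Relation.ReflTransGen (fun x y => G.Adj x y ∧ x ∈ S ∧ y ∈ S) v u := by
  simp only [comp, Finset.mem_filter]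

theorem TD.of_comp {n : ℕ} (S : Finset V) (h : ∀ v ∈ S, TD G (comp G S v) n) : TD G S n := by
  induction hk : S.card using Nat.strong_induction_on generalizing S with
  | _ k ih =>
  rcases S.eq_empty_or_nonempty with rfl | ⟨v, hv⟩
  · exact TD.mono _ _ _ (Nat.zero_le _) TD.empty
  have hvc : v ∈ comp G S v := by
    simp only [comp, Finset.mem_filter]; exact ⟨hv, .refl⟩
  have hsub : comp G S v ⊆ S := by simp [comp]
  have e : S = comp G S v ∪ (S \ comp G S v) := (Finset.union_sdiff_of_subset hsub).symm
  rw [e]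
  refine TD.union _ _ _ ?_ Finset.disjoint_sdiff (h v hv) ?_
  · intro x hx y hy hxy
    rw [Finset.mem_sdiff] at hy
    apply hy.2
    simp only [comp, Finset.mem_filter] at hx ⊢
    exact ⟨hy.1, hx.2.tail ⟨hxy, hx.1, hy.1⟩⟩
  · refine ih (S \ comp G S v).card ?_ _ ?_ rfl
    · rw [← hk]
      exact Finset.card_lt_card (Finset.sdiff_ssubset hsub ⟨v, hvc⟩)
    · intro w hw
      refine (h w (Finset.mem_sdiff.1 hw).1).subset _ ?_
      intro x hx
      rw [mem_comp] at hx ⊢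
      refine ⟨(Finset.mem_sdiff.1 hx.1).1, Relation.ReflTransGen.mono ?_ _ _ hx.2⟩
      rintro p q ⟨h1, h2, h3⟩
      exact ⟨h1, (Finset.mem_sdiff.1 h2).1, (Finset.mem_sdiff.1 h3).1⟩

theorem TD.dfs (n : ℕ) : ∀ (S : Finset V) (r : V), r ∈ S →
    (∀ u ∈ S, Relation.ReflTransGen (fun x y => G.Adj x y ∧ x ∈ S ∧ y ∈ S) r u) →
    (∀ l : List V, (r :: l).IsChain G.Adj → (r :: l).Nodup → (∀ x ∈ l, x ∈ S) → l.length < n) →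
    TD G S n := by
  induction n with
  | zero =>
    intro S r hr _ h
    exact absurd (h [] (by simp) (by simp) (by simp)) (by simp)
  | succ n ih =>
    intro S r hr hreach h
    rw [← Finset.insert_erase hr]
    refine TD.ins _ _ _ (TD.of_comp _ ?_)
    intro v hv
    have key : ∀ u, Relation.ReflTransGen (fun x y => G.Adj x y ∧ x ∈ S ∧ y ∈ S) r u → u ≠ r →
        ∃ x ∈ S.erase r, G.Adj r x ∧ Relation.ReflTransGen
          (fun x y => G.Adj x y ∧ x ∈ S.erase r ∧ y ∈ S.erase r) x u := by
      intro u hu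
      induction hu with
      | refl => intro h; exact absurd rfl h
      | @tail p q _ hpq ih2 =>
        intro hq
        by_cases hp : p = r
        · subst hp
          exact ⟨q, by simp [hq, hpq.2.2], hpq.1, .refl⟩
        · obtain ⟨x, hx, hx1, hx2⟩ := ih2 hp
          exact ⟨x, hx, hx1, hx2.tail ⟨hpq.1, by simp [hp, hpq.2.1], by simp [hq, hpq.2.2]⟩⟩
    obtain ⟨x, hxS, hrx, hxv⟩ := key v (hreach v (Finset.mem_of_mem_erase hv))
      (Finset.ne_of_mem_erase hv)
    set R := (fun x y => G.Adj x y ∧ x ∈ S.erase r ∧ y ∈ S.erase r) with hR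
    have hsymm : ∀ p q, Relation.ReflTransGen R p q → Relation.ReflTransGen R q p := by
      intro p q hpq
      induction hpq with
      | refl => exact .refl
      | tail _ hpq ih2 => exact Relation.ReflTransGen.head ⟨hpq.1.symm, hpq.2.2, hpq.2.1⟩ ih2
    have hmem : ∀ u, u ∈ comp G (S.erase r) v ↔ u ∈ S.erase r ∧ Relation.ReflTransGen R v u := by
      intro u; simp only [comp, Finset.mem_filter, hR]
    refine ih _ x ((hmem x).2 ⟨hxS, hsymm _ _ hxv⟩) ?_ ?_
    · intro u hu
      have hu' := (hmem u).1 hu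
      have hxu := hxv.trans hu'.2
      have : ∀ w, Relation.ReflTransGen R x w → Relation.ReflTransGen
          (fun x y => G.Adj x y ∧ x ∈ comp G (S.erase r) v ∧ y ∈ comp G (S.erase r) v) x w := by
        intro w hw
        induction hw with
        | refl => exact .refl
        | @tail p q hp hpq ih2 =>
          have hvp := (hsymm _ _ hxv).trans hp
          exact ih2.tail ⟨hpq.1, (hmem p).2 ⟨hpq.2.1, hvp⟩, (hmem q).2 ⟨hpq.2.2, hvp.tail hpq⟩⟩
      exact this u hxu
    · intro l hl hnd hlS
      have hlS' : ∀ z ∈ x :: l, z ∈ S.erase r := by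
        intro z hz
        rcases List.mem_cons.1 hz with rfl | hz
        · exact hxS
        · exact ((hmem z).1 (hlS z hz)).1
      have := h (x :: l) (List.isChain_cons_cons.2 ⟨hrx, hl⟩)
        (List.nodup_cons.2 ⟨fun hr' => by simpa using hlS' r hr', hnd⟩)
        (fun z hz => Finset.mem_of_mem_erase (hlS' z hz))
      simpa using this

theorem hasPathOn_of_list (l : List V) (h : l.IsChain G.Adj) (hnd : l.Nodup) (n : ℕ)
    (hn : n ≤ l.length) : HasPathOn G n := by
  refine ⟨fun i => l[i.1]'(by omega), ?_, ?_⟩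
  · intro i j hij
    have := (List.Nodup.getElem_inj_iff hnd).1 hij
    exact Fin.ext this
  · intro i hi
    exact List.isChain_iff_getElem.1 h i (by omega)

theorem TD.of_noPath (S : Finset V) (n : ℕ) (h : ¬ HasPathOn G n) : TD G S n := by
  refine TD.of_comp _ fun v hv => ?_
  refine TD.dfs n _ v ?_ ?_ ?_
  · simp only [comp, Finset.mem_filter]; exact ⟨hv, .refl⟩
  · intro u hu
    have hu' := (mem_comp.1 hu).2
    induction hu' with
    | refl => exact .refl
    | @tail p q hp hpq ih2 =>
      have hpc : p ∈ comp G S v := by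
        simp only [comp, Finset.mem_filter]; exact ⟨hpq.2.1, hp⟩
      exact (ih2 hpc).tail ⟨hpq.1, hpc, hu⟩
  · intro l hl hnd _
    by_contra hlt
    exact h (hasPathOn_of_list _ hl hnd n (by simp; omega))

end TDlemmas

/-! ## Menger's theorem for relations -/

section Menger
variable {V : Type*}

/-- `l` is a directed walk from `A` to `B`. -/
def IsW (r : V → V → Prop) (A B : Finset V) (l : List V) : Prop :=
  l.IsChain r ∧ (∃ a ∈ A, l.head? = some a) ∧ (∃ b ∈ B, l.getLast? = some b)

theorem first_hit (T : Finset V) (l : List V) (h : ∃ z ∈ l, z ∈ T) :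
    ∃ l1 z l2, l = l1 ++ z :: l2 ∧ z ∈ T ∧ ∀ w ∈ l1, w ∉ T := by
  induction l with
  | nil => simp at h
  | cons a l ih =>
    by_cases ha : a ∈ T
    · exact ⟨[], a, l, rfl, ha, by simp⟩
    · obtain ⟨l1, z, l2, e, hz, hw⟩ := ih (by
        obtain ⟨z, hz, hzT⟩ := h
        rcases List.mem_cons.1 hz with rfl | hz
        · exact absurd hzT ha
        · exact ⟨z, hz, hzT⟩)
      refine ⟨a :: l1, z, l2, by rw [e]; rfl, hz, ?_⟩
      intro w hw'
      rcases List.mem_cons.1 hw' with rfl | hw'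
      · exact ha
      · exact hw w hw'

theorem last_hit (T : Finset V) (l : List V) (h : ∃ z ∈ l, z ∈ T) :
    ∃ l1 z l2, l = l1 ++ z :: l2 ∧ z ∈ T ∧ ∀ w ∈ l2, w ∉ T := by
  obtain ⟨l1, z, l2, e, hz, hw⟩ := first_hit T l.reverse (by simpa using h)
  refine ⟨l2.reverse, z, l1.reverse, ?_, hz, by simpa using hw⟩
  have := congrArg List.reverse e
  simpa using this

/-- deleting one arc -/
def delArc (r : V → V → Prop) (x y : V) : V → V → Prop := fun u v => r u v ∧ ¬ (u = x ∧ v = y)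

/-- A chain none of whose non-last vertices is `x` survives deletion of arc `(x,y)`. -/
theorem chain_del_last {r : V → V → Prop} {x y : V} (l1 : List V) (z : V)
    (h : (l1 ++ [z]).IsChain r) (hx : x ∉ l1) : (l1 ++ [z]).IsChain (delArc r x y) := by
  induction l1 with
  | nil => simp
  | cons a l ih =>
    cases l with
    | nil =>
      simp only [List.cons_append, List.nil_append, List.isChain_cons_cons] at h ⊢
      refine ⟨⟨h.1, ?_⟩, by simp⟩
      rintro ⟨rfl, -⟩; simp at hx
    | cons c l =>
      simp only [List.cons_append, List.isChain_cons_cons] at h ⊢ ih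
      simp only [List.mem_cons, not_or] at hx ih
      refine ⟨⟨h.1, ?_⟩, ih h.2 hx.2⟩
      rintro ⟨rfl, -⟩; exact hx.1 rfl

theorem chain_del_first {r : V → V → Prop} {x y : V} (l2 : List V) : ∀ (z : V),
    (z :: l2).IsChain r → y ∉ l2 → (z :: l2).IsChain (delArc r x y) := by
  induction l2 with
  | nil => intro z _ _; simp
  | cons a l ih =>
    intro z h hy
    simp only [List.isChain_cons_cons] at h ⊢
    simp only [List.mem_cons, not_or] at hy
    refine ⟨⟨h.1, ?_⟩, ih a h.2 hy.2⟩
    rintro ⟨-, rfl⟩; exact hy.1 rfl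

theorem chain_mono {r s : V → V → Prop} (hrs : ∀ u v, r u v → s u v) {l : List V}
    (h : l.IsChain r) : l.IsChain s := List.IsChain.imp hrs h

theorem isW_prefix {r : V → V → Prop} {A B T : Finset V} {l1 l2 : List V} {z : V}
    (h : IsW r A B (l1 ++ z :: l2)) (hz : z ∈ T) : IsW r A T (l1 ++ [z]) := by
  obtain ⟨hc, ⟨a, ha, hh⟩, -⟩ := h
  refine ⟨?_, ⟨a, ha, ?_⟩, ⟨z, hz, by simp⟩⟩
  · have : l1 ++ z :: l2 = (l1 ++ [z]) ++ l2 := by simp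
    rw [this] at hc
    exact (List.isChain_append.1 hc).1
  · cases l1 <;> simpa using hh

theorem isW_suffix {r : V → V → Prop} {A B T : Finset V} {l1 l2 : List V} {z : V}
    (h : IsW r A B (l1 ++ z :: l2)) (hz : z ∈ T) : IsW r T B (z :: l2) := by
  obtain ⟨hc, -, ⟨b, hb, hh⟩⟩ := h
  refine ⟨(List.isChain_append.1 hc).2.1, ⟨z, hz, by simp⟩, ⟨b, hb, ?_⟩⟩
  simpa using hh

/-- glue at a common vertex -/
theorem isW_glue {r : V → V → Prop} {A B T T' : Finset V} {l1 l2 : List V} {z : V}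
    (h1 : IsW r A T (l1 ++ [z])) (h2 : IsW r T' B (z :: l2)) : IsW r A B (l1 ++ z :: l2) := by
  obtain ⟨hc, ⟨a, ha, hh⟩, -⟩ := h1
  obtain ⟨hc', -, ⟨b, hb, hh'⟩⟩ := h2
  refine ⟨?_, ⟨a, ha, ?_⟩, ⟨b, hb, by simpa using hh'⟩⟩
  · rw [List.isChain_append] at hc ⊢
    refine ⟨hc.1, hc', ?_⟩
    simpa using hc.2.2
  · cases l1 <;> simpa using hh

theorem isW_glue_arc {r : V → V → Prop} {A B T T' : Finset V} {l1 l2 : List V} {x y : V}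
    (hr : r x y)
    (h1 : IsW r A T (l1 ++ [x])) (h2 : IsW r T' B (y :: l2)) :
    IsW r A B (l1 ++ x :: y :: l2) := by
  obtain ⟨hc, ⟨a, ha, hh⟩, -⟩ := h1
  obtain ⟨hc', -, ⟨b, hb, hh'⟩⟩ := h2
  refine ⟨?_, ⟨a, ha, ?_⟩, ⟨b, hb, by simpa using hh'⟩⟩
  · rw [List.isChain_append] at hc ⊢
    refine ⟨hc.1, List.isChain_cons_cons.2 ⟨hr, hc'⟩, ?_⟩
    simpa using hc.2.2
  · cases l1 <;> simpa using hh

theorem isW_end {r : V → V → Prop} {A B : Finset V} {l : List V} (h : IsW r A B l) :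
    ∃ l1 z, l = l1 ++ [z] ∧ z ∈ B := by
  obtain ⟨-, -, b, hb, hh⟩ := h
  obtain ⟨l1, e⟩ := List.getLast?_eq_some_iff.1 hh
  exact ⟨l1, b, e, hb⟩

theorem isW_start {r : V → V → Prop} {A B : Finset V} {l : List V} (h : IsW r A B l) :
    ∃ z l2, l = z :: l2 ∧ z ∈ A := by
  obtain ⟨-, ⟨a, ha, hh⟩, -⟩ := h
  obtain ⟨l1, e⟩ := List.head?_eq_some_iff.1 hh
  exact ⟨a, l1, e, ha⟩

variable [Fintype V] [DecidableEq V]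

/-- Menger's theorem (vertex-disjoint version for set-to-set walks). -/
theorem menger (r : V → V → Prop) (hirr : ∀ x, ¬ r x x) (A B : Finset V) (k : ℕ)
    (h : ∀ X : Finset V, (∀ l, IsW r A B l → ∃ z ∈ l, z ∈ X) → k ≤ X.card) :
    ∃ P : Fin k → List V, (∀ i, IsW r A B (P i) ∧ (P i).Nodup) ∧
      ∀ i j, i ≠ j → ∀ z ∈ P i, z ∉ P j := by
  induction hn : {p : V × V | r p.1 p.2}.ncard using Nat.strong_induction_on
    generalizing r A B with
  | _ n ih =>
  by_cases hr : ∃ x y, r x y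
  swap
  · push Not at hr
    have hk := h (A ∩ B) (by
      rintro l ⟨hc, ⟨a, ha, hh⟩, ⟨b, hb, hl⟩⟩
      obtain ⟨l', rfl⟩ := List.head?_eq_some_iff.1 hh
      cases l' with
      | nil =>
        simp only [List.getLast?_singleton, Option.some.injEq] at hl
        subst hl
        exact ⟨a, by simp, by simp [ha, hb]⟩
      | cons c l' => exact absurd (List.isChain_cons_cons.1 hc).1 (hr _ _))
    obtain ⟨C, hC, hCk⟩ := Finset.exists_subset_card_eq hk
    let e := C.equivFinOfCardEq hCk
    refine ⟨fun i => [(e.symm i : V)], fun i => ⟨⟨by simp, ?_, ?_⟩, by simp⟩, ?_⟩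
    · exact ⟨_, (Finset.mem_inter.1 (hC (e.symm i).2)).1, rfl⟩
    · exact ⟨_, (Finset.mem_inter.1 (hC (e.symm i).2)).2, rfl⟩
    · intro i j hij z hz hz'
      simp only [List.mem_singleton] at hz hz'
      exact hij (e.symm.injective (Subtype.ext (hz.symm.trans hz')))
  obtain ⟨x, y, hxy⟩ := hr
  set r' := delArc r x y with hr'
  have hr'r : ∀ u v, r' u v → r u v := fun u v h => h.1
  have hirr' : ∀ x, ¬ r' x x := fun x hx => hirr x hx.1
  have hcard : {p : V × V | r' p.1 p.2}.ncard < n := by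
    rw [← hn]
    refine Set.ncard_lt_ncard ?_ (Set.toFinite _)
    refine ⟨fun p hp => hr'r _ _ hp, fun hsub => ?_⟩
    exact (hsub (show (x, y) ∈ {p : V × V | r p.1 p.2} from hxy)).2 ⟨rfl, rfl⟩
  have hIW : ∀ A B l, IsW r' A B l → IsW r A B l := fun A B l h => ⟨chain_mono hr'r h.1, h.2⟩
  by_cases hsep : ∀ X : Finset V, (∀ l, IsW r' A B l → ∃ z ∈ l, z ∈ X) → k ≤ X.card
  · obtain ⟨P, hP, hd⟩ := ih _ hcard r' hirr' A B hsep rfl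
    exact ⟨P, fun i => ⟨hIW _ _ _ (hP i).1, (hP i).2⟩, hd⟩
  push Not at hsep
  obtain ⟨S, hS, hSk⟩ := hsep
  -- both `S + x` and `S + y` separate in `r`
  have hSx : ∀ l, IsW r A B l → ∃ z ∈ l, z ∈ insert x S := by
    intro l hl
    by_cases hxl : x ∈ l
    · exact ⟨x, hxl, by simp⟩
    · obtain ⟨l1, z, rfl, hz⟩ := isW_end hl
      obtain ⟨w, hw, hwS⟩ := hS _ ⟨chain_del_last l1 z hl.1 (by simp_all), hl.2⟩
      exact ⟨w, hw, by simp [hwS]⟩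
  have hSy : ∀ l, IsW r A B l → ∃ z ∈ l, z ∈ insert y S := by
    intro l hl
    by_cases hxl : y ∈ l
    · exact ⟨y, hxl, by simp⟩
    · obtain ⟨z, l2, rfl, hz⟩ := isW_start hl
      obtain ⟨w, hw, hwS⟩ := hS _ ⟨chain_del_first l2 z hl.1 (by simp_all), hl.2⟩
      exact ⟨w, hw, by simp [hwS]⟩
  have hxS : x ∉ S := by
    intro hx
    have := h _ hSx
    rw [Finset.insert_eq_of_mem hx] at this
    omega
  have hyS : y ∉ S := by
    intro hx
    have := h _ hSy
    rw [Finset.insert_eq_of_mem hx] at this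
    omega
  have hcx : (insert x S).card = k := by
    have := h _ hSx
    rw [Finset.card_insert_of_notMem hxS] at this ⊢
    omega
  have hcy : (insert y S).card = k := by
    have := h _ hSy
    rw [Finset.card_insert_of_notMem hyS] at this ⊢
    omega
  obtain ⟨P, hP, hPd⟩ := ih _ hcard r' hirr' A (insert x S) (by
    intro X hX
    refine h X fun l hl => ?_
    obtain ⟨l1, z, l2, rfl, hz, hw⟩ := first_hit _ l (hSx l hl)
    have h1 := isW_prefix hl hz
    obtain ⟨w, hw', hwX⟩ := hX _ ⟨chain_del_last l1 z h1.1 (fun hx => hw x hx (by simp)), h1.2⟩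
    refine ⟨w, ?_, hwX⟩
    simp only [List.mem_append, List.mem_cons, List.not_mem_nil, or_false] at hw' ⊢
    tauto) rfl
  obtain ⟨Q, hQ, hQd⟩ := ih _ hcard r' hirr' (insert y S) B (by
    intro X hX
    refine h X fun l hl => ?_
    obtain ⟨l1, z, l2, rfl, hz, hw⟩ := last_hit _ l (hSy l hl)
    have h1 := isW_suffix hl hz
    obtain ⟨w, hw', hwX⟩ := hX _ ⟨chain_del_first l2 z h1.1 (fun hx => hw y hx (by simp)), h1.2⟩
    refine ⟨w, ?_, hwX⟩
    simp only [List.mem_append, List.mem_cons] at hw' ⊢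
    tauto) rfl
  choose p t hpt ht using fun i => isW_end (hP i).1
  choose s q hsq hs using fun i => isW_start (hQ i).1
  have htP : ∀ i, t i ∈ P i := fun i => by rw [hpt]; simp
  have hsQ : ∀ i, s i ∈ Q i := fun i => by rw [hsq]; simp
  have htinj : Function.Injective t := by
    intro i j hij
    by_contra hne
    exact hPd i j hne (t i) (htP i) (hij ▸ htP j)
  have hsinj : Function.Injective s := by
    intro i j hij
    by_contra hne
    exact hQd i j hne (s i) (hsQ i) (hij ▸ hsQ j)
  have htimg : Finset.univ.image t = insert x S := by
    apply Finset.eq_of_subset_of_card_le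
    · intro z hz
      obtain ⟨i, -, rfl⟩ := Finset.mem_image.1 hz
      exact ht i
    · rw [Finset.card_image_of_injective _ htinj, hcx]; simp
  have hsimg : Finset.univ.image s = insert y S := by
    apply Finset.eq_of_subset_of_card_le
    · intro z hz
      obtain ⟨i, -, rfl⟩ := Finset.mem_image.1 hz
      exact hs i
    · rw [Finset.card_image_of_injective _ hsinj, hcy]; simp
  have htex : ∀ z ∈ insert x S, ∃ i, t i = z := by
    intro z hz; rw [← htimg] at hz; simpa using hz
  have hsex : ∀ z ∈ insert y S, ∃ i, s i = z := by
    intro z hz; rw [← hsimg] at hz; simpa using hz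
  -- `P i` meets `insert x S` only in `t i`
  have hPS : ∀ i, ∀ z ∈ P i, z ∈ insert x S → z = t i := by
    intro i z hz hzS
    obtain ⟨j, rfl⟩ := htex z hzS
    by_contra hne
    have hij : i ≠ j := fun h => hne (by rw [h])
    exact hPd i j hij _ hz (htP j)
  have hQS : ∀ i, ∀ z ∈ Q i, z ∈ insert y S → z = s i := by
    intro i z hz hzS
    obtain ⟨j, rfl⟩ := hsex z hzS
    by_contra hne
    have hij : i ≠ j := fun h => hne (by rw [h])
    exact hQd i j hij _ hz (hsQ j)
  have hpS : ∀ i, t i ∉ p i := by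
    intro i hi
    have := (hP i).2
    rw [hpt, List.nodup_append] at this
    exact this.2.2 _ hi _ (by simp) rfl
  have hqS : ∀ i, s i ∉ q i := by
    intro i hi
    have := (hQ i).2
    rw [hsq, List.nodup_cons] at this
    exact this.1 hi
  -- intersections lie in `S`
  have hPQ : ∀ i j, ∀ z ∈ P i, z ∈ Q j → z ∈ S := by
    intro i j z hz hz'
    by_contra hzS
    obtain ⟨l1, l2, e1⟩ := List.append_of_mem hz
    obtain ⟨l3, l4, e2⟩ := List.append_of_mem hz'
    have h1 : IsW r' A {z} (l1 ++ [z]) := isW_prefix (e1 ▸ (hP i).1) (by simp)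
    have h2 : IsW r' {z} B (z :: l4) := isW_suffix (e2 ▸ (hQ j).1) (by simp)
    obtain ⟨w, hw, hwS⟩ := hS _ (isW_glue h1 h2)
    have hwz : w ≠ z := fun h => hzS (h ▸ hwS)
    simp only [List.mem_append, List.mem_cons, hwz, false_or] at hw
    rcases hw with hw | hw
    · have hwt := hPS i w (by rw [e1]; simp [hw]) (by simp [hwS])
      have hnd := (hP i).2
      have e3 := e1
      rw [hpt] at e3
      have : t i ∈ p i := by
        rcases List.eq_nil_or_concat l2 with rfl | ⟨l2', c, rfl⟩
        · have := List.append_inj' e3 rfl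
          rw [this.1, ← hwt]; exact hw
        · have e4 : p i ++ [t i] = (l1 ++ z :: l2') ++ [c] := by rw [e3]; simp
          have := List.append_inj' e4 rfl
          rw [this.1, ← hwt]; simp [hw]
      exact hpS i this
    · have hwt := hQS j w (by rw [e2]; simp [hw]) (by simp [hwS])
      have e3 := e2
      rw [hsq] at e3
      have : s j ∈ q j := by
        cases l3 with
        | nil =>
          have := List.cons.inj e3
          rw [this.2, ← hwt]; exact hw
        | cons c l3' =>
          have := List.cons.inj e3
          rw [this.2, ← hwt]; simp [hw]
      exact hqS j this
  -- matching
  have hmatch : ∀ i, ∃ j, s j = if t i = x then y else t i := by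
    intro i
    apply hsex
    split_ifs with hi
    · simp
    · have := ht i
      simp only [Finset.mem_insert, hi, false_or] at this
      simp [this]
  choose m hm using hmatch
  have hminj : Function.Injective m := by
    intro i j hij
    apply htinj
    have h1 := hm i
    have h2 := hm j
    rw [hij, h2] at h1
    have hti := ht i
    have htj := ht j
    simp only [Finset.mem_insert] at hti htj
    split_ifs at h1 with a1 a2 a2
    · rw [a1, a2]
    · exact absurd (hti.resolve_left a2) (by rw [← h1]; exact hyS)
    · exact absurd (htj.resolve_left a1) (by rw [h1]; exact hyS)
    · exact h1.symm
  have hW : ∀ i, ∃ l, IsW r A B l ∧ l.Nodup ∧ ∀ z, z ∈ l → z ∈ P i ∨ z ∈ Q (m i) := by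
    intro i
    have hPi := (hP i)
    have hQi := (hQ (m i))
    have hpp : ∀ z ∈ p i, z ∈ P i := fun z hz => by rw [hpt]; simp [hz]
    have hqq : ∀ z ∈ q (m i), z ∈ Q (m i) := fun z hz => by rw [hsq]; simp [hz]
    have hdis : ∀ z ∈ p i, z ∉ Q (m i) := by
      intro z hz hz'
      have hzS := hPQ i _ z (hpp z hz) hz'
      have := hPS i z (hpp z hz) (by simp [hzS])
      exact hpS i (this ▸ hz)
    by_cases hi : t i = x
    · have hmi : s (m i) = y := by rw [hm, if_pos hi]
      have w1 : IsW r A (insert x S) (p i ++ [x]) := by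
        have := hIW _ _ _ hPi.1; rwa [hpt, hi] at this
      have w2 : IsW r (insert y S) B (y :: q (m i)) := by
        have := hIW _ _ _ hQi.1; rwa [hsq, hmi] at this
      refine ⟨_, isW_glue_arc hxy w1 w2, ?_, ?_⟩
      · have n1 := hPi.2
        have n2 := hQi.2
        rw [hpt, hi] at n1
        have hxQ : x ∉ Q (m i) := fun hx => hxS (hPQ i _ x (hi ▸ htP i) hx)
        have : p i ++ x :: y :: q (m i) = (p i ++ [x]) ++ Q (m i) := by rw [hsq, hmi]; simp
        rw [this, List.nodup_append]
        refine ⟨n1, n2, ?_⟩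
        rintro a ha b hb rfl
        simp only [List.mem_append, List.mem_singleton] at ha
        rcases ha with ha | rfl
        · exact hdis a ha hb
        · exact hxQ hb
      · intro z hz
        rw [hpt, hsq, hi, hmi]
        simp only [List.mem_append, List.mem_cons, List.not_mem_nil, or_false] at hz ⊢
        tauto
    · have hmi : s (m i) = t i := by rw [hm, if_neg hi]
      have w1 : IsW r A (insert x S) (p i ++ [t i]) := by
        have := hIW _ _ _ hPi.1; rwa [hpt] at this
      have w2 : IsW r (insert y S) B (t i :: q (m i)) := by
        have := hIW _ _ _ hQi.1; rwa [hsq, hmi] at this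
      refine ⟨_, isW_glue w1 w2, ?_, ?_⟩
      · have n1 := hPi.2
        have n2 := hQi.2
        rw [hpt, List.nodup_append] at n1
        have : p i ++ t i :: q (m i) = p i ++ Q (m i) := by rw [hsq, hmi]
        rw [this, List.nodup_append]
        refine ⟨n1.1, n2, ?_⟩
        rintro a ha b hb rfl
        exact hdis a ha hb
      · intro z hz
        rw [hpt, hsq, hmi]
        simp only [List.mem_append, List.mem_cons, List.not_mem_nil, or_false] at hz ⊢
        tauto
  choose W hW1 hW2 hW3 using hW
  refine ⟨W, fun i => ⟨hW1 i, hW2 i⟩, ?_⟩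
  have cross : ∀ i j, i ≠ j → ∀ z ∈ P i, z ∉ Q (m j) := by
    intro i j hij z hz hz'
    have hzS := hPQ _ _ z hz hz'
    have e1 := hPS i z hz (by simp [hzS])
    have e2 := hQS (m j) z hz' (by simp [hzS])
    rw [hm] at e2
    split_ifs at e2 with hj
    · exact hyS (e2 ▸ hzS)
    · exact hij (htinj (e1.symm.trans e2))
  intro i j hij z hz hz'
  rcases hW3 i z hz with h1 | h1 <;> rcases hW3 j z hz' with h2 | h2
  · exact hPd i j hij z h1 h2
  · exact cross i j hij z h1 h2
  · exact cross j i hij.symm z h2 h1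
  · exact hQd _ _ (fun h => hij (hminj h)) z h1 h2

end Menger

/-! ## Layouts, boundaries and linkedness -/

section Layout
set_option linter.unusedSectionVars false
variable {V : Type*} [Fintype V] [DecidableEq V] {G : SimpleGraph V}

/-- Vertices of `A` with a neighbour outside `A`, inside `S`. -/
noncomputable def bd (G : SimpleGraph V) (S A : Finset V) : Finset V :=
  open Classical in S.filter (fun v => v ∈ A ∧ ∃ u ∈ S, u ∉ A ∧ G.Adj v u)

theorem mem_bd {S A : Finset V} {v : V} :
    v ∈ bd G S A ↔ v ∈ S ∧ v ∈ A ∧ ∃ u ∈ S, u ∉ A ∧ G.Adj v u := by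
  simp only [bd, Finset.mem_filter]

def pre (S : Finset V) (pos : V → ℕ) (t : ℕ) : Finset V := S.filter (fun v => pos v < t)

theorem mem_pre {S : Finset V} {pos : V → ℕ} {t : ℕ} {v : V} :
    v ∈ pre S pos t ↔ v ∈ S ∧ pos v < t := by simp [pre]

theorem mem_bdpre {S : Finset V} {pos : V → ℕ} {t : ℕ} {v : V} :
    v ∈ bd G S (pre S pos t) ↔ v ∈ S ∧ pos v < t ∧ ∃ u ∈ S, t ≤ pos u ∧ G.Adj v u := by
  rw [mem_bd, mem_pre]
  constructor
  · rintro ⟨h1, h2, u, hu, hu', h3⟩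
    refine ⟨h1, h2.2, u, hu, ?_, h3⟩
    rw [mem_pre] at hu'
    by_contra h
    exact hu' ⟨hu, by omega⟩
  · rintro ⟨h1, h2, u, hu, hu', h3⟩
    refine ⟨h1, ⟨h1, h2⟩, u, hu, ?_, h3⟩
    rw [mem_pre]
    omega

theorem bd_submod (S A B : Finset V) :
    (bd G S (A ∩ B)).card + (bd G S (A ∪ B)).card ≤ (bd G S A).card + (bd G S B).card := by
  rw [← Finset.card_union_add_card_inter, ← Finset.card_union_add_card_inter (bd G S A)]
  apply add_le_add <;> apply Finset.card_le_card
  · intro v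
    simp only [Finset.mem_union, mem_bd, Finset.mem_inter]
    grind
  · intro v
    simp only [Finset.mem_union, mem_bd, Finset.mem_inter]
    grind

/-- width of a layout -/
def Wd (G : SimpleGraph V) (S : Finset V) (pos : V → ℕ) (w : ℕ) : Prop :=
  ∀ v ∈ S, (bd G S (pre S pos (pos v + 1))).card ≤ w

theorem Wd.all {S : Finset V} {pos : V → ℕ} {w : ℕ} (h : Wd G S pos w) (t : ℕ) :
    (bd G S (pre S pos t)).card ≤ w := by
  rcases (pre S pos t).eq_empty_or_nonempty with he | hne
  · have : bd G S (pre S pos t) = ∅ := by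
      ext v; simp [mem_bd, he]
    simp [this]
  · obtain ⟨v, hv, hmax⟩ := Finset.exists_max_image _ pos hne
    have : pre S pos t = pre S pos (pos v + 1) := by
      ext u
      constructor
      · intro hu
        have := hmax u hu
        rw [mem_pre] at hu ⊢
        exact ⟨hu.1, by omega⟩
      · rw [mem_pre] at hv
        intro hu
        rw [mem_pre] at hu ⊢
        exact ⟨hu.1, by omega⟩
    rw [this]
    exact h v (mem_pre.1 hv).1

def Linked (G : SimpleGraph V) (S : Finset V) (pos : V → ℕ) : Prop :=
  ∀ s t, s ≤ t → ∀ A, pre S pos s ⊆ A → A ⊆ pre S pos t →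
    ∃ k, s ≤ k ∧ k ≤ t ∧ (bd G S (pre S pos k)).card ≤ (bd G S A).card

theorem exists_linked (S : Finset V) (w : ℕ) (pos : V → ℕ) (hinj : Function.Injective pos)
    (hw : Wd G S pos w) :
    ∃ pos' : V → ℕ, Function.Injective pos' ∧ Wd G S pos' w ∧ Linked G S pos' := by
  induction hn : ∑ v ∈ S, (bd G S (pre S pos (pos v + 1))).card using Nat.strong_induction_on
    generalizing pos with
  | _ n ih =>
  by_cases hL : Linked G S pos
  · exact ⟨pos, hinj, hw, hL⟩
  unfold Linked at hL
  push Not at hL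
  obtain ⟨s, t, hst, A0, hA0s, hA0t, hA0⟩ := hL
  -- choose a minimiser
  obtain ⟨A, hAm, hmin⟩ := Finset.exists_min_image
    (Finset.univ.filter (fun A => pre S pos s ⊆ A ∧ A ⊆ pre S pos t))
    (fun A => (bd G S A).card) ⟨A0, by simp [hA0s, hA0t]⟩
  simp only [Finset.mem_filter, Finset.mem_univ, true_and] at hAm hmin
  obtain ⟨hAs, hAt⟩ := hAm
  have hA : ∀ k, s ≤ k → k ≤ t → (bd G S A).card < (bd G S (pre S pos k)).card :=
    fun k h1 h2 => (hmin A0 ⟨hA0s, hA0t⟩).trans_lt (hA0 k h1 h2)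
  have hAS : A ⊆ S := fun v hv => (mem_pre.1 (hAt hv)).1
  set N := A.sup pos + 1 with hN
  have hAN : ∀ v ∈ A, pos v < N := fun v hv => Nat.lt_succ_of_le (Finset.le_sup hv)
  set pos' : V → ℕ := fun v => if v ∈ A then pos v else pos v + N with hpos'
  have hinj' : Function.Injective pos' := by
    intro u v huv
    simp only [hpos'] at huv
    apply hinj
    split_ifs at huv with h1 h2 h2
    · exact huv
    · have := hAN u h1; omega
    · have := hAN v h2; omega
    · omega
  have hin : ∀ v ∈ A, pre S pos' (pos' v + 1) = pre S pos (pos v + 1) ∩ A := by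
    intro v hv
    ext u
    simp only [mem_pre, Finset.mem_inter, hpos', hv, if_true]
    have := hAN v hv
    split_ifs with hu
    · simp [hu]
    · simp only [hu, and_false, iff_false]; omega
  have hout : ∀ v, v ∉ A → pre S pos' (pos' v + 1) = pre S pos (pos v + 1) ∪ A := by
    intro v hv
    ext u
    simp only [mem_pre, Finset.mem_union, hpos', hv, if_false]
    split_ifs with hu
    · have := hAN u hu
      have := hAS hu
      simp only [hu, or_true, iff_true]
      exact ⟨this, by omega⟩
    · simp only [hu, or_false]
      constructor
      · rintro ⟨a, b⟩; exact ⟨a, by omega⟩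
      · rintro ⟨a, b⟩; exact ⟨a, by omega⟩
  have hle : ∀ v ∈ S, (bd G S (pre S pos' (pos' v + 1))).card ≤
      (bd G S (pre S pos (pos v + 1))).card := by
    intro v hv
    have hsub := bd_submod (G := G) S (pre S pos (pos v + 1)) A
    by_cases hvA : v ∈ A
    · rw [hin v hvA]
      have hvt := (mem_pre.1 (hAt hvA)).2
      have := hmin (pre S pos (pos v + 1) ∪ A) ⟨hAs.trans Finset.subset_union_right, by
        refine Finset.union_subset ?_ hAt
        intro u hu
        rw [mem_pre] at hu ⊢
        exact ⟨hu.1, by omega⟩⟩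
      omega
    · rw [hout v hvA]
      have hvs : s ≤ pos v := by
        by_contra h
        exact hvA (hAs (mem_pre.2 ⟨hv, by omega⟩))
      have := hmin (pre S pos (pos v + 1) ∩ A) ⟨by
        refine Finset.subset_inter ?_ hAs
        intro u hu
        rw [mem_pre] at hu ⊢
        exact ⟨hu.1, by omega⟩, Finset.inter_subset_right.trans hAt⟩
      omega
  have hlt : ∃ v ∈ S, (bd G S (pre S pos' (pos' v + 1))).card <
      (bd G S (pre S pos (pos v + 1))).card := by
    have hAne : ¬ A ⊆ pre S pos s := by
      intro h
      have : A = pre S pos s := Finset.Subset.antisymm h hAs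
      have h2 := hA s le_rfl hst
      rw [← this] at h2
      exact lt_irrefl _ h2
    obtain ⟨v0, hv0, hv0s⟩ := Finset.not_subset.1 hAne
    have hv0' : s ≤ pos v0 := by
      by_contra h
      exact hv0s (mem_pre.2 ⟨hAS hv0, by omega⟩)
    obtain ⟨v, hv, hmax⟩ := Finset.exists_max_image A pos ⟨v0, hv0⟩
    refine ⟨v, hAS hv, ?_⟩
    have : pre S pos (pos v + 1) ∩ A = A := by
      refine Finset.inter_eq_right.2 ?_
      intro u hu
      have := hmax u hu
      exact mem_pre.2 ⟨hAS hu, by omega⟩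
    rw [hin v hv, this]
    have h1 := hmax v0 hv0
    have h2 := (mem_pre.1 (hAt hv)).2
    exact hA _ (by omega) (by omega)
  refine ih _ ?_ pos' hinj' (fun v hv => (hle v hv).trans (hw v hv)) rfl
  rw [← hn]
  exact Finset.sum_lt_sum hle hlt

theorem hits_bd {S : Finset V} {pos : V → ℕ} {k t : ℕ} (hkt : k ≤ t) (l : List V) :
    ∀ a, (a :: l).IsChain (fun u v => G.Adj u v ∧ u ∈ pre S pos t ∧ v ∈ pre S pos t) →
    a ∈ pre S pos k → (∃ b ∈ bd G S (pre S pos t), (a :: l).getLast? = some b) →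
    ∃ z ∈ a :: l, z ∈ bd G S (pre S pos k) := by
  induction l with
  | nil =>
    rintro a - ha ⟨b, hb, hab⟩
    simp only [List.getLast?_singleton, Option.some.injEq] at hab
    subst hab
    refine ⟨a, by simp, ?_⟩
    rw [mem_bdpre] at hb ⊢
    obtain ⟨h1, h2, u, hu, hu', h3⟩ := hb
    exact ⟨h1, (mem_pre.1 ha).2, u, hu, by omega, h3⟩
  | cons c l ih =>
    intro a hc ha hb
    rw [List.isChain_cons_cons] at hc
    by_cases hck : c ∈ pre S pos k
    · obtain ⟨z, hz, hz'⟩ := ih c hc.2 hck (by simpa using hb)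
      exact ⟨z, List.mem_cons_of_mem _ hz, hz'⟩
    · refine ⟨a, by simp, ?_⟩
      rw [mem_bd]
      exact ⟨(mem_pre.1 ha).1, ha, c, (mem_pre.1 hc.1.2.2).1, hck, hc.1.1⟩

theorem linkage {S : Finset V} {pos : V → ℕ} (hL : Linked G S pos) {N : ℕ}
    (hN : ¬ HasPathOn G N) {s t j : ℕ} (hst : s ≤ t)
    (hj : ∀ k, s ≤ k → k ≤ t → j ≤ (bd G S (pre S pos k)).card) :
    ∃ Q : Finset V, Q.card ≤ j * (N - 1) ∧
      ∀ k, s ≤ k → k ≤ t → j ≤ (bd G S (pre S pos k) ∩ Q).card := by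
  classical
  set r : V → V → Prop := fun u v => G.Adj u v ∧ u ∈ pre S pos t ∧ v ∈ pre S pos t with hr
  have hst' : pre S pos s ⊆ pre S pos t := by
    intro u hu; rw [mem_pre] at hu ⊢; exact ⟨hu.1, by omega⟩
  obtain ⟨P, hP, hd⟩ := menger r (fun x hx => G.loopless.irrefl x hx.1) (bd G S (pre S pos s))
    (bd G S (pre S pos t)) j (by
    intro X hX
    set R : Finset V := (pre S pos t).filter
      (fun v => ∃ l, IsW r (bd G S (pre S pos s)) {v} l ∧ ∀ z ∈ l, z ∉ X) with hR
    obtain ⟨k, hk1, hk2, hk⟩ := hL s t hst (pre S pos s ∪ (pre S pos t ∩ X) ∪ R)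
      (Finset.subset_union_left.trans Finset.subset_union_left) (by
        refine Finset.union_subset (Finset.union_subset hst' Finset.inter_subset_left) ?_
        exact Finset.filter_subset _ _)
    refine (hj k hk1 hk2).trans (hk.trans (Finset.card_le_card ?_))
    intro v hv
    rw [mem_bd] at hv
    obtain ⟨hvS, hvA, u, huS, huA, hadj⟩ := hv
    by_contra hvX
    have huA' : u ∉ pre S pos s ∧ ¬ (u ∈ pre S pos t ∧ u ∈ X) ∧ u ∉ R := by
      simpa [not_or] using huA
    have hvR : v ∈ R := by
      rcases Finset.mem_union.1 hvA with h1 | h1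
      · rcases Finset.mem_union.1 h1 with h2 | h2
        · rw [hR, Finset.mem_filter]
          refine ⟨hst' h2, [v], ⟨by simp, ⟨v, ?_, rfl⟩, ⟨v, by simp, rfl⟩⟩, by simpa using hvX⟩
          exact mem_bd.2 ⟨hvS, h2, u, huS, huA'.1, hadj⟩
        · exact absurd (Finset.mem_inter.1 h2).2 hvX
      · exact h1
    rw [hR, Finset.mem_filter] at hvR
    obtain ⟨hvt, l, hl, hlX⟩ := hvR
    have hlast : l.getLast? = some v := by
      obtain ⟨-, -, b, hb, h⟩ := hl
      rw [Finset.mem_singleton] at hb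
      rw [h, hb]
    by_cases hut : u ∈ pre S pos t
    · have huX : u ∉ X := fun h => huA'.2.1 ⟨hut, h⟩
      apply huA'.2.2
      rw [hR, Finset.mem_filter]
      refine ⟨hut, l ++ [u], ⟨?_, ?_, ⟨u, by simp, by simp⟩⟩, ?_⟩
      · rw [List.isChain_append]
        refine ⟨hl.1, by simp, ?_⟩
        intro x hx y hy
        rw [hlast] at hx
        simp only [Option.mem_def, Option.some.injEq, List.head?_cons] at hx hy
        subst hx; subst hy
        exact ⟨hadj, hvt, hut⟩
      · obtain ⟨-, ⟨a, ha, h⟩, -⟩ := hl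
        refine ⟨a, ha, ?_⟩
        rw [List.head?_append, h]; rfl
      · intro z hz
        rcases List.mem_append.1 hz with hz | hz
        · exact hlX z hz
        · rw [List.mem_singleton.1 hz]; exact huX
    · obtain ⟨z, hz, hzX⟩ := hX l ⟨hl.1, hl.2.1, v, mem_bd.2 ⟨hvS, hvt, u, huS, hut, hadj⟩, hlast⟩
      exact hlX z hz hzX)
  refine ⟨Finset.univ.biUnion (fun i => (P i).toFinset), ?_, ?_⟩
  · have := Finset.card_biUnion_le_card_mul (Finset.univ : Finset (Fin j))
      (fun i => (P i).toFinset) (N - 1) (by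
        intro i _
        refine (List.toFinset_card_le _).trans ?_
        by_contra hlt
        refine hN (hasPathOn_of_list (P i) (chain_mono (fun _ _ h => h.1) (hP i).1.1) (hP i).2 N ?_)
        omega)
    simpa using this
  · intro k hk1 hk2
    have : ∀ i, ∃ z ∈ P i, z ∈ bd G S (pre S pos k) := by
      intro i
      obtain ⟨a, l, e, ha⟩ := isW_start (hP i).1
      have h1 := (hP i).1
      rw [e] at h1 ⊢
      refine hits_bd hk2 l a h1.1 ?_ h1.2.2
      rw [mem_bdpre] at ha
      exact mem_pre.2 ⟨ha.1, by omega⟩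
    choose z hz hz' using this
    have hcard : (Finset.univ.image z).card = j := by
      rw [Finset.card_image_of_injective]
      · simp
      · intro i i' h
        by_contra hne
        exact hd i i' hne (z i) (hz i) (h ▸ hz i')
    refine hcard.ge.trans (Finset.card_le_card ?_)
    intro x hx
    obtain ⟨i, -, rfl⟩ := Finset.mem_image.1 hx
    refine Finset.mem_inter.2 ⟨hz' i, ?_⟩
    exact Finset.mem_biUnion.2 ⟨i, Finset.mem_univ _, by simpa using hz i⟩

/-- The open region between the prefixes `x` and `y`. -/
noncomputable def Reg (G : SimpleGraph V) (S : Finset V) (pos : V → ℕ) (x y : ℕ) : Finset V :=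
  S.filter (fun v => x ≤ pos v ∧ pos v < y) \ bd G S (pre S pos y)

theorem mem_Reg {S : Finset V} {pos : V → ℕ} {x y : ℕ} {v : V} : v ∈ Reg G S pos x y ↔
    (v ∈ S ∧ x ≤ pos v ∧ pos v < y) ∧ v ∉ bd G S (pre S pos y) := by
  simp [Reg]

theorem Reg_cut {S : Finset V} {pos : V → ℕ} {x z y n q : ℕ} (hzy : z ≤ y)
    (h1 : TD G (Reg G S pos x z) n) (h2 : TD G (Reg G S pos z y) n)
    (hq : (bd G S (pre S pos z)).card ≤ q) : TD G (Reg G S pos x y) (n + q) := by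
  have h3 : TD G (Reg G S pos x z ∪ Reg G S pos z y) n := by
    refine TD.union _ _ _ ?_ ?_ h1 h2
    · intro u hu v hv huv
      rw [mem_Reg] at hu hv
      exact hu.2 (mem_bdpre.2 ⟨hu.1.1, hu.1.2.2, v, hv.1.1, hv.1.2.1, huv⟩)
    · rw [Finset.disjoint_left]
      intro u hu hv
      rw [mem_Reg] at hu hv
      omega
  have h4 := h3.add_set (bd G S (pre S pos z))
  refine TD.mono _ _ _ (Nat.add_le_add_left hq n) (h4.subset _ ?_)
  intro v hv
  rw [mem_Reg] at hv
  rw [Finset.mem_union, Finset.mem_union, mem_Reg, mem_Reg]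
  by_cases hb : v ∈ bd G S (pre S pos z)
  · exact Or.inl hb
  · right
    rcases lt_or_ge (pos v) z with h | h
    · exact Or.inl ⟨⟨hv.1.1, hv.1.2.1, h⟩, hb⟩
    · exact Or.inr ⟨⟨hv.1.1, h, hv.1.2.2⟩, hv.2⟩

theorem last_ex (P : ℕ → Prop) (y : ℕ) (h : ∃ n < y, P n) :
    ∃ n < y, P n ∧ ∀ m, n < m → m < y → ¬ P m := by
  induction y with
  | zero => simp at h
  | succ y ih =>
    by_cases hy : P y
    · exact ⟨y, by omega, hy, fun m h1 h2 => by omega⟩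
    · obtain ⟨n, hn, hP⟩ := h
      have : n ≠ y := fun h => hy (h ▸ hP)
      obtain ⟨k, hk, hkP, hm⟩ := ih ⟨n, by omega, hP⟩
      refine ⟨k, by omega, hkP, fun m h1 h2 => ?_⟩
      rcases eq_or_ne m y with rfl | hne
      · exact hy
      · exact hm m h1 (by omega)

/-- Abstract binary search. -/
theorem binary (T : ℕ → ℕ → ℕ → Prop) (small : ℕ → Prop) (ev : ℕ → ℕ → ℕ) (x0 y0 M q : ℕ)
    (hmono : ∀ x y n m, n ≤ m → T x y n → T x y m)
    (hcut : ∀ x z y n, z ≤ y → small z → T x z n → T z y n → T x y (n + q))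
    (hadd : ∀ s t u, s ≤ t → t ≤ u → ev s t + ev t u = ev s u)
    (hM : ∀ x y, x0 ≤ x → y ≤ y0 → (∀ t, x < t → t < y → ¬ small t) → T x y M)
    (hwin : ∀ s s', s ≤ s' → x0 < s → s' < y0 → small s → small s' → ev s s' = 0 → T s s' M) :
    ∀ m x y, x0 ≤ x → y ≤ y0 →
      (∀ s s', s ≤ s' → x < s → s' < y → small s → small s' → ev s s' < 2 ^ m) →
      T x y (M + (m + 2) * q) := by
  classical
  intro m
  induction m with
  | zero =>
    intro x y hx hy hev
    by_cases hs : ∃ t, x < t ∧ t < y ∧ small t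
    swap
    · push Not at hs
      exact hmono _ _ M _ (by omega) (hM x y hx hy hs)
    have hfirst := Nat.find_spec hs
    have hmin := fun t (ht : t < Nat.find hs) => Nat.find_min hs ht
    set s := Nat.find hs
    obtain ⟨s', hs'y, ⟨hs's, hs'x⟩, hs'm⟩ := last_ex (fun t => small t ∧ s ≤ t) y
      ⟨s, hfirst.2.1, hfirst.2.2, le_rfl⟩
    have t1 : T x s M := hM x s hx (by omega) (fun t h1 h2 h3 => hmin t h2 ⟨h1, by omega, h3⟩)
    have t2 : T s s' M := hwin s s' hs'x (by omega) (by omega) hfirst.2.2 hs's (by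
      have := hev s s' hs'x hfirst.1 hs'y hfirst.2.2 hs's
      simpa using this)
    have t3 : T s' y M := hM s' y (by omega) hy (fun t h1 h2 h3 => hs'm t h1 h2 ⟨h3, by omega⟩)
    have t4 := hcut s s' y M hs'y.le hs's t2 t3
    have t5 := hcut x s y (M + q) hfirst.2.1.le hfirst.2.2 (hmono _ _ _ _ (by omega) t1) t4
    exact hmono _ _ _ _ (by ring_nf; omega) t5
  | succ m ih =>
    intro x y hx hy hev
    by_cases hs : ∃ t, x < t ∧ t < y ∧ small t
    swap
    · push Not at hs
      exact hmono _ _ M _ (by omega) (hM x y hx hy hs)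
    have hfirst := Nat.find_spec hs
    have hmin := fun t (ht : t < Nat.find hs) => Nat.find_min hs ht
    set s := Nat.find hs
    have hss : ev s s = 0 := by have := hadd s s s le_rfl le_rfl; omega
    obtain ⟨z, hzy, ⟨hzs, hsz, hz⟩, hzm⟩ := last_ex (fun t => small t ∧ s ≤ t ∧ ev s t < 2 ^ m) y
      ⟨s, hfirst.2.1, hfirst.2.2, le_rfl, by rw [hss]; positivity⟩
    have t1 := ih x z hx (by omega) (by
      intro t t' htt hxt ht'z ht ht'
      have hst : s ≤ t := by
        by_contra h
        exact hmin t (by omega) ⟨hxt, by omega, ht⟩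
      have h1 := hadd s t t' hst htt
      have h2 := hadd s t' z (by omega) ht'z.le
      omega)
    have t2 := ih z y (by omega) hy (by
      intro t t' htt hxt ht'z ht ht'
      have h0 := hzm t hxt (by omega)
      have h3 : 2 ^ m ≤ ev s t := by
        by_contra h
        exact h0 ⟨ht, by omega, by omega⟩
      have h1 := hadd s t t' (by omega) htt
      have h2 := hev s t' (by omega) hfirst.1 ht'z hfirst.2.2 ht'
      rw [pow_succ] at h2
      omega)
    have t3 := hcut x z y _ hzy.le hzs t1 t2
    exact hmono _ _ _ _ (by ring_nf; omega) t3

theorem win_wd {S : Finset V} {pos : V → ℕ} {w j s s' : ℕ} (hw : Wd G S pos w) (Y : Finset V)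
    (hY : j ≤ Y.card) (hss : s ≤ s')
    (hYb : ∀ t, s ≤ t → t ≤ s' → Y ⊆ bd G S (pre S pos t)) :
    Wd G (Reg G S pos s s') pos (w - j) := by
  intro v hv
  have hv' := (mem_Reg.1 hv).1
  have h1 : bd G (Reg G S pos s s') (pre (Reg G S pos s s') pos (pos v + 1)) ⊆
      bd G S (pre S pos (pos v + 1)) \ Y := by
    intro z hz
    rw [mem_bdpre] at hz
    obtain ⟨hz1, hz2, u, hu1, hu2, hu3⟩ := hz
    rw [mem_Reg] at hz1 hu1
    rw [Finset.mem_sdiff, mem_bdpre]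
    refine ⟨⟨hz1.1.1, hz2, u, hu1.1.1, hu2, hu3⟩, fun hzY => ?_⟩
    have := (mem_bdpre.1 (hYb s le_rfl hss hzY)).2.1
    omega
  refine (Finset.card_le_card h1).trans ?_
  rw [Finset.card_sdiff_of_subset (hYb _ (by omega) (by omega))]
  have := hw.all (pos v + 1)
  omega

theorem main_bound (N h a : ℕ) (hN : ¬ HasPathOn G N) (hh : a * (N - 1) < 2 ^ h) :
    ∀ w ≤ a, ∀ (S : Finset V) (pos : V → ℕ), Function.Injective pos → Wd G S pos w →
      TD G S (2 * (h + 2) * (2 * w) + 1) := by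
  classical
  intro w
  induction w using Nat.strong_induction_on with
  | _ w ih =>
  intro hwa S pos0 hinj0 hw0
  obtain ⟨pos, hinj, hw, hL⟩ := exists_linked S w pos0 hinj0 hw0
  set c := 2 * (h + 2) with hc
  set f : ℕ → ℕ := fun t => (bd G S (pre S pos t)).card with hf
  have hone : ∀ x y, y ≤ x + 1 → TD G (Reg G S pos x y) 1 := by
    intro x y hxy
    rcases (Reg G S pos x y).eq_empty_or_nonempty with he | ⟨v, hv⟩
    · rw [he]; exact TD.mono _ 0 _ (by omega) TD.empty
    · have : TD G (insert v ∅) (0 + 1) := TD.ins v _ _ TD.empty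
      refine this.subset _ ?_
      intro u hu
      rw [mem_Reg] at hu hv
      have : u = v := hinj (by omega)
      simp [this]
  have seg : ∀ d j x y, w + 1 ≤ j + d → (∀ t, x < t → t < y → j ≤ f t) →
      TD G (Reg G S pos x y) (c * (2 * w - j) + 1) := by
    intro d
    induction d with
    | zero =>
      intro j x y hjd hj
      refine TD.mono _ 1 _ (by omega) (hone x y ?_)
      by_contra hlt
      have h1 := hj (x + 1) (by omega) (by omega)
      have h2 := hw.all (x + 1)
      simp only [hf] at h1
      omega
    | succ d ihd =>
      intro j x0 y0 hjd hj
      by_cases hjw : w < j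
      · refine TD.mono _ 1 _ (by omega) (hone x0 y0 ?_)
        by_contra hlt
        have h1 := hj (x0 + 1) (by omega) (by omega)
        have h2 := hw.all (x0 + 1)
        simp only [hf] at h1
        omega
      push Not at hjw
      rcases Nat.eq_zero_or_pos j with rfl | hjpos
      · -- cut at all empty boundaries
        have key : ∀ n x y, y ≤ x + n → TD G (Reg G S pos x y) (c * (2 * w - 1) + 1) := by
          intro n
          induction n using Nat.strong_induction_on with
          | _ n ihn =>
          intro x y hxy
          by_cases hs : ∃ t, x < t ∧ t < y ∧ f t = 0
          · obtain ⟨t, h1, h2, h3⟩ := hs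
            have := Reg_cut (G := G) (S := S) (pos := pos) (x := x) (z := t) (y := y) (q := 0)
              h2.le (ihn (t - x) (by omega) x t (by omega)) (ihn (y - t) (by omega) t y (by omega))
              (by simp only [hf] at h3; omega)
            exact this
          · push Not at hs
            exact ihd 1 x y (by omega) (fun t h1 h2 => Nat.pos_of_ne_zero (hs t h1 h2))
        refine TD.mono _ _ _ ?_ (key y0 x0 y0 (by omega))
        have : c * (2 * w - 1) ≤ c * (2 * w - 0) := Nat.mul_le_mul_left _ (by omega)
        omega
      -- main case
      set M := c * (2 * w - 2 * j) + 1 with hMdef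
      have hM : ∀ x y, (∀ t, x < t → t < y → ¬ f t < 2 * j) → TD G (Reg G S pos x y) M := by
        intro x y hns
        exact ihd (2 * j) x y (by omega) (fun t h1 h2 => not_lt.1 (hns t h1 h2))
      have hQ : ∃ Q : Finset V, Q.card < 2 ^ h ∧
          ∀ s, x0 < s → s < y0 → f s < 2 * j → j ≤ (bd G S (pre S pos s) ∩ Q).card := by
        by_cases hs : ∃ t, x0 < t ∧ t < y0
        · obtain ⟨t, ht1, ht2⟩ := hs
          obtain ⟨Q, hQ1, hQ2⟩ := linkage (G := G) hL hN (s := x0 + 1) (t := y0 - 1) (j := j)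
            (by omega) (fun k h1 h2 => hj k (by omega) (by omega))
          refine ⟨Q, ?_, fun s h1 h2 _ => hQ2 s (by omega) (by omega)⟩
          exact (hQ1.trans (Nat.mul_le_mul_right _ (hjw.trans hwa))).trans_lt hh
        · push Not at hs
          refine ⟨∅, by simp, fun s h1 h2 => ?_⟩
          have := hs s h1
          omega
      obtain ⟨Q, hQcard, hQ⟩ := hQ
      set e : V → ℕ := fun v => (S.filter (fun u => G.Adj v u)).sup pos with he
      set ev : ℕ → ℕ → ℕ := fun s s' => (Q.filter (fun v => s ≤ e v ∧ e v < s')).card with hev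
      have hbin := binary (fun x y n => TD G (Reg G S pos x y) n) (fun t => f t < 2 * j) ev
        x0 y0 M (2 * j) (fun x y n m hnm => TD.mono _ n m hnm)
        (fun x z y n hzy hz h1 h2 => Reg_cut hzy h1 h2 (le_of_lt hz))
        (by
          intro s t u hst htu
          simp only [hev]
          rw [← Finset.card_union_of_disjoint]
          · congr 1
            ext v
            simp only [Finset.mem_union, Finset.mem_filter]
            constructor
            · rintro (⟨h1, h2⟩ | ⟨h1, h2⟩)
              · exact ⟨h1, by omega⟩
              · exact ⟨h1, by omega⟩
            · rintro ⟨h1, h2⟩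
              rcases lt_or_ge (e v) t with h3 | h3
              · exact Or.inl ⟨h1, by omega⟩
              · exact Or.inr ⟨h1, by omega⟩
          · rw [Finset.disjoint_left]
            intro v hv hv'
            simp only [Finset.mem_filter] at hv hv'
            omega)
        (fun x y _ _ hns => hM x y hns)
        (by
          intro s s' hss hxs hsy hs hs' hev0
          have hwd := win_wd (j := j) (s := s) (s' := s') hw (bd G S (pre S pos s) ∩ Q)
            (hQ s hxs (by omega) hs) hss (by
              intro t hst hts v hv
              rw [Finset.mem_inter] at hv
              have hv1 := mem_bdpre.1 hv.1
              obtain ⟨hvS, hvp, u, huS, hup, hadj⟩ := hv1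
              have hes : s ≤ e v := by
                have : pos u ≤ e v := Finset.le_sup (f := pos) (by simp [huS, hadj])
                omega
              have hes' : s' ≤ e v := by
                by_contra hlt
                have hmem : v ∈ Q.filter (fun v => s ≤ e v ∧ e v < s') := by
                  simp only [Finset.mem_filter]
                  exact ⟨hv.2, hes, by omega⟩
                have := Finset.card_pos.2 ⟨v, hmem⟩
                simp only [hev] at hev0
                omega
              have hte : t ≤ e v := by omega
              simp only [he] at hte
              rw [Finset.le_sup_iff (by simp only [Nat.bot_eq_zero]; omega)] at hte
              obtain ⟨u', hu', htu'⟩ := hte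
              rw [Finset.mem_filter] at hu'
              exact mem_bdpre.2 ⟨hvS, by omega, u', hu'.1, htu', hu'.2⟩)
          have := ih (w - j) (by omega) (by omega) _ pos hinj hwd
          have e1 : 2 * (w - j) = 2 * w - 2 * j := by omega
          rw [e1] at this
          exact this)
        h x0 y0 le_rfl le_rfl
        (by
          intro s s' _ _ _ _ _
          exact (Finset.card_le_card (Finset.filter_subset _ _)).trans_lt hQcard)
      refine TD.mono _ _ _ ?_ hbin
      have e1 : 2 * w - j = (2 * w - 2 * j) + j := by omega
      rw [e1, hMdef, Nat.mul_add, hc]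
      apply le_of_eq
      ring
  have := seg (w + 1) 0 0 (S.sup pos + 1) (by omega) (by intros; omega)
  refine TD.subset this S ?_
  intro v hv
  have hle : ∀ u ∈ S, pos u < S.sup pos + 1 := fun u hu => Nat.lt_succ_of_le (Finset.le_sup hu)
  rw [mem_Reg, mem_bdpre]
  refine ⟨⟨hv, by omega, hle v hv⟩, ?_⟩
  rintro ⟨-, -, u, hu, hu', -⟩
  have := hle u hu
  omega

theorem exists_layout (D : PathDecomp G) (a : ℕ) (hD : ∀ t, (D.bag t).ncard ≤ a) :
    ∃ pos : V → ℕ, Function.Injective pos ∧ Wd G Finset.univ pos a := by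
  classical
  have hex : ∀ v : V, ∃ t : ℕ, ∃ h : t < D.n, v ∈ D.bag ⟨t, h⟩ := by
    intro v
    obtain ⟨t, ht⟩ := D.mem_bag v
    exact ⟨t.1, t.2, ht⟩
  set l : V → ℕ := fun v => Nat.find (hex v) with hl
  have hl1 : ∀ v, ∃ h : l v < D.n, v ∈ D.bag ⟨l v, h⟩ := fun v => Nat.find_spec (hex v)
  have hl2 : ∀ v (t : Fin D.n), v ∈ D.bag t → l v ≤ t.1 :=
    fun v t ht => Nat.find_min' (hex v) ⟨t.2, ht⟩
  let i := Fintype.equivFin V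
  set c := Fintype.card V with hc
  set pos : V → ℕ := fun v => l v * c + (i v).1 with hpos
  have hmono : ∀ u v, pos u ≤ pos v → l u ≤ l v := by
    intro u v huv
    by_contra hlt
    have h1 : l v + 1 ≤ l u := by omega
    have h2 := Nat.mul_le_mul_right c h1
    have h3 := (i v).2
    simp only [hpos] at huv
    rw [Nat.add_mul] at h2
    omega
  refine ⟨pos, ?_, ?_⟩
  · intro u v huv
    have e : l u = l v := le_antisymm (hmono _ _ huv.le) (hmono _ _ huv.ge)
    simp only [hpos, e] at huv
    exact i.injective (Fin.ext (by omega))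
  · intro v _
    obtain ⟨hv1, hv2⟩ := hl1 v
    refine le_trans ?_ (hD ⟨l v, hv1⟩)
    rw [← Set.ncard_coe_finset]
    refine Set.ncard_le_ncard ?_ (Set.toFinite _)
    intro z hz
    rw [Finset.mem_coe, mem_bdpre] at hz
    obtain ⟨-, hz2, u, -, hu2, hadj⟩ := hz
    obtain ⟨t, hzt, hut⟩ := D.edge_bag z u hadj
    obtain ⟨hz3, hz4⟩ := hl1 z
    have h1 : l z ≤ l v := hmono _ _ (by omega)
    have h2 : l v ≤ l u := hmono _ _ (by omega)
    have h3 := hl2 u t hut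
    exact D.convex z ⟨l z, hz3⟩ ⟨l v, hv1⟩ t h1 (by show l v ≤ t.1; omega) hz4 hzt

theorem exists_decomp (a : ℕ) (ha : 0 < a) (h : pathwidth G < a) :
    ∃ D : PathDecomp G, ∀ t, (D.bag t).ncard ≤ a := by
  have hne : { w | ∃ D : PathDecomp G, D.width = w }.Nonempty := by
    refine ⟨_, ⟨1, fun _ => Set.univ, fun v => ⟨0, trivial⟩, fun u v _ => ⟨0, trivial, trivial⟩,
      fun _ _ _ _ _ _ _ _ => trivial⟩, rfl⟩
  obtain ⟨D, hD⟩ := Nat.sInf_mem hne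
  refine ⟨D, fun t => ?_⟩
  have h1 : (D.bag t).ncard ≤ ⨆ t, (D.bag t).ncard :=
    le_ciSup (f := fun t => (D.bag t).ncard) (Set.finite_range _).bddAbove t
  have h2 : D.width < a := by rw [hD]; exact h
  unfold PathDecomp.width at h2
  omega

end Layout

/-- Every finite simple graph of pathwidth strictly less than `a` that contains no
path on `2^b` vertices as a subgraph has treedepth at most `10 * a * b`. -/
theorem stmt_0 {V : Type*} [Fintype V] (G : SimpleGraph V) (a b : ℕ)
    (ha : 0 < a) (hb : 0 < b)
    (hpw : pathwidth G < a) (hpath : ¬ HasPathOn G (2 ^ b)) :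
    treedepth G ≤ 10 * a * b := by 
  classical
  by_cases hcase : 2 ^ b ≤ 10 * a * b
  · exact (TD.treedepth_le (TD.of_noPath Finset.univ (2 ^ b) hpath)).trans hcase
  push Not at hcase
  have hab : 10 * b ≤ 10 * a * b := by nlinarith
  have hb5 : 5 ≤ b := by
    by_contra hlt
    have : b < 5 := by omega
    interval_cases b <;> omega
  have ha2 : a < 2 ^ b := by nlinarith
  obtain ⟨D, hD⟩ := exists_decomp a ha hpw
  obtain ⟨pos, hinj, hw⟩ := exists_layout D a hD
  have hh : a * (2 ^ b - 1) < 2 ^ (2 * b) := by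
    have h1 : a * (2 ^ b - 1) ≤ a * 2 ^ b := Nat.mul_le_mul_left _ (Nat.sub_le _ _)
    have h2 : a * 2 ^ b < 2 ^ b * 2 ^ b := Nat.mul_lt_mul_of_pos_right ha2 (by positivity)
    rw [two_mul, pow_add]
    omega
  have := (main_bound (2 ^ b) (2 * b) a hpath hh a le_rfl Finset.univ pos hinj hw).treedepth_le
  refine this.trans ?_
  nlinarith
end

section
/- There exists a universal constant C such that every finite simple graph of treewidth strictly less than t, containing no complete binary tree of height h as a minor and no path on 2^b vertices as a subgraph, has treedepth at most C·t·h·b (for all positive integers t, h, b). -/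
/-- A tree decomposition of `G`. -/
structure TreeDecomp {V : Type*} (G : SimpleGraph V) where
  n : ℕ
  T : SimpleGraph (Fin n)
  isTree : T.IsTree
  bag : Fin n → Set V
  edge_bag : ∀ u v : V, G.Adj u v → ∃ t, u ∈ bag t ∧ v ∈ bag t
  subtree : ∀ v : V, (SimpleGraph.induce {t | v ∈ bag t} T).Connected

/-- The width of a tree decomposition: maximum bag size minus 1. -/
noncomputable def TreeDecomp.width {V : Type*} {G : SimpleGraph V} (D : TreeDecomp G) : ℕ :=
  (⨆ t, (D.bag t).ncard) - 1

/-- Treewidth: the minimum width of a tree decomposition. -/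
noncomputable def treewidth {V : Type*} (G : SimpleGraph V) : ℕ :=
  sInf { w | ∃ D : TreeDecomp G, D.width = w }

/-- `H` is a minor of `G`: there is a family of pairwise disjoint connected
branch sets in `G`, one for each vertex of `H`, with edges of `H` realized by
edges of `G` between the corresponding branch sets. -/
def IsMinor {W V : Type*} (H : SimpleGraph W) (G : SimpleGraph V) : Prop :=
  ∃ f : W → Set V,
    (∀ w, (SimpleGraph.induce (f w) G).Connected) ∧
    (Pairwise fun w w' => Disjoint (f w) (f w')) ∧
    (∀ w w', H.Adj w w' → ∃ u ∈ f w, ∃ v ∈ f w', G.Adj u v)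

/-- The complete binary tree of height `h`: vertices are binary strings of
length `< h`, each vertex `l` of length `< h - 1` has two children `l ++ [b]`. -/
def completeBinaryTree (h : ℕ) : SimpleGraph {l : List Bool // l.length < h} :=
  SimpleGraph.fromRel (fun u v => ∃ b : Bool, (v : List Bool) = (u : List Bool) ++ [b])

namespace TDProof

open Relation

variable {V : Type*}

/-- `u` and `v` are joined by a walk inside `S`. -/
def Reach (G : SimpleGraph V) (S : Set V) (u v : V) : Prop :=
  u ∈ S ∧ ReflTransGen (fun a b => G.Adj a b ∧ a ∈ S ∧ b ∈ S) u v

/-- nonempty connected vertex sets -/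
def Conn (G : SimpleGraph V) (S : Set V) : Prop :=
  S.Nonempty ∧ ∀ u ∈ S, ∀ v ∈ S, Reach G S u v

theorem Reach.refl {G : SimpleGraph V} {S : Set V} {u : V} (h : u ∈ S) : Reach G S u u :=
  ⟨h, ReflTransGen.refl⟩

theorem Reach.tail {G : SimpleGraph V} {S : Set V} {u v w : V} (h : Reach G S u v)
    (hv : v ∈ S) (hw : w ∈ S) (ha : G.Adj v w) : Reach G S u w :=
  ⟨h.1, h.2.tail ⟨ha, hv, hw⟩⟩

/-- Induction principle for `Reach`. -/
theorem Reach.ind {G : SimpleGraph V} {S : Set V} {u : V} {P : V → Prop}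
    (h0 : u ∈ S → P u)
    (h1 : ∀ v w, Reach G S u v → v ∈ S → w ∈ S → G.Adj v w → P v → P w) {v : V}
    (h : Reach G S u v) : P v := by
  obtain ⟨hu, h⟩ := h
  induction h with
  | refl => exact h0 hu
  | tail h e ih => exact h1 _ _ ⟨hu, h⟩ e.2.1 e.2.2 e.1 ih

theorem Reach.right {G : SimpleGraph V} {S : Set V} {u v : V} (h : Reach G S u v) : v ∈ S :=
  Reach.ind (P := fun v => v ∈ S) (fun h => h) (fun _ _ _ _ hw _ _ => hw) h

theorem Reach.trans {G : SimpleGraph V} {S : Set V} {u v w : V} (h : Reach G S u v)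
    (h' : Reach G S v w) : Reach G S u w := ⟨h.1, h.2.trans h'.2⟩

theorem Reach.symm {G : SimpleGraph V} {S : Set V} {u v : V} (h : Reach G S u v) :
    Reach G S v u := by
  refine ⟨h.right, ?_⟩
  refine Reach.ind (P := fun v => ReflTransGen (fun a b => G.Adj a b ∧ a ∈ S ∧ b ∈ S) v u)
    (fun _ => ReflTransGen.refl) ?_ h
  intro v w _ hv hw ha ih
  exact ReflTransGen.head ⟨ha.symm, hw, hv⟩ ih

theorem Reach.mono {G : SimpleGraph V} {S S' : Set V} {u v : V} (hS : S ⊆ S')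
    (h : Reach G S u v) : Reach G S' u v :=
  Reach.ind (P := fun v => Reach G S' u v) (fun h => Reach.refl (hS h))
    (fun _ _ _ hv hw ha ih => ih.tail (hS hv) (hS hw) ha) h

/-- the component of `u` in `S` -/
def comp (G : SimpleGraph V) (S : Set V) (u : V) : Set V := {w | Reach G S u w}

theorem comp_sub {G : SimpleGraph V} {S : Set V} {u : V} : comp G S u ⊆ S := fun _ h => h.right

theorem Reach.comp {G : SimpleGraph V} {S : Set V} {u v : V} (h : Reach G S u v) :
    Reach G (comp G S u) u v :=
  Reach.ind (P := fun v => Reach G (TDProof.comp G S u) u v) (fun h => Reach.refl (Reach.refl h))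
    (fun _ _ hr hv hw ha ih => ih.tail hr (hr.tail hv hw ha) ha) h

theorem conn_comp {G : SimpleGraph V} {S : Set V} {u : V} (hu : u ∈ S) : Conn G (comp G S u) :=
  ⟨⟨u, Reach.refl hu⟩, fun _ ha _ hb => (Reach.comp ha).symm.trans (Reach.comp hb)⟩

theorem comp_eq {G : SimpleGraph V} {S : Set V} {u v : V} (h : Reach G S u v) :
    comp G S u = comp G S v := by
  ext w
  exact ⟨fun h' => h.symm.trans h', fun h' => h.trans h'⟩

/-- first hit of a set -/
theorem Reach.first_hit {G : SimpleGraph V} {S X : Set V} {u v : V} (h : Reach G S u v)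
    (hv : v ∈ X) : ∃ w ∈ X, w ∈ S ∧ Reach G ((S \ X) ∪ {w}) u w := by
  have key : ∀ v, Reach G S u v → (∃ w ∈ X, w ∈ S ∧ Reach G ((S \ X) ∪ {w}) u w) ∨
      Reach G (S \ X) u v := by
    intro v h
    refine Reach.ind (P := fun v => (∃ w ∈ X, w ∈ S ∧ Reach G ((S \ X) ∪ {w}) u w) ∨
      Reach G (S \ X) u v) ?_ ?_ h
    · intro hu
      by_cases hx : u ∈ X
      · exact Or.inl ⟨u, hx, hu, Reach.refl (Or.inr rfl)⟩
      · exact Or.inr (Reach.refl ⟨hu, hx⟩)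
    · intro v w _ hv hw ha ih
      rcases ih with ih | ih
      · exact Or.inl ih
      · by_cases hx : w ∈ X
        · exact Or.inl ⟨w, hx, hw, (ih.mono Set.subset_union_left).tail (Or.inl ih.right)
            (Or.inr rfl) ha⟩
        · exact Or.inr (ih.tail ih.right ⟨hw, hx⟩ ha)
  rcases key v h with h | h
  · exact h
  · exact absurd hv h.right.2

/-- first hit, edge version -/
theorem Reach.first_hit_edge {G : SimpleGraph V} {S X : Set V} {u v : V} (h : Reach G S u v)
    (hu : u ∉ X) (hv : v ∈ X) : ∃ w ∈ X, w ∈ S ∧ ∃ z, Reach G (S \ X) u z ∧ G.Adj z w := by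
  by_contra hc
  push Not at hc
  have : Reach G (S \ X) u v := by
    refine Reach.ind (P := fun v => Reach G (S \ X) u v) (fun h => Reach.refl ⟨h, hu⟩) ?_ h
    intro v w _ hv hw ha ih
    refine ih.tail ih.right ⟨hw, fun hx => hc w hx hw v ih ha⟩ ha
  exact this.right.2 hv

theorem reach_of_walk {G : SimpleGraph V} {S : Set V} {u v : V} (p : G.Walk u v)
    (h : ∀ x ∈ p.support, x ∈ S) : Reach G S u v := by
  induction p with
  | nil => exact Reach.refl (h _ (by simp))
  | cons ha p ih =>
    have h1 := ih (fun x hx => h x (by simp [hx]))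
    exact ((Reach.refl (h _ (by simp))).tail (h _ (by simp)) h1.1 ha).trans h1

theorem Reach.walk {G : SimpleGraph V} {S : Set V} {u v : V} (h : Reach G S u v) :
    ∃ p : G.Walk u v, ∀ x ∈ p.support, x ∈ S := by
  refine Reach.ind (P := fun v => ∃ p : G.Walk u v, ∀ x ∈ p.support, x ∈ S) ?_ ?_ h
  · intro hu
    exact ⟨SimpleGraph.Walk.nil, by simpa using hu⟩
  · rintro v w _ hv hw ha ⟨p, hp⟩
    refine ⟨p.concat ha, fun x hx => ?_⟩
    rw [SimpleGraph.Walk.support_concat] at hx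
    simp at hx
    rcases hx with hx | hx
    · exact hp x hx
    · exact hx ▸ hw

theorem conn_iff {G : SimpleGraph V} {S : Set V} : (G.induce S).Connected ↔ Conn G S := by
  constructor
  · intro h
    refine ⟨?_, fun u hu v hv => ?_⟩
    · obtain ⟨x⟩ := h.nonempty
      exact ⟨x.1, x.2⟩
    · obtain ⟨p⟩ := h.preconnected ⟨u, hu⟩ ⟨v, hv⟩
      refine reach_of_walk (p.map (SimpleGraph.Embedding.induce S).toHom) ?_
      intro x hx
      have hx := (SimpleGraph.Walk.support_map (SimpleGraph.Embedding.induce S).toHom p) ▸ hx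
      obtain ⟨y, _, rfl⟩ := List.mem_map.1 hx
      exact y.2
  · rintro ⟨⟨x, hx⟩, h⟩
    have : Nonempty S := ⟨⟨x, hx⟩⟩
    refine ⟨?_⟩
    rintro ⟨u, hu⟩ ⟨v, hv⟩
    have := h u hu v hv
    have key : ∀ hv : v ∈ S, (G.induce S).Reachable ⟨u, hu⟩ ⟨v, hv⟩ := by
      refine Reach.ind (P := fun v => ∀ hv : v ∈ S, (G.induce S).Reachable ⟨u, hu⟩ ⟨v, hv⟩)
        (fun _ _ => SimpleGraph.Reachable.refl _) ?_ this
      intro v w _ hv hw ha ih _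
      refine (ih hv).trans (SimpleGraph.Adj.reachable ?_)
      exact ha
    exact key hv

/-! ### Elimination forests on vertex subsets -/

/-- `G[S]` has an elimination forest of height at most `n` -/
def EF (G : SimpleGraph V) (S : Set V) (n : ℕ) : Prop :=
  ∃ le : V → V → Prop, (∀ u v, le u v → u ∈ S ∧ v ∈ S) ∧ (∀ v ∈ S, le v v) ∧
    (∀ u v, le u v → le v u → u = v) ∧ (∀ u v w, le u v → le v w → le u w) ∧
    (∀ u w v, le u v → le w v → le u w ∨ le w u) ∧
    (∀ u ∈ S, ∀ v ∈ S, G.Adj u v → le u v ∨ le v u) ∧ ∀ v, {u | le u v}.ncard ≤ n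

theorem EF.empty (G : SimpleGraph V) (n : ℕ) : EF G ∅ n :=
  ⟨fun _ _ => False, by simp⟩

theorem EF.mono {G : SimpleGraph V} {S : Set V} {n m : ℕ} (h : EF G S n) (hm : n ≤ m) :
    EF G S m := by
  obtain ⟨le, h1, h2, h3, h4, h5, h6, h7⟩ := h
  exact ⟨le, h1, h2, h3, h4, h5, h6, fun v => (h7 v).trans hm⟩

theorem EF.add_one {G : SimpleGraph V} {S : Set V} {n : ℕ} {x : V} (hx : x ∈ S)
    (h : EF G (S \ {x}) n) : EF G S (n + 1) := by
  obtain ⟨le, h1, h2, h3, h4, h5, h6, h7⟩ := h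
  have hxl : ∀ u, ¬ le u x := fun u h => (h1 _ _ h).2.2 rfl
  have hxr : ∀ u, ¬ le x u := fun u h => (h1 _ _ h).1.2 rfl
  refine ⟨fun u v => (u = x ∧ v ∈ S) ∨ le u v, ?_, ?_, ?_, ?_, ?_, ?_, ?_⟩
  · rintro u v (⟨rfl, hv⟩ | h)
    · exact ⟨hx, hv⟩
    · exact ⟨(h1 _ _ h).1.1, (h1 _ _ h).2.1⟩
  · intro v hv
    by_cases hvx : v = x
    · exact Or.inl ⟨hvx, hv⟩
    · exact Or.inr (h2 v ⟨hv, hvx⟩)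
  · rintro u v (⟨rfl, hv⟩ | h) (⟨rfl, hu⟩ | h')
    · rfl
    · exact absurd h' (hxl _)
    · exact absurd h (hxl _)
    · exact h3 _ _ h h'
  · rintro u v w (⟨rfl, hv⟩ | h) (⟨rfl, hw⟩ | h')
    · exact Or.inl ⟨rfl, hw⟩
    · exact Or.inl ⟨rfl, (h1 _ _ h').2.1⟩
    · exact absurd h (hxl _)
    · exact Or.inr (h4 _ _ _ h h')
  · rintro u w v (⟨rfl, hv⟩ | h) (⟨rfl, hw⟩ | h')
    · exact Or.inl (Or.inl ⟨rfl, hx⟩)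
    · exact Or.inl (Or.inl ⟨rfl, (h1 _ _ h').1.1⟩)
    · exact Or.inr (Or.inl ⟨rfl, (h1 _ _ h).1.1⟩)
    · exact (h5 _ _ _ h h').imp Or.inr Or.inr
  · intro u hu v hv ha
    by_cases hux : u = x
    · exact Or.inl (Or.inl ⟨hux, hv⟩)
    · by_cases hvx : v = x
      · exact Or.inr (Or.inl ⟨hvx, hu⟩)
      · exact (h6 u ⟨hu, hux⟩ v ⟨hv, hvx⟩ ha).imp Or.inr Or.inr
  · intro v
    by_cases hfin : {u | le u v}.Finite
    · refine le_trans (Set.ncard_le_ncard (t := insert x {u | le u v}) ?_ (hfin.insert x)) ?_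
      · rintro u (⟨rfl, _⟩ | h)
        · exact Or.inl rfl
        · exact Or.inr h
      · exact (Set.ncard_insert_le _ _).trans (Nat.succ_le_succ (h7 v))
    · rw [Set.Infinite.ncard]
      · exact Nat.zero_le _
      · exact Set.Infinite.mono (fun u h => Or.inr h) hfin

theorem EF.add_finset {G : SimpleGraph V} (X : Finset V) : ∀ {S : Set V} {n : ℕ},
    EF G (S \ X) n → EF G S (n + X.card) := by
  classical
  induction X using Finset.induction_on with
  | empty => intro S n h; simpa using h
  | insert x X hx ih =>
    intro S n h
    have e : S \ ((insert x X : Finset V) : Set V) = (S \ {x}) \ X := by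
      ext y; simp [not_or, and_assoc]
    rw [e] at h
    have h' := ih h
    rw [Finset.card_insert_of_notMem hx]
    by_cases hxS : x ∈ S
    · exact EF.add_one hxS h'
    · rw [Set.sdiff_singleton_eq_self hxS] at h'
      exact h'.mono (by omega)

theorem EF.of_comp {G : SimpleGraph V} {S : Set V} {n : ℕ}
    (h : ∀ u ∈ S, EF G (comp G S u) n) : EF G S n := by
  classical
  have h' : ∀ K : Set V, ∃ le : V → V → Prop, (∃ u ∈ S, K = comp G S u) →
      (∀ u v, le u v → u ∈ K ∧ v ∈ K) ∧ (∀ v ∈ K, le v v) ∧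
    (∀ u v, le u v → le v u → u = v) ∧ (∀ u v w, le u v → le v w → le u w) ∧
    (∀ u w v, le u v → le w v → le u w ∨ le w u) ∧
    (∀ u ∈ K, ∀ v ∈ K, G.Adj u v → le u v ∨ le v u) ∧ ∀ v, {u | le u v}.ncard ≤ n := by
    intro K
    by_cases hK : ∃ u ∈ S, K = comp G S u
    · obtain ⟨u, hu, rfl⟩ := hK
      obtain ⟨le, hle⟩ := h u hu
      exact ⟨le, fun _ => hle⟩
    · exact ⟨fun _ _ => False, fun h => absurd h hK⟩
  choose F hF using h'
  have hF' : ∀ v ∈ S, _ := fun v hv => hF (comp G S v) ⟨v, hv, rfl⟩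
  have hc : ∀ u v, v ∈ S → F (comp G S v) u v → comp G S u = comp G S v ∧ u ∈ S := by
    intro u v hv h
    have := ((hF' v hv).1 _ _ h).1
    exact ⟨(comp_eq this).symm, this.right⟩
  refine ⟨fun u v => v ∈ S ∧ F (comp G S v) u v, ?_, ?_, ?_, ?_, ?_, ?_, ?_⟩
  · rintro u v ⟨hv, h⟩
    exact ⟨(hc _ _ hv h).2, hv⟩
  · intro v hv
    exact ⟨hv, (hF' v hv).2.1 v (Reach.refl hv)⟩
  · rintro u v ⟨hv, h⟩ ⟨hu, h2⟩
    rw [(hc _ _ hv h).1] at h2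
    exact (hF' v hv).2.2.1 _ _ h h2
  · rintro u v w ⟨hv, h⟩ ⟨hw, h2⟩
    rw [(hc _ _ hw h2).1] at h
    exact ⟨hw, (hF' w hw).2.2.2.1 _ _ _ h h2⟩
  · rintro u w v ⟨hv, h⟩ ⟨_, h2⟩
    rcases (hF' v hv).2.2.2.2.1 _ _ _ h h2 with h3 | h3
    · exact Or.inl ⟨(hc _ _ hv h2).2, by rw [(hc _ _ hv h2).1]; exact h3⟩
    · exact Or.inr ⟨(hc _ _ hv h).2, by rw [(hc _ _ hv h).1]; exact h3⟩
  · intro u hu v hv ha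
    have hr : Reach G S v u := (Reach.refl hv).tail hv hu ha.symm
    rcases (hF' v hv).2.2.2.2.2.1 u hr v (Reach.refl hv) ha with h3 | h3
    · exact Or.inl ⟨hv, h3⟩
    · exact Or.inr ⟨hu, by rw [← comp_eq hr]; exact h3⟩
  · intro v
    by_cases hv : v ∈ S
    · simpa [hv] using (hF' v hv).2.2.2.2.2.2 v
    · simp [hv]

theorem treedepth_le {G : SimpleGraph V} {n : ℕ} (h : EF G Set.univ n) : treedepth G ≤ n := by
  obtain ⟨le, h1, h2, h3, h4, h5, h6, h7⟩ := h
  have hle : forestHeight le ≤ n := ciSup_le' h7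
  refine le_trans (Nat.sInf_le ⟨le, ⟨⟨fun v => h2 v trivial, h3, h4, h5⟩,
    fun u v => h6 u trivial v trivial⟩, rfl⟩) hle

/-! ### Ranks -/

/-- `A` and `B` are linked inside `S` -/
def Link (G : SimpleGraph V) (S A B : Set V) : Prop := ∃ a ∈ A, ∃ b ∈ B, Reach G S a b

theorem Link.symm {G : SimpleGraph V} {S A B : Set V} (h : Link G S A B) : Link G S B A := by
  obtain ⟨a, ha, b, hb, h⟩ := h
  exact ⟨b, hb, a, ha, h.symm⟩

/-- Rank: `R G h U` forces a binary tree of height `h + 1` as a minor in `G[U]`. -/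
def R (G : SimpleGraph V) : ℕ → Set V → Prop
  | 0, U => Conn G U
  | h + 1, U => Conn G U ∧ ∃ A B C : Set V, A ⊆ U ∧ B ⊆ U ∧ C ⊆ U ∧ R G h A ∧ R G h B ∧ R G h C ∧
      Disjoint A B ∧ Disjoint A C ∧ Disjoint B C ∧
      Link G (U \ C) A B ∧ Link G (U \ B) A C ∧ Link G (U \ A) B C

theorem R.conn {G : SimpleGraph V} {h : ℕ} {U : Set V} (hR : R G h U) : Conn G U := by
  cases h with
  | zero => exact hR
  | succ h => exact hR.1

/-- A rooted binary tree model inside `U`, with `v` in the root branch set. -/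
def Model (G : SimpleGraph V) (h : ℕ) (U : Set V) (v : V) : Prop :=
  ∃ f : List Bool → Set V, v ∈ f [] ∧ (∀ l, l.length ≤ h → Conn G (f l) ∧ f l ⊆ U) ∧
    (∀ l l', l.length ≤ h → l'.length ≤ h → l ≠ l' → Disjoint (f l) (f l')) ∧
    (∀ (l : List Bool) (b : Bool), l.length + 1 ≤ h →
      ∃ u ∈ f l, ∃ w ∈ f (l ++ [b]), G.Adj u w)

theorem model_step {G : SimpleGraph V} {h : ℕ} {U A B C : Set V} {v c : V}
    (hA : A ⊆ U) (hB : B ⊆ U) (hC : C ⊆ U) (hcC : Conn G C)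
    (mA : ∀ a ∈ A, Model G h A a) (mB : ∀ a ∈ B, Model G h B a)
    (dAB : Disjoint A B) (dAC : Disjoint A C) (dBC : Disjoint B C)
    (lA : Link G (U \ B) A C) (lB : Link G (U \ A) B C)
    (hc : c ∈ C) (hr : Reach G (U \ (A ∪ B)) v c) : Model G (h + 1) U v := by
  have aux : ∀ A B : Set V, Disjoint A C → Disjoint B C → Link G (U \ B) A C →
      Reach G (U \ (A ∪ B)) v c →
      ∃ u ∈ comp G (U \ (A ∪ B)) v, ∃ w ∈ A, G.Adj u w := by
    rintro A B dAC dBC ⟨a, ha, c', hc', h⟩ hr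
    obtain ⟨w, hw, _, z, hz, ha⟩ := h.symm.first_hit_edge (Set.disjoint_right.1 dAC hc') ha
    refine ⟨z, ?_, w, hw, ha⟩
    have h1 : Reach G (U \ (A ∪ B)) c c' := (hcC.2 c hc c' hc').mono (fun x hx => ⟨hC hx, by
      rintro (h | h)
      · exact Set.disjoint_left.1 dAC h hx
      · exact Set.disjoint_left.1 dBC h hx⟩)
    refine (hr.trans h1).trans (hz.mono ?_)
    rintro x ⟨⟨h1, h2⟩, h3⟩
    exact ⟨h1, fun h => h.elim h3 h2⟩
  obtain ⟨u1, hu1, a, ha, hua⟩ := aux A B dAC dBC lA hr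
  obtain ⟨u2, hu2, b, hb, hub⟩ := aux B A dBC dAC lB (by rwa [Set.union_comm])
  rw [Set.union_comm] at hu2
  obtain ⟨f, fr, fc, fd, fe⟩ := mA a ha
  obtain ⟨g, gr, gc, gd, ge⟩ := mB b hb
  set S := comp G (U \ (A ∪ B)) v with hS
  have hSU : S ⊆ U \ (A ∪ B) := comp_sub
  have dSA : Disjoint S A := Set.disjoint_left.2 fun x hx hxA => (hSU hx).2 (Or.inl hxA)
  have dSB : Disjoint S B := Set.disjoint_left.2 fun x hx hxA => (hSU hx).2 (Or.inr hxA)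
  let F : List Bool → Set V := fun l => match l with
    | [] => S
    | false :: l => f l
    | true :: l => g l
  refine ⟨F, Reach.refl hr.1, ?_, ?_, ?_⟩
  · rintro (_ | ⟨_ | _, l⟩) hl
    · exact ⟨conn_comp hr.1, hSU.trans Set.sdiff_subset⟩
    · have := fc l (by simpa using hl)
      exact ⟨this.1, this.2.trans hA⟩
    · have := gc l (by simpa using hl)
      exact ⟨this.1, this.2.trans hB⟩
  · rintro (_ | ⟨_ | _, l⟩) (_ | ⟨_ | _, l'⟩) hl hl' hne
    · exact absurd rfl hne
    · exact dSA.mono_right (fc l' (by simpa using hl')).2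
    · exact dSB.mono_right (gc l' (by simpa using hl')).2
    · exact (dSA.mono_right (fc l (by simpa using hl)).2).symm
    · exact fd l l' (by simpa using hl) (by simpa using hl') (by rintro rfl; exact hne rfl)
    · exact (dAB.mono_right (gc l' (by simpa using hl')).2).mono_left
        (fc l (by simpa using hl)).2
    · exact (dSB.mono_right (gc l (by simpa using hl)).2).symm
    · exact ((dAB.mono_right (gc l (by simpa using hl)).2).mono_left
        (fc l' (by simpa using hl')).2).symm
    · exact gd l l' (by simpa using hl) (by simpa using hl') (by rintro rfl; exact hne rfl)
  · rintro (_ | ⟨_ | _, l⟩) b' hl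
    · cases b'
      · exact ⟨u1, hu1, a, fr, hua⟩
      · exact ⟨u2, hu2, b, gr, hub⟩
    · exact fe l b' (by simpa using hl)
    · exact ge l b' (by simpa using hl)

theorem model_of_R {G : SimpleGraph V} (h : ℕ) : ∀ {U : Set V}, R G h U → ∀ v ∈ U,
    Model G h U v := by
  induction h with
  | zero =>
    intro U hU v hv
    refine ⟨fun _ => {v}, rfl, ?_, ?_, ?_⟩
    · intro l _
      refine ⟨⟨⟨v, rfl⟩, ?_⟩, by simpa using hv⟩
      rintro _ rfl _ rfl
      exact Reach.refl rfl
    · intro l l' hl hl' hne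
      exfalso
      apply hne
      rw [List.length_eq_zero_iff.1 (Nat.le_zero.1 hl), List.length_eq_zero_iff.1 (Nat.le_zero.1 hl')]
    · intro l b hl
      omega
  | succ h ih =>
    rintro U ⟨hU, A, B, C, hA, hB, hC, rA, rB, rC, dAB, dAC, dBC, lAB, lAC, lBC⟩ v hv
    obtain ⟨c0, hc0⟩ := rC.conn.1
    obtain ⟨w, hw, _, hr⟩ := (hU.2 v hv c0 (hC hc0)).first_hit (X := A ∪ B ∪ C) (Or.inr hc0)
    rcases hw with (hw | hw) | hw
    · refine model_step (A := B) (B := C) (C := A) hB hC hA rA.conn (fun a ha => ih rB a ha)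
        (fun a ha => ih rC a ha) dBC dAB.symm dAC.symm lAB.symm lAC.symm hw (hr.mono ?_)
      rintro x (⟨h1, h2⟩ | rfl)
      · exact ⟨h1, fun h => h2 (by simp only [Set.mem_union] at h ⊢; tauto)⟩
      · exact ⟨hA hw, fun h => h.elim (Set.disjoint_left.1 dAB hw) (Set.disjoint_left.1 dAC hw)⟩
    · refine model_step (A := A) (B := C) (C := B) hA hC hB rB.conn (fun a ha => ih rA a ha)
        (fun a ha => ih rC a ha) dAC dAB dBC.symm lAB lBC.symm hw (hr.mono ?_)
      rintro x (⟨h1, h2⟩ | rfl)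
      · exact ⟨h1, fun h => h2 (by simp only [Set.mem_union] at h ⊢; tauto)⟩
      · exact ⟨hB hw, fun h => h.elim (Set.disjoint_right.1 dAB hw) (Set.disjoint_left.1 dBC hw)⟩
    · refine model_step (A := A) (B := B) (C := C) hA hB hC rC.conn (fun a ha => ih rA a ha)
        (fun a ha => ih rB a ha) dAB dAC dBC lAC lBC hw (hr.mono ?_)
      rintro x (⟨h1, h2⟩ | rfl)
      · exact ⟨h1, fun h => h2 (by simp only [Set.mem_union] at h ⊢; tauto)⟩
      · exact ⟨hC hw, fun h => h.elim (Set.disjoint_right.1 dAC hw) (Set.disjoint_right.1 dBC hw)⟩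

theorem minor_of_R {G : SimpleGraph V} {h : ℕ} {U : Set V} (hR : R G h U) :
    IsMinor (completeBinaryTree (h + 1)) G := by
  obtain ⟨v, hv⟩ := hR.conn.1
  obtain ⟨f, fr, fc, fd, fe⟩ := model_of_R h hR v hv
  refine ⟨fun w => f w.1, ?_, ?_, ?_⟩
  · intro w
    exact conn_iff.2 (fc w.1 (Nat.lt_succ_iff.1 w.2)).1
  · intro w w' hne
    exact fd _ _ (Nat.lt_succ_iff.1 w.2) (Nat.lt_succ_iff.1 w'.2) (fun h => hne (Subtype.ext h))
  · rintro ⟨w, hw⟩ ⟨w', hw'⟩ hadj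
    rw [completeBinaryTree, SimpleGraph.fromRel_adj] at hadj
    rcases hadj.2 with ⟨b, hb⟩ | ⟨b, hb⟩
    · simp only at hb
      subst hb
      exact fe w b (by simp at hw'; omega)
    · simp only at hb
      subst hb
      obtain ⟨u, hu, x, hx, ha⟩ := fe w' b (by simp at hw; omega)
      exact ⟨x, hx, u, hu, ha.symm⟩

/-! ### Packings -/

/-- A packing of rank `h` sets inside `U` -/
def Packing (G : SimpleGraph V) (h : ℕ) (U : Set V) (F : Finset (Set V)) : Prop :=
  (∀ A ∈ F, R G h A ∧ A ⊆ U) ∧ ∀ A ∈ F, ∀ B ∈ F, A ≠ B → Disjoint A B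

theorem hasPathOn_of_path {G : SimpleGraph V} {u v : V} (p : G.Walk u v) (hp : p.IsPath) {n : ℕ}
    (hn : n ≤ p.length + 1) : HasPathOn G n := by
  refine ⟨fun i => p.getVert i, ?_, ?_⟩
  · intro i j hij
    have := hp.getVert_injOn (x₁ := (i : ℕ)) (x₂ := (j : ℕ)) (by simp; omega) (by simp; omega) hij
    exact Fin.ext this
  · intro i hi
    exact p.adj_getVert_succ (i := i) (by omega)

theorem packing_bound {G : SimpleGraph V} {h N : ℕ} {U : Set V} (hU : Conn G U)
    (hR : ¬ R G (h + 1) U) (hN : 2 ≤ N) (hP : ¬ HasPathOn G N) {F : Finset (Set V)}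
    (hF : Packing G h U F) : F.card < N := by
  classical
  by_contra hcard
  push Not at hcard
  obtain ⟨a0, ha0, z0, hz0, hne0⟩ := Finset.one_lt_card.1 (show 1 < F.card by omega)
  let sp : Set V × Set V → Finset (Set V) := fun q =>
    F.filter (fun x => x ≠ q.1 ∧ x ≠ q.2 ∧ ¬ Link G (U \ x) q.1 q.2)
  obtain ⟨⟨a, z⟩, hq, hmax⟩ := Finset.exists_max_image F.offDiag (fun q => (sp q).card)
    ⟨(a0, z0), Finset.mem_offDiag.2 ⟨ha0, hz0, hne0⟩⟩
  obtain ⟨ha, hz, hne⟩ := Finset.mem_offDiag.1 hq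
  simp only at ha hz hne
  -- a separation is inherited
  have inh : ∀ a z y x : Set V, a ∈ F → x ∈ F → x ≠ a → ¬ Link G (U \ z) a y →
      ¬ Link G (U \ x) a z → ¬ Link G (U \ x) a y := by
    rintro a z y x ha hx hxa h1 h2 ⟨s, hs, t, ht, hr⟩
    by_cases hh : ∃ w ∈ z, Reach G (U \ x) s w
    · obtain ⟨w, hw, hr'⟩ := hh
      exact h2 ⟨s, hs, w, hw, hr'⟩
    · push Not at hh
      refine h1 ⟨s, hs, t, ht, ?_⟩
      refine hr.comp.mono ?_
      intro w hw
      exact ⟨(comp_sub hw).1, fun hwz => hh w hwz hw⟩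
  have extend : ∀ a z y : Set V, a ∈ F → z ∈ F → y ∈ F → a ≠ z → y ≠ a → y ≠ z →
      ¬ Link G (U \ z) a y → Link G (U \ y) a z → (sp (a, z)).card < (sp (a, y)).card := by
    intro a z y ha hz hy haz hya hyz h1 h2
    apply Finset.card_lt_card
    refine (Finset.ssubset_iff_of_subset ?_).2 ⟨z, ?_, ?_⟩
    · intro x hx
      simp only [sp, Finset.mem_filter] at hx ⊢
      obtain ⟨hx, hxa, hxz, hl⟩ := hx
      refine ⟨hx, hxa, ?_, inh a z y x ha hx hxa h1 hl⟩
      rintro rfl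
      exact hl h2
    · simp only [sp, Finset.mem_filter]
      exact ⟨hz, haz.symm, hyz.symm, h1⟩
    · simp [sp]
  have spsymm : ∀ a z, (sp (a, z)).card = (sp (z, a)).card := by
    intro a z
    congr 1
    ext x
    simp only [sp, Finset.mem_filter]
    constructor
    · rintro ⟨h1, h2, h3, h4⟩
      exact ⟨h1, h3, h2, fun h => h4 h.symm⟩
    · rintro ⟨h1, h2, h3, h4⟩
      exact ⟨h1, h3, h2, fun h => h4 h.symm⟩
  have hsep : ∀ y ∈ F, y ≠ a → y ≠ z → ¬ Link G (U \ y) a z := by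
    intro y hy hya hyz hl
    by_cases h1 : Link G (U \ z) a y
    · by_cases h2 : Link G (U \ a) z y
      · exact hR ⟨hU, a, z, y, (hF.1 a ha).2, (hF.1 z hz).2, (hF.1 y hy).2, (hF.1 a ha).1,
          (hF.1 z hz).1, (hF.1 y hy).1, hF.2 _ ha _ hz hne, hF.2 _ ha _ hy hya.symm,
          hF.2 _ hz _ hy hyz.symm, hl, h1, h2⟩
      · have := extend z a y hz ha hy hne.symm hyz hya h2 hl.symm
        have := hmax (z, y) (Finset.mem_offDiag.2 ⟨hz, hy, hyz.symm⟩)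
        have := spsymm a z
        omega
    · have := extend a z y ha hz hy hne hya hyz h1 hl
      have := hmax (a, y) (Finset.mem_offDiag.2 ⟨ha, hy, hya.symm⟩)
      omega
  obtain ⟨s, hs⟩ := (hF.1 a ha).1.conn.1
  obtain ⟨e, he⟩ := (hF.1 z hz).1.conn.1
  obtain ⟨p, hp⟩ := (hU.2 s ((hF.1 a ha).2 hs) e ((hF.1 z hz).2 he)).walk
  have hq' : ∀ x ∈ p.bypass.support, x ∈ U := fun x hx => hp x (p.support_bypass_subset_support hx)
  have hhit : ∀ y ∈ F, ∃ x ∈ p.bypass.support, x ∈ y := by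
    intro y hy
    by_cases hya : y = a
    · exact ⟨s, by simp, hya ▸ hs⟩
    by_cases hyz : y = z
    · exact ⟨e, by simp, hyz ▸ he⟩
    by_contra hc
    push Not at hc
    exact hsep y hy hya hyz ⟨s, hs, e, he, reach_of_walk p.bypass
      (fun x hx => ⟨hq' x hx, hc x hx⟩)⟩
  have : Nonempty V := ⟨s⟩
  choose! g hg1 hg2 using hhit
  have hle : F.card ≤ p.bypass.support.toFinset.card := by
    refine Finset.card_le_card_of_injOn g (fun y hy => by simpa using hg1 y hy) ?_
    intro y hy y' hy' hgy
    by_contra hyy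
    exact Set.disjoint_left.1 (hF.2 y hy y' hy' hyy) (hg2 y hy) (hgy ▸ hg2 y' hy')
  have hle2 := hle.trans (List.toFinset_card_le _)
  rw [SimpleGraph.Walk.length_support] at hle2
  exact hP (hasPathOn_of_path p.bypass p.bypass_isPath (hcard.trans hle2))

/-! ### The tree decomposition -/

/-- For any choice of components of a tree minus a node, two of them are disjoint. -/
theorem tree_lemma {n : ℕ} {T : SimpleGraph (Fin n)} (hT : T.IsTree) (s : Fin n → Fin n)
    (hs : ∀ x, s x ≠ x) : ∃ x y, Disjoint (comp T {x}ᶜ (s x)) (comp T {y}ᶜ (s y)) := by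
  classical
  have := hT.1.nonempty
  have hreach : ∀ u v, Reach T Set.univ u v := by
    intro u v
    obtain ⟨p⟩ := hT.1.preconnected u v
    exact reach_of_walk p (fun _ _ => trivial)
  -- every component of `T - x` has a vertex adjacent to `x`
  have hadj : ∀ x u, u ≠ x → ∃ z, Reach T {x}ᶜ u z ∧ T.Adj z x := by
    intro x u hu
    obtain ⟨w, hw, _, z, hz, ha⟩ := (hreach u x).first_hit_edge (X := {x}) hu rfl
    rw [Set.mem_singleton_iff.1 hw] at ha
    exact ⟨z, hz.mono (fun y hy => hy.2), ha⟩
  obtain ⟨x, -, hx⟩ := Finset.exists_min_image Finset.univ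
    (fun x => (comp T {x}ᶜ (s x)).ncard) Finset.univ_nonempty
  obtain ⟨y, hy, hyx⟩ := hadj x (s x) (hs x)
  refine ⟨x, y, ?_⟩
  have hxy : x ∈ comp T {y}ᶜ (s y) := by
    by_contra hc
    have hlt : (comp T {y}ᶜ (s y)).ncard < (comp T {x}ᶜ (s x)).ncard := by
      apply Set.ncard_lt_ncard _ (Set.toFinite _)
      refine ⟨?_, fun hsub => (comp_sub (hsub (show y ∈ comp T {x}ᶜ (s x) from hy))) rfl⟩
      intro v hv
      have hvy : v ≠ y := comp_sub hv
      obtain ⟨z, hz, hzy⟩ := hadj y v hvy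
      have hz' : Reach T {x}ᶜ v z := by
        refine hz.comp.mono ?_
        rw [← comp_eq hv]
        intro w hw hwx
        rw [Set.mem_singleton_iff.1 hwx] at hw
        exact hc hw
      exact hy.trans (hz'.tail hz'.right hyx.ne hzy).symm
    exact absurd (hx y (Finset.mem_univ _)) (not_le.2 hlt)
  rw [Set.disjoint_left]
  intro v hv1 hv2
  have h1 : Reach T {x}ᶜ y v := hy.symm.trans hv1
  have h2 : Reach T {y}ᶜ v x := hv2.symm.trans hxy
  have hb := SimpleGraph.isAcyclic_iff_forall_adj_isBridge.1 hT.2 hyx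
  rw [SimpleGraph.isBridge_iff] at hb
  apply hb
  have e : ∀ a b, T.Adj a b → ((a ≠ x ∧ b ≠ x) ∨ (a ≠ y ∧ b ≠ y)) →
      (T.deleteEdges {s(y, x)}).Adj a b := by
    intro a b hab hor
    rw [SimpleGraph.deleteEdges_adj]
    refine ⟨hab, fun h3 => ?_⟩
    simp only [Set.mem_singleton_iff, Sym2.eq_iff] at h3
    rcases h3 with ⟨rfl, rfl⟩ | ⟨rfl, rfl⟩ <;> tauto
  have r1 : (T.deleteEdges {s(y, x)}).Reachable y v :=
    Reach.ind (P := fun v => (T.deleteEdges {s(y, x)}).Reachable y v)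
      (fun _ => SimpleGraph.Reachable.refl _)
      (fun a b _ ha hb' hab ih => ih.trans (e a b hab (Or.inl ⟨ha, hb'⟩)).reachable) h1
  have r2 : (T.deleteEdges {s(y, x)}).Reachable v x :=
    Reach.ind (P := fun w => (T.deleteEdges {s(y, x)}).Reachable v w)
      (fun _ => SimpleGraph.Reachable.refl _)
      (fun a b _ ha hb' hab ih => ih.trans (e a b hab (Or.inr ⟨ha, hb'⟩)).reachable) h2
  exact r1.trans r2

theorem halving {G : SimpleGraph V} [Finite V] (D : TreeDecomp G) {t : ℕ}
    (ht : ∀ x, (D.bag x).ncard ≤ t) {h n : ℕ}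
    (hn : ∀ W : Set V, (∀ A ⊆ W, ¬ R G h A) → EF G W n) (k : ℕ) :
    ∀ U : Set V, (∀ F, Packing G h U F → F.card < 2 ^ k) → EF G U (n + k * t) := by
  classical
  induction k with
  | zero =>
    intro U hU
    simp only [Nat.zero_mul, Nat.add_zero]
    refine hn U (fun A hA hR => ?_)
    have := hU {A} ⟨by simp [hR, hA], by simp⟩
    simp at this
  | succ k ih =>
    intro U hU
    by_cases hx : ∃ x, ∀ u ∈ U \ D.bag x, ∀ F, Packing G h (comp G (U \ D.bag x) u) F →
        F.card < 2 ^ k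
    · obtain ⟨x, hx⟩ := hx
      have h1 : EF G (U \ D.bag x) (n + k * t) := EF.of_comp (fun u hu => ih _ (hx u hu))
      have h2 : EF G U (n + k * t + (Set.toFinite (D.bag x)).toFinset.card) :=
        EF.add_finset _ (by simpa using h1)
      refine h2.mono ?_
      rw [← Set.ncard_eq_toFinset_card]
      have := ht x
      rw [Nat.succ_mul]
      omega
    · exfalso
      push Not at hx
      choose v hv F hF hFc using hx
      have hbag : ∀ w : V, Conn D.T {t | w ∈ D.bag t} := fun w => conn_iff.1 (D.subtree w)
      choose s hs using fun x => (hbag (v x)).1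
      have hsx : ∀ x, s x ≠ x := fun x hsx => (hv x).2 (by
        have := hs x
        rw [hsx] at this
        exact this)
      obtain ⟨x, y, hd⟩ := tree_lemma D.isTree s hsx
      -- bags of vertices of the component live in the tree component
      have hin : ∀ x, ∀ w ∈ comp G (U \ D.bag x) (v x), ∀ r, w ∈ D.bag r →
          r ∈ comp D.T {x}ᶜ (s x) := by
        intro x w hw
        have mv : ∀ w, w ∉ D.bag x → ∀ r r', w ∈ D.bag r → w ∈ D.bag r' →
            Reach D.T {x}ᶜ r r' := by
          intro w hwx r r' hr hr'
          refine ((hbag w).2 r hr r' hr').mono ?_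
          intro q hq hqx
          rw [Set.mem_singleton_iff.1 hqx] at hq
          exact hwx hq
        refine Reach.ind (P := fun w => ∀ r, w ∈ D.bag r → r ∈ comp D.T {x}ᶜ (s x)) ?_ ?_ hw
        · intro h1 r hr
          exact mv _ h1.2 _ _ (hs x) hr
        · intro a b _ ha hb hab ih' r hr
          obtain ⟨q, hqa, hqb⟩ := D.edge_bag a b hab
          exact Reach.trans (ih' q hqa) (mv b hb.2 _ _ hqb hr)
      have hdis : Disjoint (comp G (U \ D.bag x) (v x)) (comp G (U \ D.bag y) (v y)) := by
        rw [Set.disjoint_left]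
        intro w h1 h2
        obtain ⟨r, hr⟩ := (hbag w).1
        exact Set.disjoint_left.1 hd (hin x w h1 r hr) (hin y w h2 r hr)
      have hFd : ∀ A ∈ F x, ∀ B ∈ F y, Disjoint A B := fun A hA B hB =>
        (hdis.mono_left ((hF x).1 A hA).2).mono_right ((hF y).1 B hB).2
      have hFd' : Disjoint (F x) (F y) := by
        rw [Finset.disjoint_left]
        intro A hA hA'
        obtain ⟨q, hq⟩ := ((hF x).1 A hA).1.conn.1
        exact Set.disjoint_left.1 (hFd A hA A hA') hq hq
      have hpack : Packing G h U (F x ∪ F y) := by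
        constructor
        · intro A hA
          rcases Finset.mem_union.1 hA with hA | hA
          · exact ⟨((hF x).1 A hA).1, (((hF x).1 A hA).2.trans comp_sub).trans Set.sdiff_subset⟩
          · exact ⟨((hF y).1 A hA).1, (((hF y).1 A hA).2.trans comp_sub).trans Set.sdiff_subset⟩
        · intro A hA B hB hne
          rcases Finset.mem_union.1 hA with hA | hA <;> rcases Finset.mem_union.1 hB with hB | hB
          · exact (hF x).2 A hA B hB hne
          · exact hFd A hA B hB
          · exact (hFd B hB A hA).symm
          · exact (hF y).2 A hA B hB hne
      have h1 := hU _ hpack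
      rw [Finset.card_union_of_disjoint hFd', pow_succ] at h1
      have h2 := hFc x
      have h3 := hFc y
      omega

theorem main_ind {G : SimpleGraph V} [Finite V] (D : TreeDecomp G) {t b : ℕ} (hb : 0 < b)
    (ht : ∀ x, (D.bag x).ncard ≤ t) (hP : ¬ HasPathOn G (2 ^ b)) (h : ℕ) :
    ∀ U : Set V, (∀ A ⊆ U, ¬ R G h A) → EF G U (h * (b * t)) := by
  induction h with
  | zero =>
    intro U hU
    have : U = ∅ := by
      by_contra hne
      obtain ⟨u, hu⟩ := Set.nonempty_iff_ne_empty.2 hne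
      exact hU _ comp_sub (conn_comp hu : Conn G (comp G U u))
    rw [this]
    exact EF.empty _ _
  | succ h ih =>
    intro U hU
    refine EF.of_comp (fun u hu => ?_)
    rw [Nat.succ_mul]
    refine halving D ht ih b _ (fun F hF => ?_)
    refine packing_bound (conn_comp hu) (hU _ comp_sub) ?_ hP hF
    calc 2 = 2 ^ 1 := rfl
      _ ≤ 2 ^ b := Nat.pow_le_pow_right (by norm_num) hb

theorem exists_decomp {G : SimpleGraph V} [Finite V] {t : ℕ} (h : treewidth G < t) :
    ∃ D : TreeDecomp G, ∀ x, (D.bag x).ncard ≤ t := by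
  have hne : { w | ∃ D : TreeDecomp G, D.width = w }.Nonempty := by
    refine ⟨_, ⟨⟨1, ⊥, SimpleGraph.IsTree.of_subsingleton, fun _ => Set.univ,
      fun u v _ => ⟨0, trivial, trivial⟩, fun v => ?_⟩, rfl⟩⟩
    rw [conn_iff]
    refine ⟨⟨0, trivial⟩, fun a _ c _ => ?_⟩
    rw [Subsingleton.elim a c]
    exact Reach.refl trivial
  obtain ⟨D, hD⟩ := Nat.sInf_mem hne
  refine ⟨D, fun x => ?_⟩
  have h1 : (D.bag x).ncard ≤ ⨆ t, (D.bag t).ncard :=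
    le_ciSup (f := fun t => (D.bag t).ncard) (Set.finite_range _).bddAbove x
  have h2 : D.width < t := by rw [hD]; exact h
  unfold TreeDecomp.width at h2
  omega

end TDProof

/-- There is a universal constant `C` such that every finite simple graph of treewidth
less than `t`, with no complete binary tree of height `h` as a minor and no path on
`2^b` vertices as a subgraph, has treedepth at most `C * t * h * b`. -/
theorem stmt_1 : ∃ C : ℕ, ∀ (V : Type) [Fintype V] (G : SimpleGraph V) (t h b : ℕ),
    0 < t → 0 < h → 0 < b →
    treewidth G < t → ¬ IsMinor (completeBinaryTree h) G → ¬ HasPathOn G (2 ^ b) →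
    treedepth G ≤ C * t * h * b := by
  refine ⟨1, ?_⟩
  intro V _ G t h b ht hh hb htw hmin hpath
  obtain ⟨D, hD⟩ := TDProof.exists_decomp htw
  obtain ⟨k, rfl⟩ : ∃ k, h = k + 1 := ⟨h - 1, by omega⟩
  have h1 := TDProof.main_ind D hb hD hpath k Set.univ
    (fun A _ hR => hmin (TDProof.minor_of_R hR))
  refine (TDProof.treedepth_le h1).trans ?_
  calc k * (b * t) ≤ (k + 1) * (b * t) := Nat.mul_le_mul_right _ (Nat.le_succ k)
    _ = 1 * t * (k + 1) * b := by ring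
end

section
/- There exists a universal constant C such that every finite simple graph of treewidth strictly less than t containing no complete binary tree of height h as a minor has pathwidth at most C·t·h (for all positive integers t, h). -/
namespace PWTW

variable {V : Type*}

/-- Connected vertex sets, via cuts. -/
def Conn (G : SimpleGraph V) (S : Set V) : Prop :=
  S.Nonempty ∧ ∀ A : Set V, A ⊆ S → A.Nonempty → (∀ a ∈ A, ∀ b ∈ S, G.Adj a b → b ∈ A) → S ⊆ A

theorem Conn.induce {G : SimpleGraph V} {S : Set V} (h : Conn G S) :
    (SimpleGraph.induce S G).Connected := by
  obtain ⟨⟨r, hr⟩, h⟩ := h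
  have : ∀ v (hv : v ∈ S), (SimpleGraph.induce S G).Reachable ⟨r, hr⟩ ⟨v, hv⟩ := by
    have := h {v | ∃ hv : v ∈ S, (SimpleGraph.induce S G).Reachable ⟨r, hr⟩ ⟨v, hv⟩}
      (by rintro v ⟨hv, _⟩; exact hv) ⟨r, hr, SimpleGraph.Reachable.refl _⟩
      (by
        rintro a ⟨ha, har⟩ b hb hab
        refine ⟨hb, har.trans (SimpleGraph.Adj.reachable ?_)⟩
        simpa using hab)
    intro v hv
    exact (this hv).2
  have hne : Nonempty S := ⟨⟨r, hr⟩⟩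
  refine ⟨fun a b => ?_⟩
  exact (this a.1 a.2).symm.trans (this b.1 b.2)

theorem conn_of_induce {G : SimpleGraph V} {S : Set V}
    (h : (SimpleGraph.induce S G).Connected) : Conn G S := by
  obtain ⟨⟨r, hr⟩⟩ := h.nonempty
  refine ⟨⟨r, hr⟩, ?_⟩
  rintro A hAS ⟨a, ha⟩ hcl v hv
  obtain ⟨p⟩ := h.preconnected ⟨a, hAS ha⟩ ⟨v, hv⟩
  have key : ∀ (x y : S) (p : (SimpleGraph.induce S G).Walk x y), x.1 ∈ A → y.1 ∈ A := by
    intro x y p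
    induction p with
    | nil => exact id
    | cons h p ih =>
      intro hx
      exact ih (hcl _ hx _ (Subtype.property _) (by simpa using h))
  exact key _ _ p ha

theorem conn_singleton (G : SimpleGraph V) (v : V) : Conn G {v} := by
  refine ⟨⟨v, rfl⟩, ?_⟩
  rintro A hA ⟨a, ha⟩ _ w hw
  have := hA ha
  simp only [Set.mem_singleton_iff] at this hw
  subst this; subst hw; exact ha

/-- The component of `r` in `S`. -/
def comp (G : SimpleGraph V) (S : Set V) (r : V) : Set V :=
  ⋂₀ {A | A ⊆ S ∧ r ∈ A ∧ ∀ a ∈ A, ∀ b ∈ S, G.Adj a b → b ∈ A}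

section comp
variable {G : SimpleGraph V} {S : Set V} {r : V}

theorem mem_comp_self : r ∈ comp G S r := by
  intro A hA; exact hA.2.1

theorem comp_subset (hr : r ∈ S) : comp G S r ⊆ S := by
  intro v hv
  exact hv S ⟨subset_rfl, hr, fun _ _ b hb _ => hb⟩

theorem comp_closed {a b : V} (ha : a ∈ comp G S r) (hb : b ∈ S) (hab : G.Adj a b) :
    b ∈ comp G S r := by
  intro A hA
  exact hA.2.2 a (ha A hA) b hb hab

theorem comp_le {A : Set V} (h1 : A ⊆ S) (h2 : r ∈ A)
    (h3 : ∀ a ∈ A, ∀ b ∈ S, G.Adj a b → b ∈ A) : comp G S r ⊆ A :=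
  fun _ hv => hv A ⟨h1, h2, h3⟩

theorem conn_comp (hr : r ∈ S) : Conn G (comp G S r) := by
  refine ⟨⟨r, mem_comp_self⟩, ?_⟩
  rintro A hA hne hcl
  have hAS := hA.trans (comp_subset (G := G) hr)
  by_cases hrA : r ∈ A
  · exact comp_le hAS hrA (fun a ha b hb hab => hcl a ha b (comp_closed (hA ha) hb hab) hab)
  · exfalso
    have : comp G S r ⊆ comp G S r \ A := by
      apply comp_le (Set.sdiff_subset.trans (comp_subset hr)) ⟨mem_comp_self, hrA⟩
      rintro a ⟨ha, haA⟩ b hb hab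
      refine ⟨comp_closed ha hb hab, fun hbA => haA (hcl b hbA a ha hab.symm)⟩
    obtain ⟨a, ha⟩ := hne
    exact (this (hA ha)).2 ha

/-- A connected subset meeting a closed set is inside it. -/
theorem Conn.subset_closed {C A : Set V} (hC : Conn G C) (hne : (C ∩ A).Nonempty)
    (hcl : ∀ a ∈ C, a ∈ A → ∀ b ∈ C, G.Adj a b → b ∈ A) : C ⊆ A := by
  have := hC.2 (C ∩ A) Set.inter_subset_left hne
    (fun a ha b hb hab => ⟨hb, hcl a ha.1 ha.2 b hb hab⟩)
  exact fun v hv => (this hv).2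

theorem Conn.subset_comp {C : Set V} (hC : Conn G C) (hCS : C ⊆ S)
    (hne : (C ∩ comp G S r).Nonempty) : C ⊆ comp G S r :=
  hC.subset_closed hne (fun _ _ ha _ hb hab => comp_closed ha (hCS hb) hab)

theorem Conn.union {C D : Set V} (hC : Conn G C) (hD : Conn G D)
    (h : ∃ a ∈ C, ∃ b ∈ D, a = b ∨ G.Adj a b) : Conn G (C ∪ D) := by
  refine ⟨hC.1.mono Set.subset_union_left, ?_⟩
  intro A hA hne hcl
  obtain ⟨c, hc, d, hd, hcd⟩ := h
  have h1 : (C ∩ A).Nonempty → C ⊆ A := fun hn =>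
    hC.subset_closed hn (fun a _ ha b hb hab => hcl a ha b (Or.inl hb) hab)
  have h2 : (D ∩ A).Nonempty → D ⊆ A := fun hn =>
    hD.subset_closed hn (fun a _ ha b hb hab => hcl a ha b (Or.inr hb) hab)
  have h3 : c ∈ A ↔ d ∈ A := by
    rcases hcd with rfl | hcd
    · rfl
    · exact ⟨fun h => hcl _ h _ (Or.inr hd) hcd, fun h => hcl _ h _ (Or.inl hc) hcd.symm⟩
  obtain ⟨a, ha⟩ := hne
  rcases hA ha with haC | haD
  · have hCA := h1 ⟨a, haC, ha⟩
    exact Set.union_subset hCA (h2 ⟨d, hd, h3.1 (hCA hc)⟩)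
  · have hDA := h2 ⟨a, haD, ha⟩
    exact Set.union_subset (h1 ⟨c, hc, h3.2 (hDA hd)⟩) hDA

/-- A connected set has an edge leaving every proper nonempty subset. -/
theorem Conn.exists_edge {C A : Set V} (hC : Conn G C) (hA : A ⊆ C) (hne : A.Nonempty)
    (hne' : ¬ C ⊆ A) : ∃ a ∈ A, ∃ b ∈ C, b ∉ A ∧ G.Adj a b := by
  by_contra hcon
  push Not at hcon
  exact hne' (hC.2 A hA hne (fun a ha b hb hab => by
    by_contra hbA; exact hcon a ha b hb hbA hab))

end comp

/-- `k`-rich connected sets: rooted binary tree models of depth `k` from every vertex. -/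
def Rich (G : SimpleGraph V) : ℕ → Set V → Prop
  | 0, S => Conn G S
  | k + 1, S => Conn G S ∧ ∀ r ∈ S, ∃ X S₁ S₂ : Set V, X ⊆ S ∧ S₁ ⊆ S ∧ S₂ ⊆ S ∧
      Disjoint X S₁ ∧ Disjoint X S₂ ∧ Disjoint S₁ S₂ ∧ r ∈ X ∧ Conn G X ∧
      Rich G k S₁ ∧ Rich G k S₂ ∧
      (∃ x ∈ X, ∃ s ∈ S₁, G.Adj x s) ∧ (∃ x ∈ X, ∃ s ∈ S₂, G.Adj x s)

theorem Rich.conn {G : SimpleGraph V} {k : ℕ} {S : Set V} (h : Rich G k S) : Conn G S := by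
  cases k with
  | zero => exact h
  | succ k => exact h.1

theorem Rich.mono {G : SimpleGraph V} {k : ℕ} {S S' : Set V} (h : Rich G k S) (hS : S ⊆ S')
    (hc : Conn G S') : Rich G k S' := by
  cases k with
  | zero => exact hc
  | succ k =>
    refine ⟨hc, fun r hr => ?_⟩
    by_cases hrS : r ∈ S
    · obtain ⟨X, S₁, S₂, h1, h2, h3, h4⟩ := h.2 r hrS
      exact ⟨X, S₁, S₂, h1.trans hS, h2.trans hS, h3.trans hS, h4⟩
    · have hr' : r ∈ S' \ S := ⟨hr, hrS⟩
      have hsub := comp_subset (G := G) hr'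
      obtain ⟨s0, hs0⟩ := h.conn.1
      obtain ⟨a, ha, b, hb, hba, hab⟩ := hc.exists_edge (A := comp G (S' \ S) r)
        (hsub.trans Set.sdiff_subset) ⟨r, mem_comp_self⟩
        (fun hh => (hsub (hh (hS hs0))).2 hs0)
      have hbS : b ∈ S := by
        by_contra hbS
        exact hba (comp_closed ha ⟨hb, hbS⟩ hab)
      obtain ⟨X, S₁, S₂, h1, h2, h3, d1, d2, d3, hbX, hX, r1, r2, ⟨x1, hx1, e1⟩, ⟨x2, hx2, e2⟩⟩ :=
        h.2 b hbS
      have hdis : Disjoint (comp G (S' \ S) r) S :=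
        Set.disjoint_left.2 (fun v hv => (hsub hv).2)
      refine ⟨comp G (S' \ S) r ∪ X, S₁, S₂,
        Set.union_subset (hsub.trans Set.sdiff_subset) (h1.trans hS), h2.trans hS, h3.trans hS,
        Set.disjoint_union_left.2 ⟨hdis.mono_right h2, d1⟩,
        Set.disjoint_union_left.2 ⟨hdis.mono_right h3, d2⟩, d3, Or.inl mem_comp_self,
        (conn_comp hr').union hX ⟨a, ha, b, hbX, Or.inr hab⟩, r1, r2,
        ⟨x1, Or.inr hx1, e1⟩, ⟨x2, Or.inr hx2, e2⟩⟩

/-- Rich sets contain rooted complete binary tree models. -/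
theorem Rich.model {G : SimpleGraph V} (k : ℕ) : ∀ (S : Set V), Rich G k S → ∀ r ∈ S,
    ∃ f : List Bool → Set V, r ∈ f [] ∧
      (∀ l, l.length < k + 1 → Conn G (f l) ∧ f l ⊆ S) ∧
      (∀ l l', l.length < k + 1 → l'.length < k + 1 → l ≠ l' → Disjoint (f l) (f l')) ∧
      (∀ l b, l.length < k → ∃ u ∈ f l, ∃ v ∈ f (l ++ [b]), G.Adj u v) := by
  induction k with
  | zero =>
    intro S hS r hr
    refine ⟨fun _ => S, hr, fun l _ => ⟨hS, subset_rfl⟩, ?_, ?_⟩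
    · intro l l' h h' hne
      have h1 : l = [] := List.length_eq_zero_iff.1 (by omega)
      have h2 : l' = [] := List.length_eq_zero_iff.1 (by omega)
      exact absurd (h1.trans h2.symm) hne
    · intro l b h; omega
  | succ k ih =>
    intro S hS r hr
    obtain ⟨X, S₁, S₂, h1, h2, h3, d1, d2, d3, hrX, hX, r1, r2, ⟨x1, hx1, s1, hs1, e1⟩,
      ⟨x2, hx2, s2, hs2, e2⟩⟩ := hS.2 r hr
    obtain ⟨f1, p1, q1, u1, a1⟩ := ih S₁ r1 s1 hs1
    obtain ⟨f2, p2, q2, u2, a2⟩ := ih S₂ r2 s2 hs2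
    refine ⟨fun l => match l with
      | [] => X
      | false :: l => f1 l
      | true :: l => f2 l, hrX, ?_, ?_, ?_⟩
    · rintro (_ | ⟨_ | _, l⟩) hl
      · exact ⟨hX, h1⟩
      · have := q1 l (by simpa using hl)
        exact ⟨this.1, this.2.trans h2⟩
      · have := q2 l (by simpa using hl)
        exact ⟨this.1, this.2.trans h3⟩
    · rintro (_ | ⟨_ | _, l⟩) (_ | ⟨_ | _, l'⟩) hl hl' hne
      · exact absurd rfl hne
      · exact d1.mono_right (q1 l' (by simpa using hl')).2
      · exact d2.mono_right (q2 l' (by simpa using hl')).2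
      · exact (d1.mono_right (q1 l (by simpa using hl)).2).symm
      · exact u1 l l' (by simpa using hl) (by simpa using hl') (by simpa using hne)
      · exact d3.mono (q1 l (by simpa using hl)).2 (q2 l' (by simpa using hl')).2
      · exact (d2.mono_right (q2 l (by simpa using hl)).2).symm
      · exact (d3.mono (q1 l' (by simpa using hl')).2 (q2 l (by simpa using hl)).2).symm
      · exact u2 l l' (by simpa using hl) (by simpa using hl') (by simpa using hne)
    · rintro (_ | ⟨_ | _, l⟩) b hl
      · cases b
        · exact ⟨x1, hx1, s1, p1, e1⟩
        · exact ⟨x2, hx2, s2, p2, e2⟩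
      · exact a1 l b (by simpa using hl)
      · exact a2 l b (by simpa using hl)

theorem Rich.minor {G : SimpleGraph V} {k : ℕ} {S : Set V} (hS : Rich G k S) :
    IsMinor (completeBinaryTree (k + 1)) G := by
  obtain ⟨r, hr⟩ := hS.conn.1
  obtain ⟨f, -, h1, h2, h3⟩ := Rich.model k S hS r hr
  have h4 : ∀ w w' : {l : List Bool // l.length < k + 1}, (∃ b : Bool, w'.1 = w.1 ++ [b]) →
      ∃ u ∈ f w.1, ∃ v ∈ f w'.1, G.Adj u v := by
    rintro ⟨w, hw⟩ ⟨w', hw'⟩ ⟨b, hb⟩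
    simp only at hb
    subst hb
    exact h3 w b (by simpa using hw')
  refine ⟨fun w => f w.1, fun w => (h1 w.1 w.2).1.induce, ?_, ?_⟩
  · intro w w' hne
    exact h2 _ _ w.2 w'.2 (fun h => hne (Subtype.ext h))
  · intro w w' hadj
    rw [completeBinaryTree, SimpleGraph.fromRel_adj] at hadj
    rcases hadj.2 with h | h
    · exact h4 w w' h
    · obtain ⟨u, hu, v, hv, huv⟩ := h4 w' w h
      exact ⟨v, hv, u, hu, huv.symm⟩

/-- Search-style certificate for path decompositions: `A` is still to be processed and
`S` is the current bag. -/
inductive PW (G : SimpleGraph V) (w : ℕ) : Set V → Set V → Prop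
  | nil (S : Set V) : S.ncard ≤ w → PW G w ∅ S
  | intro (A S X : Set V) : Disjoint A S → Disjoint A X → Disjoint X S → S.ncard ≤ w →
      PW G w A (S ∪ X) → PW G w (A ∪ X) S
  | forget (A S S' : Set V) : S' ⊆ S → Disjoint A S → S.ncard ≤ w →
      (∀ s ∈ S \ S', ∀ a ∈ A, ¬ G.Adj s a) → PW G w A S' → PW G w A S

theorem PW.concat [Finite V] {G : SimpleGraph V} {w w' : ℕ} {Z A : Set V}
    (hA : PW G w' A Z) (hZA : Disjoint A Z) (hw : w + Z.ncard ≤ w') {Y S : Set V}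
    (hY : PW G w Y S) :
    Disjoint Y A → Disjoint Y Z → Disjoint S A →
    (∀ y ∈ Y ∪ S, ∀ a ∈ A, ¬ G.Adj y a) → PW G w' (Y ∪ A) (S ∪ Z) := by
  have hcard : ∀ S : Set V, S.ncard ≤ w → (S ∪ Z).ncard ≤ w' := fun S hS =>
    (Set.ncard_union_le S Z).trans (by omega)
  induction hY with
  | nil S hS =>
    intro h1 h2 h3 h4
    rw [Set.empty_union]
    refine PW.forget _ _ Z Set.subset_union_right
      (Set.disjoint_union_right.2 ⟨h3.symm, hZA⟩) (hcard S hS) ?_ hA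
    rintro s ⟨hs, hsZ⟩ a ha
    exact h4 s (Or.inr (hs.resolve_right hsZ)) a ha
  | intro Y S X g1 g2 g3 g4 _ ih =>
    intro h1 h2 h3 h4
    rw [Set.disjoint_union_left] at h1 h2
    have e1 : (Y ∪ X) ∪ A = (Y ∪ A) ∪ X := by ac_rfl
    have e2 : (S ∪ Z) ∪ X = (S ∪ X) ∪ Z := by ac_rfl
    rw [e1]
    refine PW.intro _ _ _ ?_ ?_ ?_ (hcard S g4) ?_
    · simp only [Set.disjoint_union_left, Set.disjoint_union_right]
      exact ⟨⟨g1, h3.symm⟩, h2.1, hZA⟩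
    · exact Set.disjoint_union_left.2 ⟨g2, h1.2.symm⟩
    · exact Set.disjoint_union_right.2 ⟨g3, h2.2⟩
    · rw [e2]
      refine ih h1.1 h2.1 (Set.disjoint_union_left.2 ⟨h3, h1.2⟩) ?_
      intro y hy
      apply h4
      simp only [Set.mem_union] at hy ⊢
      tauto
  | forget Y S S' g1 g2 g3 g4 _ ih =>
    intro h1 h2 h3 h4
    refine PW.forget _ _ (S' ∪ Z) (Set.union_subset_union_left _ g1) ?_ (hcard S g3) ?_
      (ih h1 h2 (h3.mono_left g1) (fun y hy => h4 y ?_))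
    · simp only [Set.disjoint_union_left, Set.disjoint_union_right]
      exact ⟨⟨g2, h3.symm⟩, h2, hZA⟩
    · rintro s ⟨hs, hs'⟩ a ha
      simp only [Set.mem_union, not_or] at hs hs'
      have hsS : s ∈ S := hs.resolve_right hs'.2
      rcases ha with ha | ha
      · exact g4 s ⟨hsS, hs'.1⟩ a ha
      · exact h4 s (Or.inr hsS) a ha
    · exact hy.imp id (fun h => g1 h)

/-- Extracting the bags. -/
theorem PW.bags {G : SimpleGraph V} {w : ℕ} {A S : Set V} (h : PW G w A S) :
    Disjoint A S → ∃ (n : ℕ) (f : ℕ → Set V), f 0 = S ∧ (∀ i, (f i).ncard ≤ w) ∧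
      (∀ i, f i ⊆ A ∪ S) ∧ (∀ v ∈ A ∪ S, ∃ i ≤ n, v ∈ f i) ∧
      (∀ u ∈ A ∪ S, ∀ v ∈ A ∪ S, G.Adj u v → ∃ i ≤ n, u ∈ f i ∧ v ∈ f i) ∧
      (∀ v s u t, s ≤ u → u ≤ t → v ∈ f s → v ∈ f t → v ∈ f u) := by
  induction h with
  | nil S hS =>
    intro _
    refine ⟨0, fun _ => S, rfl, fun _ => hS, fun _ => Set.subset_union_right, ?_, ?_, ?_⟩
    · intro v hv; exact ⟨0, le_rfl, by simpa using hv⟩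
    · intro u hu v hv _; exact ⟨0, le_rfl, by simpa using hu, by simpa using hv⟩
    · intro v s u t _ _ h _; exact h
  | intro A S X g1 g2 g3 g4 _ ih =>
    intro _
    obtain ⟨n, f, f0, fc, fs, fv, fe, fi⟩ := ih (Set.disjoint_union_right.2 ⟨g1, g2⟩)
    have e : A ∪ X ∪ S = A ∪ (S ∪ X) := by ac_rfl
    rw [e]
    refine ⟨n + 1, fun i => match i with | 0 => S | i + 1 => f i, rfl, ?_, ?_, ?_, ?_, ?_⟩
    · rintro (_ | i)
      · exact g4
      · exact fc i
    · rintro (_ | i)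
      · exact fun v hv => Or.inr (Or.inl hv)
      · exact fs i
    · intro v hv
      obtain ⟨i, hi, h⟩ := fv v hv
      exact ⟨i + 1, by omega, h⟩
    · intro u hu v hv huv
      obtain ⟨i, hi, h⟩ := fe u hu v hv huv
      exact ⟨i + 1, by omega, h⟩
    · rintro v (_ | s) (_ | u) (_ | t) h1 h2 h3 h4
      all_goals first | exact h3 | exact h4 | omega | skip
      · exact fi v 0 u t (by omega) (by omega) (by rw [f0]; exact Or.inl h3) h4
      · exact fi v s u t (by omega) (by omega) h3 h4
  | forget A S S' g1 g2 g3 g4 _ ih =>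
    intro _
    obtain ⟨n, f, f0, fc, fs, fv, fe, fi⟩ := ih (g2.mono_right g1)
    have hA : ∀ v ∈ A ∪ S, v ∉ S → v ∈ A ∪ S' := fun v hv h => Or.inl (hv.resolve_right h)
    have key : ∀ u ∈ A ∪ S, ∀ v ∈ A ∪ S, G.Adj u v → u ∉ S → v ∈ A ∪ S' := by
      intro u hu v hv huv huS
      rcases hv with hv | hv
      · exact Or.inl hv
      · by_cases hv' : v ∈ S'
        · exact Or.inr hv'
        · exact absurd huv.symm (g4 v ⟨hv, hv'⟩ u (hu.resolve_right huS))
    refine ⟨n + 1, fun i => match i with | 0 => S | i + 1 => f i, rfl, ?_, ?_, ?_, ?_, ?_⟩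
    · rintro (_ | i)
      · exact g3
      · exact fc i
    · rintro (_ | i)
      · exact Set.subset_union_right
      · exact (fs i).trans (Set.union_subset_union_right _ g1)
    · intro v hv
      by_cases hvS : v ∈ S
      · exact ⟨0, by omega, hvS⟩
      · obtain ⟨i, hi, h⟩ := fv v (hA v hv hvS)
        exact ⟨i + 1, by omega, h⟩
    · intro u hu v hv huv
      by_cases huS : u ∈ S
      · by_cases hvS : v ∈ S
        · exact ⟨0, by omega, huS, hvS⟩
        · obtain ⟨i, hi, h⟩ := fe u (key v hv u hu huv.symm hvS) v (hA v hv hvS) huv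
          exact ⟨i + 1, by omega, h⟩
      · obtain ⟨i, hi, h⟩ := fe u (hA u hu huS) v (key u hu v hv huv huS) huv
        exact ⟨i + 1, by omega, h⟩
    · rintro v (_ | s) (_ | u) (_ | t) h1 h2 h3 h4
      all_goals first | exact h3 | exact h4 | omega | skip
      · refine fi v 0 u t (by omega) (by omega) ?_ h4
        rw [f0]
        rcases fs t h4 with h | h
        · exact absurd h3 (Set.disjoint_left.1 g2 h)
        · exact h
      · exact fi v s u t (by omega) (by omega) h3 h4

theorem PW.pathwidth_le {G : SimpleGraph V} {w : ℕ} (h : PW G w Set.univ ∅) :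
    pathwidth G ≤ w := by
  obtain ⟨n, f, f0, fc, fs, fv, fe, fi⟩ := h.bags (Set.disjoint_empty _)
  let D : PathDecomp G :=
    { n := n + 1
      bag := fun i => f i
      mem_bag := by
        intro v
        obtain ⟨i, hi, h⟩ := fv v (by simp)
        exact ⟨⟨i, by omega⟩, h⟩
      edge_bag := by
        intro u v huv
        obtain ⟨i, hi, h⟩ := fe u (by simp) v (by simp) huv
        exact ⟨⟨i, by omega⟩, h⟩
      convex := by
        intro v s u t h1 h2 h3 h4
        exact fi v s u t h1 h2 h3 h4 }
  refine (Nat.sInf_le ⟨D, rfl⟩ : pathwidth G ≤ D.width).trans ?_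
  have : (⨆ t, (D.bag t).ncard) ≤ w := by
    have : Nonempty (Fin D.n) := ⟨⟨0, Nat.succ_pos n⟩⟩
    exact ciSup_le (fun t => fc t)
  unfold PathDecomp.width
  omega

/-- The only property of tree decompositions that is used. -/
def BagFamily (G : SimpleGraph V) (t : ℕ) (𝓑 : Set (Set V)) : Prop :=
  (∀ B ∈ 𝓑, B.ncard ≤ t) ∧ (∀ v, ∃ B ∈ 𝓑, v ∈ B) ∧
  ∀ C U : Set V, Conn G C → (∀ u ∈ U, ∃ c ∈ C, G.Adj u c) → (∃ B ∈ 𝓑, U ⊆ B) →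
    ∃ B ∈ 𝓑, U ⊆ B ∧ (B ∩ C).Nonempty

theorem tree_step {G : SimpleGraph V} (D : TreeDecomp G) {C U : Set V} (hC : Conn G C)
    (hU : ∀ u ∈ U, ∃ c ∈ C, G.Adj u c) {x z : Fin D.n} (p : D.T.Walk x z) :
    p.IsPath → U ⊆ D.bag x → (D.bag z ∩ C).Nonempty →
    ∃ y, U ⊆ D.bag y ∧ (D.bag y ∩ C).Nonempty := by
  induction p with
  | nil => intro _ h1 h2; exact ⟨_, h1, h2⟩
  | @cons x y z hxy p ih =>
    intro hp hUx hz
    rw [SimpleGraph.Walk.cons_isPath_iff] at hp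
    by_cases hx : (D.bag x ∩ C).Nonempty
    · exact ⟨x, hUx, hx⟩
    refine ih hp.1 ?_ hz
    have hbr : D.T.IsBridge s(x, y) :=
      SimpleGraph.isAcyclic_iff_forall_adj_isBridge.1 D.isTree.isAcyclic hxy
    rw [SimpleGraph.isBridge_iff] at hbr
    set T' := D.T \ SimpleGraph.fromEdgeSet {s(x, y)} with hT'
    let Y : Set (Fin D.n) := {s | T'.Reachable y s}
    have hyY : y ∈ Y := SimpleGraph.Reachable.refl _
    have hxY : x ∉ Y := fun h => hbr (SimpleGraph.Reachable.symm h)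
    have hcl : ∀ a ∈ Y, ∀ b, D.T.Adj a b → b ≠ x → b ∈ Y := by
      intro a ha b hab hbx
      by_cases he : s(a, b) = s(x, y)
      · rw [Sym2.eq_iff] at he
        rcases he with ⟨rfl, rfl⟩ | ⟨rfl, rfl⟩
        · exact hyY
        · exact absurd rfl hbx
      · refine SimpleGraph.Reachable.trans ha (SimpleGraph.Adj.reachable ?_)
        rw [hT', SimpleGraph.sdiff_adj, SimpleGraph.fromEdgeSet_adj]
        exact ⟨hab, fun h => he h.1⟩
    have hzY : z ∈ Y := by
      have : ∀ (a b : Fin D.n) (q : D.T.Walk a b), x ∉ q.support → a ∈ Y → b ∈ Y := by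
        intro a b q
        induction q with
        | nil => intro _ h; exact h
        | cons h q ih =>
          intro hq ha
          rw [SimpleGraph.Walk.support_cons, List.mem_cons, not_or] at hq
          refine ih hq.2 (hcl _ ha _ h ?_)
          rintro rfl
          exact hq.2 q.start_mem_support
      exact this y z p hp.2 hyY
    have hsub : ∀ v, x ∉ {s | v ∈ D.bag s} → ({s | v ∈ D.bag s} ∩ Y).Nonempty →
        {s | v ∈ D.bag s} ⊆ Y := by
      intro v hxv hne
      refine (conn_of_induce (D.subtree v)).subset_closed hne ?_
      intro a _ ha b hb hab
      exact hcl a ha b hab (by rintro rfl; exact hxv hb)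
    have hxC : ∀ c ∈ C, c ∉ D.bag x := fun c hc h => hx ⟨c, h, hc⟩
    have hCY : C ⊆ {c | {s | c ∈ D.bag s} ⊆ Y} := by
      obtain ⟨c, hcz, hc⟩ := hz
      refine hC.subset_closed ⟨c, hc, hsub c (hxC c hc) ⟨z, hcz, hzY⟩⟩ ?_
      intro a haC ha b hb hab
      obtain ⟨s, hsa, hsb⟩ := D.edge_bag a b hab
      exact hsub b (hxC b hb) ⟨s, hsb, ha hsa⟩
    intro u hu
    obtain ⟨c, hc, huc⟩ := hU u hu
    obtain ⟨s, hsu, hsc⟩ := D.edge_bag u c huc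
    have hsY : s ∈ Y := hCY hc hsc
    by_contra hyu
    have : {s | u ∈ D.bag s} ⊆ Y := by
      refine (conn_of_induce (D.subtree u)).subset_closed ⟨s, hsu, hsY⟩ ?_
      intro a hau ha b hb hab
      by_cases hbx : b = x
      · exfalso
        subst hbx
        by_cases hay : a = y
        · subst hay; exact hyu hau
        · apply hxY
          refine SimpleGraph.Reachable.trans ha (SimpleGraph.Adj.reachable ?_)
          rw [hT', SimpleGraph.sdiff_adj, SimpleGraph.fromEdgeSet_adj]
          refine ⟨hab, fun h => ?_⟩
          have h1 := h.1
          rw [Set.mem_singleton_iff, Sym2.eq_iff] at h1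
          rcases h1 with ⟨rfl, _⟩ | ⟨rfl, _⟩
          · exact h.2 rfl
          · exact hay rfl
      · exact hcl a ha b hab hbx
    exact hxY (this (hUx hu))

theorem bagFamily_of_treewidth {G : SimpleGraph V} {t : ℕ} (h : treewidth G < t) :
    ∃ 𝓑, BagFamily G t 𝓑 := by
  have hne : {w | ∃ D : TreeDecomp G, D.width = w}.Nonempty := by
    refine ⟨_, ⟨1, ⊥, SimpleGraph.IsTree.of_subsingleton, fun _ => Set.univ,
      fun _ _ _ => ⟨0, trivial, trivial⟩, ?_⟩, rfl⟩
    intro v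
    apply Conn.induce
    refine ⟨⟨0, trivial⟩, ?_⟩
    rintro A _ ⟨a, ha⟩ _ b _
    rwa [Subsingleton.elim b a]
  obtain ⟨D, hD⟩ := Nat.sInf_mem hne
  change D.width = treewidth G at hD
  have hcard : ∀ s, (D.bag s).ncard ≤ t := by
    intro s
    have h1 : (D.bag s).ncard ≤ ⨆ t, (D.bag t).ncard :=
      le_ciSup (f := fun t => (D.bag t).ncard) (Set.finite_range _).bddAbove s
    unfold TreeDecomp.width at hD
    omega
  refine ⟨Set.range D.bag, ?_, ?_, ?_⟩
  · rintro _ ⟨s, rfl⟩; exact hcard s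
  · intro v
    obtain ⟨⟨s, hs⟩⟩ := (D.subtree v).nonempty
    exact ⟨_, ⟨s, rfl⟩, hs⟩
  · rintro C U hC hU ⟨_, ⟨x, rfl⟩, hx⟩
    obtain ⟨c, hc⟩ := hC.1
    obtain ⟨⟨z, hz⟩⟩ := (D.subtree c).nonempty
    obtain ⟨p, hp⟩ := D.isTree.connected.exists_isPath x z
    obtain ⟨y, h1, h2⟩ := tree_step D hC hU p hp hx ⟨c, hz, hc⟩
    exact ⟨_, ⟨y, rfl⟩, h1, h2⟩

/-- Boundary of `A` inside `D`. -/
def bd (G : SimpleGraph V) (D A : Set V) : Set V :=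
  {v | v ∈ D ∧ v ∉ A ∧ ∃ a ∈ A, G.Adj v a}

/-- `C` together with everything it separates from `r` in `D`. -/
def beyond (G : SimpleGraph V) (D : Set V) (r : V) (C : Set V) : Set V :=
  D \ comp G (D \ C) r

theorem subset_beyond {G : SimpleGraph V} {D C : Set V} {r : V} (hC : C ⊆ D) (hr : r ∈ D)
    (hrC : r ∉ C) : C ⊆ beyond G D r C := by
  intro v hv
  exact ⟨hC hv, fun h => (comp_subset (G := G) (S := D \ C) ⟨hr, hrC⟩ h).2 hv⟩

/-- An edge between the root side and the far side ends in `C`. -/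
theorem edge_beyond {G : SimpleGraph V} {D C : Set V} {r a b : V}
    (ha : a ∈ beyond G D r C) (hb : b ∈ comp G (D \ C) r) (hab : G.Adj b a) : a ∈ C := by
  by_contra haC
  exact ha.2 (comp_closed hb ⟨ha.1, haC⟩ hab)

theorem step [Finite V] {G : SimpleGraph V} {t k : ℕ} {D : Set V} (hD : Conn G D)
    {r : V} (hr : r ∈ D)
    (hH : ¬ ∃ X S₁ S₂ : Set V, X ⊆ D ∧ S₁ ⊆ D ∧ S₂ ⊆ D ∧
      Disjoint X S₁ ∧ Disjoint X S₂ ∧ Disjoint S₁ S₂ ∧ r ∈ X ∧ Conn G X ∧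
      Rich G k S₁ ∧ Rich G k S₂ ∧
      (∃ x ∈ X, ∃ s ∈ S₁, G.Adj x s) ∧ (∃ x ∈ X, ∃ s ∈ S₂, G.Adj x s))
    (hrec : ∀ Y : Set V, (∀ K, K ⊆ Y → ¬ Rich G k K) → PW G (t * k) Y ∅)
    {A Z : Set V} (hA : A ⊆ D) (hZ : Z.ncard ≤ t) (hAZ : bd G D A ⊆ Z) (hrA : r ∉ A \ Z)
    (hRA : ∀ C, Conn G C → C ⊆ A → r ∉ C → beyond G D r C ⊆ A)
    (ih : ∀ C, Rich G k C → C ⊆ A \ Z → r ∉ C → bd G D C ⊆ Z →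
      PW G (t * (k + 1)) (beyond G D r C) (bd G D (beyond G D r C))) :
    PW G (t * (k + 1)) A (bd G D A) := by
  have htk : t * (k + 1) = t * k + t := by ring
  -- the assembly step
  have asm : ∀ A₁ : Set V, A₁ ⊆ A → (∀ X : Set V, X = (Z ∩ A) \ A₁ →
      PW G (t * (k + 1)) A₁ (bd G D A ∪ X)) →
      (∀ y ∈ (A \ A₁) \ Z, ∀ a ∈ A₁, ¬ G.Adj y a) →
      (∀ K, K ⊆ (A \ A₁) \ Z → ¬ Rich G k K) → PW G (t * (k + 1)) A (bd G D A) := by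
    intro A₁ hA₁ hP hE hR
    set X := (Z ∩ A) \ A₁ with hX
    have hbX : bd G D A ∪ X ⊆ Z := Set.union_subset hAZ (fun v hv => hv.1.1)
    have hdec : A = (((A \ A₁) \ Z) ∪ A₁) ∪ X := by
      ext v
      have := @hA₁ v
      simp only [hX, Set.mem_union, Set.mem_sdiff, Set.mem_inter_iff]
      tauto
    have hbA : ∀ v, v ∈ bd G D A → v ∉ A := fun v hv => hv.2.1
    have hcard : (bd G D A ∪ X).ncard ≤ t := (Set.ncard_le_ncard hbX (Set.toFinite _)).trans hZ
    have hmain : PW G (t * (k + 1)) (((A \ A₁) \ Z) ∪ A₁) (∅ ∪ (bd G D A ∪ X)) := by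
      refine PW.concat (hP X rfl) ?_ (by omega) (hrec _ hR) ?_ ?_ (Set.empty_disjoint _) ?_
      · rw [Set.disjoint_left]
        rintro v hv (h | h)
        · exact hbA v h (hA₁ hv)
        · exact h.2 hv
      · rw [Set.disjoint_left]
        exact fun v hv h => hv.1.2 h
      · rw [Set.disjoint_left]
        exact fun v hv h => hv.2 (hbX h)
      · rintro y (hy | hy)
        · exact hE y hy
        · exact absurd hy (Set.notMem_empty _)
    rw [Set.empty_union] at hmain
    have hfin : PW G (t * (k + 1)) ((((A \ A₁) \ Z) ∪ A₁) ∪ X) (bd G D A) := by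
      refine PW.intro _ _ _ ?_ ?_ ?_ ?_ hmain
      · rw [Set.disjoint_left]
        rintro v (h | h) hv
        · exact hbA v hv h.1.1
        · exact hbA v hv (hA₁ h)
      · rw [Set.disjoint_left]
        rintro v (h | h) hv
        · exact h.2 hv.1.1
        · exact hv.2 h
      · rw [Set.disjoint_left]
        exact fun v hv h => hbA v h hv.1.2
      · have := Set.ncard_le_ncard (Set.subset_union_left : bd G D A ⊆ bd G D A ∪ X)
          (Set.toFinite _)
        omega
    rwa [← hdec] at hfin
  by_cases hrich : ∃ K, K ⊆ A \ Z ∧ Rich G k K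
  swap
  · refine asm ∅ (Set.empty_subset _) ?_ ?_ ?_
    · rintro X rfl
      refine PW.nil _ ?_
      have : bd G D A ∪ (Z ∩ A) \ ∅ ⊆ Z := Set.union_subset hAZ (fun v hv => hv.1.1)
      have := Set.ncard_le_ncard this (Set.toFinite _)
      have := hZ
      omega
    · intro y _ a ha; exact absurd ha (Set.notMem_empty _)
    · intro K hK hKr
      exact hrich ⟨K, fun v hv => ⟨(hK hv).1.1, (hK hv).2⟩, hKr⟩
  -- candidates: rich components of `A \ Z`
  let P : Set V → Prop := fun C => Rich G k C ∧ C ⊆ A \ Z ∧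
    ∀ a ∈ C, ∀ b ∈ A \ Z, G.Adj a b → b ∈ C
  have hcand : ∀ K, K ⊆ A \ Z → Rich G k K → ∃ C, P C ∧ K ⊆ C := by
    intro K hK hKr
    obtain ⟨v, hv⟩ := hKr.conn.1
    have hKC : K ⊆ comp G (A \ Z) v := hKr.conn.subset_comp hK ⟨v, hv, mem_comp_self⟩
    exact ⟨comp G (A \ Z) v, ⟨hKr.mono hKC (conn_comp (hK hv)), comp_subset (hK hv),
      fun a ha b hb hab => comp_closed ha hb hab⟩, hKC⟩
  obtain ⟨K0, hK0, hK0r⟩ := hrich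
  obtain ⟨C0, hC0, -⟩ := hcand K0 hK0 hK0r
  obtain ⟨C, hC, hmin⟩ : ∃ C, P C ∧ ∀ C', P C' →
      (comp G (D \ C) r).ncard ≤ (comp G (D \ C') r).ncard := by
    obtain ⟨C, hC, hm⟩ := Set.exists_min_image {C | P C} (fun C => (comp G (D \ C) r).ncard)
      (Set.toFinite _) ⟨C0, hC0⟩
    exact ⟨C, hC, fun C' h => hm C' h⟩
  obtain ⟨hCr, hCA, hCcl⟩ := hC
  have hrC : r ∉ C := fun h => hrA (hCA h)
  have hCA' : C ⊆ A := hCA.trans Set.sdiff_subset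
  have hCD : C ⊆ D := hCA'.trans hA
  have hbC : bd G D C ⊆ Z := by
    rintro v ⟨hvD, hvC, c, hc, hvc⟩
    by_contra hvZ
    by_cases hvA : v ∈ A
    · exact hvC (hCcl c hc v ⟨hvA, hvZ⟩ hvc.symm)
    · exact hvZ (hAZ ⟨hvD, hvA, c, hCA' hc, hvc⟩)
  have hA₁ : beyond G D r C ⊆ A := hRA C hCr.conn hCA' hrC
  have hCb : C ⊆ beyond G D r C := subset_beyond hCD hr hrC
  have hroot : ∀ v ∈ D, v ∉ beyond G D r C → v ∈ comp G (D \ C) r := by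
    intro v hv h
    by_contra h'
    exact h ⟨hv, h'⟩
  refine asm (beyond G D r C) hA₁ ?_ ?_ ?_
  · rintro X rfl
    refine PW.forget _ _ (bd G D (beyond G D r C)) ?_ ?_ ?_ ?_ (ih C hCr hCA hrC hbC)
    · rintro v ⟨hvD, hv, a, ha, hva⟩
      by_cases hvA : v ∈ A
      · refine Or.inr ⟨⟨hbC ⟨hvD, fun h => hv (hCb h), a, ?_, hva⟩, hvA⟩, hv⟩
        exact edge_beyond ha (hroot v hvD hv) hva
      · exact Or.inl ⟨hvD, hvA, a, hA₁ ha, hva⟩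
    · rw [Set.disjoint_left]
      rintro v hv (h | h)
      · exact h.2.1 (hA₁ hv)
      · exact h.2 hv
    · have : bd G D A ∪ (Z ∩ A) \ beyond G D r C ⊆ Z :=
        Set.union_subset hAZ (fun v hv => hv.1.1)
      have := Set.ncard_le_ncard this (Set.toFinite _)
      have := hZ
      omega
    · rintro s ⟨hs, hs'⟩ a ha hsa
      refine hs' ⟨?_, ?_, a, ha, hsa⟩
      · rcases hs with h | h
        · exact h.1
        · exact hA h.1.2
      · rcases hs with h | h
        · exact fun h' => h.2.1 (hA₁ h')
        · exact h.2
  · rintro y ⟨⟨hyA, hyb⟩, hyZ⟩ a ha hya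
    have haC := edge_beyond ha (hroot y (hA hyA) hyb) hya
    exact hyb (hCb (hCcl a haC y ⟨hyA, hyZ⟩ hya.symm))
  · intro K0 hK0 hK0r
    obtain ⟨K, ⟨hKr, hKA, hKcl⟩, hKK⟩ :=
      hcand K0 (fun v hv => ⟨(hK0 hv).1.1, (hK0 hv).2⟩) hK0r
    have hdisj : Disjoint C K := by
      rw [Set.disjoint_left]
      intro v hvC hvK
      have : K ⊆ C := hKr.conn.subset_closed ⟨v, hvK, hvC⟩
        (fun a _ ha b hb hab => hCcl a ha b (hKA hb) hab)
      obtain ⟨w, hw⟩ := hK0r.conn.1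
      exact (hK0 hw).1.2 (hCb (this (hKK hw)))
    have hKD : K ⊆ D := (hKA.trans Set.sdiff_subset).trans hA
    have hrK : r ∉ K := fun h => hrA (hKA h)
    obtain ⟨w, hw⟩ := hK0r.conn.1
    have hKR : K ⊆ comp G (D \ C) r := by
      refine hKr.conn.subset_comp (fun v hv => ⟨hKD hv, Set.disjoint_right.1 hdisj hv⟩)
        ⟨w, hKK hw, ?_⟩
      exact hroot w (hKD (hKK hw)) (hK0 hw).1.2
    have hr2 : r ∈ D \ (C ∪ K) := ⟨hr, fun h => h.elim hrC hrK⟩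
    have hXs := comp_subset (G := G) hr2
    have hXC : Disjoint (comp G (D \ (C ∪ K)) r) C :=
      Set.disjoint_left.2 (fun v hv h => (hXs hv).2 (Or.inl h))
    have hXK : Disjoint (comp G (D \ (C ∪ K)) r) K :=
      Set.disjoint_left.2 (fun v hv h => (hXs hv).2 (Or.inr h))
    refine hH ⟨comp G (D \ (C ∪ K)) r, C, K, hXs.trans Set.sdiff_subset, hCD, hKD, hXC, hXK,
      hdisj, mem_comp_self, conn_comp hr2, hCr, hKr, ?_, ?_⟩
    · by_contra hcon
      push Not at hcon
      have h1 : comp G (D \ K) r ⊆ comp G (D \ (C ∪ K)) r := by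
        refine comp_le (fun v hv => ⟨(hXs hv).1, fun h => (hXs hv).2 (Or.inr h)⟩)
          mem_comp_self ?_
        intro a ha b hb hab
        exact comp_closed ha ⟨hb.1, fun h => h.elim (fun h => hcon a ha b h hab) hb.2⟩ hab
      have h2 : comp G (D \ (C ∪ K)) r ⊆ comp G (D \ C) r :=
        (conn_comp hr2).subset_comp
          (fun v hv => ⟨(hXs hv).1, fun h => (hXs hv).2 (Or.inl h)⟩)
          ⟨r, mem_comp_self, mem_comp_self⟩
      have h3 : (comp G (D \ K) r).ncard < (comp G (D \ C) r).ncard := by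
        refine Set.ncard_lt_ncard ⟨h1.trans h2, fun h => ?_⟩ (Set.toFinite _)
        exact (hXs (h1 (h (hKR (hKK hw))))).2 (Or.inr (hKK hw))
      exact absurd (hmin K ⟨hKr, hKA, hKcl⟩) (by omega)
    · by_contra hcon
      push Not at hcon
      have h1 : comp G (D \ C) r ⊆ comp G (D \ (C ∪ K)) r := by
        refine comp_le (fun v hv => ⟨(hXs hv).1, fun h => (hXs hv).2 (Or.inl h)⟩)
          mem_comp_self ?_
        intro a ha b hb hab
        exact comp_closed ha ⟨hb.1, fun h => h.elim hb.2 (fun h => hcon a ha b h hab)⟩ hab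
      exact (hXs (h1 (hKR (hKK hw)))).2 (Or.inr (hKK hw))

theorem beyond_mono {G : SimpleGraph V} {D C C₁ : Set V} {r : V} (hr : r ∈ D) (hrC : r ∉ C)
    (h : C₁ ⊆ beyond G D r C) : beyond G D r C₁ ⊆ beyond G D r C := by
  have hr' : r ∈ D \ C := ⟨hr, hrC⟩
  have : comp G (D \ C) r ⊆ comp G (D \ C₁) r :=
    (conn_comp hr').subset_comp
      (fun v hv => ⟨(comp_subset hr' hv).1, fun hv1 => (h hv1).2 hv⟩)
      ⟨r, mem_comp_self, mem_comp_self⟩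
  exact fun v hv => ⟨hv.1, fun h' => hv.2 (this h')⟩

theorem main [Finite V] {G : SimpleGraph V} {t : ℕ} {𝓑 : Set (Set V)} (h𝓑 : BagFamily G t 𝓑)
    (k : ℕ) : ∀ Y : Set V, (∀ K, K ⊆ Y → ¬ Rich G k K) → PW G (t * k) Y ∅ := by
  obtain ⟨hcard, hcov, hstep⟩ := h𝓑
  induction k with
  | zero =>
    intro Y hY
    have : Y = ∅ := by
      rw [Set.eq_empty_iff_forall_notMem]
      intro v hv
      exact hY {v} (by simpa using hv) (conn_singleton G v)
    subst this
    exact PW.nil _ (by simp)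
  | succ k hrec =>
    have hconn : ∀ D : Set V, Conn G D → ¬ Rich G (k + 1) D → PW G (t * (k + 1)) D ∅ := by
      intro D hD hnr
      obtain ⟨r, hr, hH⟩ : ∃ r ∈ D, ¬ ∃ X S₁ S₂ : Set V, X ⊆ D ∧ S₁ ⊆ D ∧ S₂ ⊆ D ∧
          Disjoint X S₁ ∧ Disjoint X S₂ ∧ Disjoint S₁ S₂ ∧ r ∈ X ∧ Conn G X ∧
          Rich G k S₁ ∧ Rich G k S₂ ∧
          (∃ x ∈ X, ∃ s ∈ S₁, G.Adj x s) ∧ (∃ x ∈ X, ∃ s ∈ S₂, G.Adj x s) := by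
        by_contra hcon
        apply hnr
        refine ⟨hD, fun r hr => ?_⟩
        by_contra h
        exact hcon ⟨r, hr, h⟩
      have hind : ∀ (a c : ℕ) (C : Set V), (beyond G D r C).ncard ≤ a → C.ncard ≤ c →
          Rich G k C → C ⊆ D → r ∉ C → (∃ B ∈ 𝓑, bd G D C ⊆ B) →
          PW G (t * (k + 1)) (beyond G D r C) (bd G D (beyond G D r C)) := by
        intro a
        induction a with
        | zero =>
          intro c C h1 _ h3 h4 h5 _
          exfalso
          obtain ⟨v, hv⟩ := h3.conn.1
          rw [Nat.le_zero, Set.ncard_eq_zero (Set.toFinite _)] at h1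
          have := subset_beyond (G := G) h4 hr h5 hv
          rw [h1] at this
          exact this
        | succ a iha =>
          intro c
          induction c with
          | zero =>
            intro C _ h2 h3 _ _ _
            exfalso
            obtain ⟨v, hv⟩ := h3.conn.1
            rw [Nat.le_zero, Set.ncard_eq_zero (Set.toFinite _)] at h2
            rw [h2] at hv
            exact hv
          | succ c ihc =>
            intro C hca hcc hCr hCD hrC hB
            obtain ⟨B, hB, hCB, ⟨b, hbB, hbC⟩⟩ := hstep C (bd G D C) hCr.conn
              (fun u hu => hu.2.2) hB
            have hCb := subset_beyond (G := G) hCD hr hrC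
            have hrD : r ∈ D \ C := ⟨hr, hrC⟩
            refine step hD hr hH hrec (Z := B) Set.sdiff_subset (hcard B hB) ?_ ?_ ?_ ?_
            · rintro v ⟨hvD, hv, x, hx, hvx⟩
              refine hCB ⟨hvD, fun h => hv (hCb h), x, edge_beyond hx ?_ hvx, hvx⟩
              by_contra h'
              exact hv ⟨hvD, h'⟩
            · exact fun h => h.1.2 mem_comp_self
            · intro C₁ _ hC₁ _
              exact beyond_mono hr hrC hC₁
            · intro C₁ hC₁r hC₁A hrC₁ hbC₁
              have hC₁b : C₁ ⊆ beyond G D r C := hC₁A.trans Set.sdiff_subset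
              have hC₁D : C₁ ⊆ D := hC₁b.trans Set.sdiff_subset
              have hsub := beyond_mono hr hrC hC₁b
              by_cases hmeet : (C₁ ∩ C).Nonempty
              · have h1 : C₁ ⊆ C := hC₁r.conn.subset_closed hmeet (by
                  intro x _ hx y hy hxy
                  by_contra hyC
                  exact (hC₁A hy).2 (hCB ⟨hC₁D hy, hyC, x, hx, hxy.symm⟩))
                have h2 : C₁.ncard < C.ncard :=
                  Set.ncard_lt_ncard ⟨h1, fun h => (hC₁A (h hbC)).2 hbB⟩ (Set.toFinite _)
                exact ihc C₁ ((Set.ncard_le_ncard hsub (Set.toFinite _)).trans hca) (by omega)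
                  hC₁r hC₁D hrC₁ ⟨B, hB, hbC₁⟩
              · have hdis : ∀ v ∈ C, v ∉ C₁ := fun v hv h => hmeet ⟨v, h, hv⟩
                have h2 : (beyond G D r C₁).ncard < (beyond G D r C).ncard := by
                  refine Set.ncard_lt_ncard ⟨hsub, fun h => ?_⟩ (Set.toFinite _)
                  -- an edge from the root side to `C`
                  obtain ⟨x, hx, y, hy, hyx, hxy⟩ := hD.exists_edge
                    (A := comp G (D \ C) r)
                    ((comp_subset hrD).trans Set.sdiff_subset) ⟨r, mem_comp_self⟩
                    (fun h' => (comp_subset hrD (h' (hCD hbC))).2 hbC)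
                  have hyC : y ∈ C := edge_beyond ⟨hy, hyx⟩ hx hxy
                  have hyb := h (hCb hyC)
                  have hx1 : x ∈ comp G (D \ C₁) r := by
                    by_contra hx1
                    exact (hsub ⟨(comp_subset hrD hx).1, hx1⟩).2 hx
                  exact hdis y hyC (edge_beyond hyb hx1 hxy)
                exact iha C₁.ncard C₁ (by omega) le_rfl hC₁r hC₁D hrC₁ ⟨B, hB, hbC₁⟩
      obtain ⟨B, hB, hrB⟩ := hcov r
      have hb : bd G D D = ∅ := by
        rw [Set.eq_empty_iff_forall_notMem]
        exact fun v hv => hv.2.1 hv.1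
      rw [← hb]
      refine step hD hr hH hrec (Z := B) subset_rfl (hcard B hB) ?_ ?_ ?_ ?_
      · rw [hb]; exact Set.empty_subset _
      · exact fun h => h.2 hrB
      · exact fun C _ _ _ => Set.sdiff_subset
      · intro C hCr hCD hrC hbC
        exact hind _ _ C le_rfl le_rfl hCr (hCD.trans Set.sdiff_subset) hrC ⟨B, hB, hbC⟩
    have hall : ∀ (n : ℕ) (Y : Set V), Y.ncard ≤ n → (∀ K, K ⊆ Y → ¬ Rich G (k + 1) K) →
        PW G (t * (k + 1)) Y ∅ := by
      intro n
      induction n with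
      | zero =>
        intro Y hn _
        rw [Nat.le_zero, Set.ncard_eq_zero (Set.toFinite _)] at hn
        subst hn
        exact PW.nil _ (by simp)
      | succ n ihn =>
        intro Y hn hY
        rcases Set.eq_empty_or_nonempty Y with rfl | ⟨v, hv⟩
        · exact PW.nil _ (by simp)
        have hK := comp_subset (G := G) hv
        have h1 := hconn (comp G Y v) (conn_comp hv) (hY _ hK)
        have hlt : (Y \ comp G Y v).ncard < Y.ncard :=
          Set.ncard_lt_ncard ⟨Set.sdiff_subset, fun h => (h hv).2 mem_comp_self⟩
            (Set.toFinite _)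
        have h2 := ihn (Y \ comp G Y v) (by omega) (fun K hK' => hY K (hK'.trans Set.sdiff_subset))
        have h3 := PW.concat h2 (Set.disjoint_empty _) (by simp) h1 Set.disjoint_sdiff_right
          (Set.disjoint_empty _) (Set.empty_disjoint _) (by
            rintro y (hy | hy) a ha hya
            · exact ha.2 (comp_closed hy ha.1 hya)
            · exact hy)
        rwa [Set.union_sdiff_cancel hK, Set.union_empty] at h3
    exact fun Y hY => hall _ Y le_rfl hY

end PWTW

/-- There is a universal constant `C` such that every finite simple graph of treewidth
less than `t` with no complete binary tree of height `h` as a minor has pathwidth at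
most `C * t * h`. -/
theorem stmt_2 : ∃ C : ℕ, ∀ (V : Type) [Fintype V] (G : SimpleGraph V) (t h : ℕ),
    0 < t → 0 < h →
    treewidth G < t → ¬ IsMinor (completeBinaryTree h) G →
    pathwidth G ≤ C * t * h := by
  refine ⟨1, ?_⟩
  intro V _ G t h ht hh htw hminor
  obtain ⟨k, rfl⟩ : ∃ k, h = k + 1 := ⟨h - 1, by omega⟩
  obtain ⟨𝓑, h𝓑⟩ := PWTW.bagFamily_of_treewidth htw
  have hP := PWTW.main h𝓑 k Set.univ (fun K _ hK => hminor hK.minor)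
  refine hP.pathwidth_le.trans ?_
  rw [one_mul]
  exact Nat.mul_le_mul_left _ (Nat.le_succ k)
end

section
/- Every finite simple graph G has a path decomposition of width exactly pw(G) that is linked. -/
/-- A `k`-linkage between `A` and `B` in `G`: `k` pairwise vertex-disjoint paths,
each starting in `A` and ending in `B`. -/
structure Linkage {V : Type*} (G : SimpleGraph V) (k : ℕ) (A B : Set V) where
  first : Fin k → V
  last : Fin k → V
  walk : ∀ i, G.Walk (first i) (last i)
  isPath : ∀ i, (walk i).IsPath
  first_mem : ∀ i, first i ∈ A
  last_mem : ∀ i, last i ∈ B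
  disjoint : ∀ i j, i ≠ j → ∀ x, x ∈ (walk i).support → x ∉ (walk j).support

/-- The subgraph of `G` formed by a linkage. -/
noncomputable def Linkage.toSubgraph {V : Type*} {G : SimpleGraph V} {k : ℕ} {A B : Set V}
    (L : Linkage G k A B) : G.Subgraph :=
  ⨆ i, (L.walk i).toSubgraph

/-- A path decomposition is linked if between the bags of any two nodes `t, t'`
there is a `k`-linkage, where `k` is the minimum bag size over the nodes
between `t` and `t'`. -/
def PathDecomp.IsLinked {V : Type*} {G : SimpleGraph V} (D : PathDecomp G) : Prop :=
  ∀ t t' : Fin D.n,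
    Nonempty (Linkage G
      (sInf { k | ∃ s : Fin D.n, min t t' ≤ s ∧ s ≤ max t t' ∧ k = (D.bag s).ncard })
      (D.bag t) (D.bag t'))


namespace LinkedPD

open Finset Classical

/-- A separation of a graph. -/
def IsSep {V : Type*} (G : SimpleGraph V) (X Y : Finset V) : Prop :=
  (∀ v, v ∈ X ∨ v ∈ Y) ∧ ∀ u v, G.Adj u v → (u ∈ X ∧ v ∈ X) ∨ (u ∈ Y ∧ v ∈ Y)

/-- Hall's theorem gives the successor function. -/
lemma exists_succ {V : Type*} [Fintype V] (G : SimpleGraph V) (A C : Finset V) (k : ℕ)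
    (hsep : ∀ X Y, IsSep G X Y → A ⊆ X → C ⊆ Y → k ≤ (X ∩ Y).card) :
    ∃ f : {v // v ∉ C} → V ⊕ Fin (A.card - k), Function.Injective f ∧
      ∀ v w, f v = Sum.inl w → w ∉ A ∧ (w = v.1 ∨ G.Adj v.1 w) := by
  have hkA : k ≤ A.card := by
    have := hsep A univ ⟨fun v => by simp, fun u v _ => by simp⟩ (Subset.refl _) (by simp)
    simpa using this
  let T : {v // v ∉ C} → Finset (V ⊕ Fin (A.card - k)) := fun v =>
    (univ.filter fun w => w ∉ A ∧ (w = v.1 ∨ G.Adj v.1 w)).disjSum univ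
  have hall := (Finset.all_card_le_biUnion_card_iff_exists_injective T).1 (by
    intro U
    let N : Finset V := univ.filter fun w => w ∉ A ∧ ∃ v ∈ U, (w = v.1 ∨ G.Adj v.1 w)
    rcases U.eq_empty_or_nonempty with rfl | ⟨u0, hu0⟩
    · simp
    have h1 : U.biUnion T = N.disjSum univ := by
      ext x
      rcases x with w | d
      · simp only [T, N, mem_biUnion, inl_mem_disjSum, mem_filter, mem_univ, true_and]
        constructor
        · rintro ⟨v, hv, hw, h⟩; exact ⟨hw, v, hv, h⟩
        · rintro ⟨hw, v, hv, h⟩; exact ⟨v, hv, hw, h⟩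
      · simp only [T, mem_biUnion, inr_mem_disjSum, mem_univ, and_true, iff_true]
        exact ⟨u0, hu0⟩
    rw [h1, card_disjSum]
    let U' : Finset V := U.map (Function.Embedding.subtype _)
    have hU' : U'.card = U.card := card_map _
    have hmem : ∀ v, v ∈ U' ↔ ∃ h : v ∉ C, (⟨v, h⟩ : {v // v ∉ C}) ∈ U := by
      intro v; simp [U']
    have key := hsep (A ∪ N) (univ \ U') (by
      constructor
      · intro v
        by_cases hv : v ∈ U'
        · left
          obtain ⟨h, hvU⟩ := (hmem v).1 hv
          by_cases hA : v ∈ A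
          · simp [hA]
          · refine mem_union_right _ ?_
            simp only [N, mem_filter, mem_univ, true_and]
            exact ⟨hA, _, hvU, Or.inl rfl⟩
        · right; simp [hv]
      · have main : ∀ u v, G.Adj u v → u ∈ U' → u ∈ A ∪ N ∧ v ∈ A ∪ N := by
          intro u v huv hu
          obtain ⟨h, hvU⟩ := (hmem u).1 hu
          constructor
          · by_cases hA : u ∈ A
            · simp [hA]
            · refine mem_union_right _ ?_
              simp only [N, mem_filter, mem_univ, true_and]
              exact ⟨hA, _, hvU, Or.inl rfl⟩
          · by_cases hA : v ∈ A
            · simp [hA]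
            · refine mem_union_right _ ?_
              simp only [N, mem_filter, mem_univ, true_and]
              exact ⟨hA, _, hvU, Or.inr huv⟩
        intro u v huv
        by_cases hu : u ∈ U'
        · exact Or.inl (main u v huv hu)
        by_cases hv : v ∈ U'
        · exact Or.inl (main v u huv.symm hv).symm
        · right; simp [hu, hv]) subset_union_left (by
      intro c hc
      simp only [mem_sdiff, mem_univ, true_and]
      intro hcU
      exact ((hmem c).1 hcU).1 hc)
    have hsub : U' ⊆ A ∪ N := by
      intro v hv
      obtain ⟨h, hvU⟩ := (hmem v).1 hv
      by_cases hA : v ∈ A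
      · simp [hA]
      · refine mem_union_right _ ?_
        simp only [N, mem_filter, mem_univ, true_and]
        exact ⟨hA, _, hvU, Or.inl rfl⟩
    have h2 : (A ∪ N) ∩ (univ \ U') = (A ∪ N) \ U' := by ext; simp
    rw [h2, card_sdiff_of_subset hsub] at key
    have h3 := card_union_le A N
    have h4 := card_le_card hsub
    simp only [card_univ, Fintype.card_fin]
    omega)
  obtain ⟨f, hf, hT⟩ := hall
  refine ⟨f, hf, fun v w h => ?_⟩
  have := hT v
  rw [h] at this
  simpa [T] using this

lemma iter_cancel {V : Type*} (g : V → V) (A T : Set V)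
    (hinj : ∀ u v, u ∉ T → v ∉ T → g u = g v → u = v)
    (hA : ∀ u, u ∉ T → g u ∉ A) :
    ∀ (i j : ℕ) (a a' : V), a ∈ A → a' ∈ A → (∀ m < i, g^[m] a ∉ T) →
      (∀ m < j, g^[m] a' ∉ T) → g^[i] a = g^[j] a' → i = j ∧ a = a' := by
  intro i
  induction i with
  | zero =>
    intro j a a' ha ha' _ hj h
    cases j with
    | zero => exact ⟨rfl, h⟩
    | succ j =>
      rw [Function.iterate_succ_apply'] at h
      exact absurd (by simpa [← h] using ha) (hA _ (hj j (Nat.lt_succ_self j)))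
  | succ i ih =>
    intro j a a' ha ha' hi hj h
    cases j with
    | zero =>
      rw [Function.iterate_succ_apply'] at h
      exact absurd (by simpa [h] using ha') (hA _ (hi i (Nat.lt_succ_self i)))
    | succ j =>
      rw [Function.iterate_succ_apply', Function.iterate_succ_apply'] at h
      have := hinj _ _ (hi i (Nat.lt_succ_self i)) (hj j (Nat.lt_succ_self j)) h
      obtain ⟨h1, h2⟩ := ih j a a' ha ha' (fun m hm => hi m (by omega))
        (fun m hm => hj m (by omega)) this
      exact ⟨by omega, h2⟩

lemma iter_walk {V : Type*} (G : SimpleGraph V) (g : V → V)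
    (hg : ∀ v, g v = v ∨ G.Adj v (g v)) (a : V) (n : ℕ) :
    ∃ p : G.Walk a (g^[n] a), p.IsPath ∧ ∀ x ∈ p.support, ∃ i ≤ n, x = g^[i] a := by
  suffices h : ∃ p : G.Walk a (g^[n] a), ∀ x ∈ p.support, ∃ i ≤ n, x = g^[i] a by
    obtain ⟨p, hp⟩ := h
    exact ⟨p.bypass, p.bypass_isPath, fun x hx => hp x (p.support_bypass_subset_support hx)⟩
  induction n with
  | zero => exact ⟨SimpleGraph.Walk.nil, fun x hx => ⟨0, le_rfl, by simpa using hx⟩⟩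
  | succ n ih =>
    obtain ⟨p, hp⟩ := ih
    rw [Function.iterate_succ_apply']
    rcases hg (g^[n] a) with h | h
    · rw [h]
      exact ⟨p, fun x hx => by obtain ⟨i, hi, e⟩ := hp x hx; exact ⟨i, by omega, e⟩⟩
    · refine ⟨p.concat h, fun x hx => ?_⟩
      rw [SimpleGraph.Walk.support_concat] at hx
      simp only [List.mem_append, List.mem_singleton] at hx
      rcases hx with hx | hx
      · obtain ⟨i, hi, e⟩ := hp x hx; exact ⟨i, by omega, e⟩
      · exact ⟨n + 1, le_rfl, by rw [Function.iterate_succ_apply']; exact hx⟩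

/-- Menger's theorem. -/
lemma menger {V : Type*} [Fintype V] (G : SimpleGraph V) (A C : Finset V) (k : ℕ)
    (hsep : ∀ X Y, IsSep G X Y → A ⊆ X → C ⊆ Y → k ≤ (X ∩ Y).card) :
    Nonempty (Linkage G k (A : Set V) (C : Set V)) := by
  have hkA : k ≤ A.card := by
    have := hsep A univ ⟨fun v => by simp, fun u v _ => by simp⟩ (Subset.refl _) (by simp)
    simpa using this
  obtain ⟨f, hf, hfs⟩ := exists_succ G A C k hsep
  let T : Set V := {v | ∀ (h : v ∉ C) (w : V), f ⟨v, h⟩ ≠ Sum.inl w}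
  have hT : ∀ v, v ∉ T → ∃ (h : v ∉ C) (w : V), f ⟨v, h⟩ = Sum.inl w := by
    intro v hv
    simp only [T, Set.mem_ofPred_eq] at hv
    push Not at hv
    exact hv
  have hgex : ∀ v, ∃ w, (v ∈ T → w = v) ∧ (v ∉ T → ∃ h : v ∉ C, f ⟨v, h⟩ = Sum.inl w) := by
    intro v
    by_cases hv : v ∈ T
    · exact ⟨v, fun _ => rfl, fun h => absurd hv h⟩
    · obtain ⟨h, w, hw⟩ := hT v hv
      exact ⟨w, fun h => absurd h hv, fun _ => ⟨h, hw⟩⟩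
  choose g hg1 hg2 using hgex
  have hg : ∀ v, g v = v ∨ G.Adj v (g v) := by
    intro v
    by_cases hv : v ∈ T
    · exact Or.inl (hg1 v hv)
    · obtain ⟨h, hw⟩ := hg2 v hv
      exact (hfs _ _ hw).2
  have hinj : ∀ u v, u ∉ T → v ∉ T → g u = g v → u = v := by
    intro u v hu hv e
    obtain ⟨h, hw⟩ := hg2 u hu
    obtain ⟨h', hw'⟩ := hg2 v hv
    rw [e, ← hw'] at hw
    exact congrArg Subtype.val (hf hw)
  have hA : ∀ u, u ∉ T → g u ∉ (A : Set V) := by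
    intro u hu
    obtain ⟨h, hw⟩ := hg2 u hu
    exact (hfs _ _ hw).1
  have canc := iter_cancel g (A : Set V) T hinj hA
  have hfin : ∀ a ∈ A, ∃ n, g^[n] a ∈ T := by
    intro a ha
    by_contra hcon
    push Not at hcon
    have : Function.Injective fun n => g^[n] a := fun i j e =>
      (canc i j a a ha ha (fun m _ => hcon m) (fun m _ => hcon m) e).1
    exact not_injective_infinite_finite _ this
  have hn : ∀ a, ∃ n, a ∈ A → g^[n] a ∈ T ∧ ∀ m < n, g^[m] a ∉ T := by
    intro a
    by_cases ha : a ∈ A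
    · exact ⟨Nat.find (hfin a ha), fun _ => ⟨Nat.find_spec (hfin a ha),
        fun m hm => Nat.find_min (hfin a ha) hm⟩⟩
    · exact ⟨0, fun h => absurd h ha⟩
  choose n hn using hn
  let good : Finset V := A.filter fun a => g^[n a] a ∈ C
  let bad : Finset V := A.filter fun a => g^[n a] a ∉ C
  have hbad : bad.card ≤ A.card - k := by
    have hd : ∀ a : bad, ∃ d : Fin (A.card - k), ∃ h : g^[n a.1] a.1 ∉ C,
        f ⟨_, h⟩ = Sum.inr d := by
      rintro ⟨a, ha⟩
      simp only [bad, mem_filter] at ha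
      have := (hn a ha.1).1
      rcases e : f ⟨_, ha.2⟩ with w | d
      · exact absurd e (this ha.2 w)
      · exact ⟨d, ha.2, e⟩
    choose d hd1 hd2 using hd
    have : Function.Injective d := by
      intro a b e
      have h1 := hd2 a
      rw [e, ← hd2 b] at h1
      have h2 := congrArg Subtype.val (hf h1)
      have haA : a.1 ∈ A := (mem_filter.1 a.2).1
      have hbA : b.1 ∈ A := (mem_filter.1 b.2).1
      exact Subtype.ext (canc _ _ a.1 b.1 haA hbA (hn _ haA).2 (hn _ hbA).2 h2).2
    simpa using Fintype.card_le_of_injective d this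
  have hgb : good.card + bad.card = A.card := card_filter_add_card_filter_not _
  have hgood : k ≤ good.card := by omega
  obtain ⟨e⟩ : Nonempty (Fin k ↪ good) :=
    Function.Embedding.nonempty_of_card_le (by simpa using hgood)
  have heA : ∀ i, (e i).1 ∈ A := fun i => (mem_filter.1 (e i).2).1
  have heC : ∀ i, g^[n (e i).1] (e i).1 ∈ C := fun i => (mem_filter.1 (e i).2).2
  choose p hp1 hp2 using fun i : Fin k => iter_walk G g hg (e i).1 (n (e i).1)
  refine ⟨⟨fun i => (e i).1, fun i => g^[n (e i).1] (e i).1, p, hp1, heA, heC, ?_⟩⟩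
  intro i j hij x hx hx'
  obtain ⟨a, ha, hxa⟩ := hp2 i x hx
  obtain ⟨b, hb, hxb⟩ := hp2 j x hx'
  have := (canc a b _ _ (heA i) (heA j) (fun m hm => (hn _ (heA i)).2 m (by omega))
    (fun m hm => (hn _ (heA j)).2 m (by omega)) (hxa.symm.trans hxb)).2
  exact hij (e.injective (Subtype.ext this))

lemma linkage_symm {V : Type*} {G : SimpleGraph V} {k : ℕ} {A B : Set V}
    (h : Nonempty (Linkage G k A B)) : Nonempty (Linkage G k B A) := by
  obtain ⟨L⟩ := h
  exact ⟨⟨L.last, L.first, fun i => (L.walk i).reverse, fun i => (L.isPath i).reverse,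
    L.last_mem, L.first_mem, fun i j hij x hx hy =>
      L.disjoint i j hij x (by simpa using hx) (by simpa using hy)⟩⟩

/-- The pairs of indices such that all bags in between have size at least `j`. -/
noncomputable def runs (b : ℕ → ℕ) (n j : ℕ) : Finset (ℕ × ℕ) :=
  (range n ×ˢ range n).filter fun x => x.1 ≤ x.2 ∧ ∀ y, x.1 ≤ y → y ≤ x.2 → j ≤ b y

lemma mem_runs (b : ℕ → ℕ) (n j : ℕ) (x : ℕ × ℕ) :
    x ∈ runs b n j ↔ x.1 ≤ x.2 ∧ x.2 < n ∧ ∀ y, x.1 ≤ y → y ≤ x.2 → j ≤ b y := by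
  simp only [runs, mem_filter, mem_product, mem_range]
  constructor
  · rintro ⟨⟨_, h2⟩, h3, h4⟩; exact ⟨h3, h2, h4⟩
  · rintro ⟨h3, h2, h4⟩; exact ⟨⟨by omega, h2⟩, h3, h4⟩

/-- Splicing of two sequences. -/
def splice {α : Type*} (s t : ℕ) (l r : ℕ → α) (p : ℕ) : α :=
  if p ≤ t then l p else r (p - (t + 1) + s)

lemma potential (b l r : ℕ → ℕ) (n s t k σ : ℕ) (hst : s ≤ t) (htn : t < n) (hσ : σ < k)
    (h1 : ∀ i ≤ t, l i ≤ b i) (h2 : ∀ i, s ≤ i → i < n → r i ≤ b i)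
    (h3 : l t ≤ σ) (h3' : r s ≤ σ)
    (h4 : ∀ i, s ≤ i → i ≤ t → l i + r i = b i + σ)
    (h5 : ∀ i, s ≤ i → i ≤ t → k ≤ b i) (N : ℕ) (hN : ∀ i < n, b i ≤ N) :
    ∃ j ≤ N, (runs (splice s t l r) (t + 1 + (n - s)) j).card < (runs b n j).card ∧
      ∀ j', j ≤ j' → (runs (splice s t l r) (t + 1 + (n - s)) j').card ≤ (runs b n j').card := by
  let φ : ℕ → ℕ := fun p => if p ≤ t then p else p - (t + 1) + s
  let Φ : ℕ × ℕ → ℕ × ℕ := fun x => (φ x.1, φ x.2)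
  let c := splice s t l r
  have cL : ∀ p, p ≤ t → c p = l p := fun p hp => by simp [c, splice, hp]
  have cR : ∀ p, ¬ p ≤ t → c p = r (p - (t + 1) + s) := fun p hp => by simp [c, splice, hp]
  have φL : ∀ p, p ≤ t → φ p = p := fun p hp => by simp [φ, hp]
  have φR : ∀ p, ¬ p ≤ t → φ p = p - (t + 1) + s := fun p hp => by simp [φ, hp]
  have nostr : ∀ j, σ < j → ∀ x ∈ runs c (t + 1 + (n - s)) j, x.2 ≤ t ∨ ¬ x.1 ≤ t := by
    intro j hj x hx
    rw [mem_runs] at hx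
    by_contra hcon
    push Not at hcon
    have := hx.2.2 t hcon.2 (by omega)
    rw [cL t le_rfl] at this
    omega
  have maps : ∀ j, σ < j → ∀ x ∈ runs c (t + 1 + (n - s)) j, Φ x ∈ runs b n j := by
    intro j hj x hx
    have hx' := (mem_runs _ _ _ _).1 hx
    rw [mem_runs]
    simp only [Φ]
    rcases nostr j hj x hx with h | h
    · rw [φL _ h, φL _ (by omega)]
      refine ⟨hx'.1, by omega, fun y hy1 hy2 => ?_⟩
      have := hx'.2.2 y hy1 hy2
      rw [cL y (by omega)] at this
      have := h1 y (by omega)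
      omega
    · rw [φR _ h, φR _ (by omega)]
      refine ⟨by omega, by omega, fun y hy1 hy2 => ?_⟩
      have := hx'.2.2 (y - s + (t + 1)) (by omega) (by omega)
      rw [cR _ (by omega)] at this
      have e : y - s + (t + 1) - (t + 1) + s = y := by omega
      rw [e] at this
      have := h2 y (by omega) (by omega)
      omega
  have inj : ∀ j, σ < j → (∀ i, s ≤ i → i ≤ t → j ≤ l i → j ≤ r i → False) →
      Set.InjOn Φ (runs c (t + 1 + (n - s)) j) := by
    intro j hj hcol
    have aux : ∀ x ∈ runs c (t + 1 + (n - s)) j, ∀ y ∈ runs c (t + 1 + (n - s)) j,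
        Φ x = Φ y → x.2 ≤ t → ¬ y.1 ≤ t → False := by
      intro x hx y hy e hxt hyt
      have hx' := (mem_runs _ _ _ _).1 hx
      have hy' := (mem_runs _ _ _ _).1 hy
      have e1 : φ x.1 = φ y.1 := congrArg Prod.fst e
      rw [φL _ (by omega), φR _ hyt] at e1
      have a1 := hx'.2.2 x.1 le_rfl hx'.1
      have a2 := hy'.2.2 y.1 le_rfl hy'.1
      rw [cL _ (by omega)] at a1
      rw [cR _ hyt, ← e1] at a2
      exact hcol x.1 (by omega) (by omega) a1 a2
    intro x hx y hy e
    have hx' := (mem_runs _ _ _ _).1 hx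
    have hy' := (mem_runs _ _ _ _).1 hy
    have e1 : φ x.1 = φ y.1 := congrArg Prod.fst e
    have e2 : φ x.2 = φ y.2 := congrArg Prod.snd e
    rcases nostr j hj x hx with h | h <;> rcases nostr j hj y hy with h' | h'
    · rw [φL _ (by omega), φL _ (by omega)] at e1 e2
      exact Prod.ext e1 e2
    · exact (aux x hx y hy e h h').elim
    · exact (aux y hy x hx e.symm h' h).elim
    · rw [φR _ (by omega), φR _ (by omega)] at e1 e2
      exact Prod.ext (by omega) (by omega)
  -- colliding indices
  let K : Finset ℕ := (Finset.Icc s t).filter fun i => σ < l i ∧ σ < r i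
  have finish : ∀ j, σ < j → j ≤ N → (∀ i ∈ K, b i ≤ j) →
      (∃ z ∈ runs b n j, ∀ x ∈ runs c (t + 1 + (n - s)) j, Φ x ≠ z) →
      ∃ j ≤ N, (runs c (t + 1 + (n - s)) j).card < (runs b n j).card ∧
      ∀ j', j ≤ j' → (runs c (t + 1 + (n - s)) j').card ≤ (runs b n j').card := by
    intro j hj hjN hK hz
    have hI : ∀ j', j ≤ j' → Set.InjOn Φ (runs c (t + 1 + (n - s)) j') := by
      intro j' hj'
      apply inj j' (by omega)
      intro i hi1 hi2 hl hr
      have := hK i (by simp only [K, mem_filter, mem_Icc]; omega)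
      have := h4 i hi1 hi2
      omega
    refine ⟨j, hjN, ?_, fun j' hj' => ?_⟩
    · obtain ⟨z, hz1, hz2⟩ := hz
      rw [← card_image_of_injOn (hI j le_rfl)]
      apply card_lt_card
      rw [ssubset_iff_of_subset]
      · refine ⟨z, hz1, fun h => ?_⟩
        obtain ⟨x, hx, e⟩ := mem_image.1 h
        exact hz2 x hx e
      · intro y hy
        obtain ⟨x, hx, rfl⟩ := mem_image.1 hy
        exact maps j hj x hx
    · exact card_le_card_of_injOn Φ (fun x hx => maps j' (by omega) x hx) (hI j' hj')
  by_cases hK : ∃ i ∈ K, k ≤ b i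
  · obtain ⟨i0, hi0, hki0⟩ := hK
    obtain ⟨i, hi, hmax⟩ := exists_max_image K b ⟨i0, hi0⟩
    have hi' := hi
    simp only [K, mem_filter, mem_Icc] at hi'
    have hbi := hmax i0 hi0
    have h4i := h4 i hi'.1.1 hi'.1.2
    refine finish (b i) (by omega) (hN i (by omega)) hmax ⟨(i, i), ?_, ?_⟩
    · rw [mem_runs]
      refine ⟨le_rfl, by simp only; omega, fun y hy1 hy2 => ?_⟩
      have : y = i := le_antisymm hy2 hy1
      rw [this]
    · intro x hx e
      have e1 : φ x.1 = i := congrArg Prod.fst e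
      have hx' := (mem_runs _ _ _ _).1 hx
      have a1 := hx'.2.2 x.1 le_rfl hx'.1
      by_cases hxt : x.1 ≤ t
      · rw [cL _ hxt] at a1
        rw [φL _ hxt] at e1
        rw [e1] at a1
        omega
      · rw [cR _ hxt] at a1
        rw [φR _ hxt] at e1
        rw [e1] at a1
        omega
  · push Not at hK
    have hks := h5 s le_rfl hst
    have hNs := hN s (by omega)
    refine finish k hσ (by omega) (fun i hi => (hK i hi).le) ⟨(s, t), ?_, ?_⟩
    · rw [mem_runs]
      exact ⟨hst, htn, h5⟩
    · intro x hx e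
      have e1 : φ x.1 = s := congrArg Prod.fst e
      have e2 : φ x.2 = t := congrArg Prod.snd e
      have hx' := (mem_runs _ _ _ _).1 hx
      rcases nostr k hσ x hx with h | h
      · have a1 := hx'.2.2 x.2 hx'.1 le_rfl
        rw [cL _ h] at a1
        rw [φL _ h] at e2
        rw [e2] at a1
        omega
      · have a1 := hx'.2.2 x.1 le_rfl hx'.1
        rw [cR _ h] at a1
        rw [φR _ h] at e1
        rw [e1] at a1
        omega

/-- Lexicographically minimal elements. -/
lemma lex_min {α : Type*} (F : α → ℕ → ℕ) : ∀ (N : ℕ) (P : α → Prop), (∃ a, P a) →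
    ∃ a, P a ∧ ∀ a', P a' → ¬ ∃ j < N, F a' j < F a j ∧ ∀ j', j ≤ j' → F a' j' ≤ F a j' := by
  intro N
  induction N with
  | zero => rintro P ⟨a, ha⟩; exact ⟨a, ha, fun a' _ ⟨j, hj, _⟩ => by omega⟩
  | succ N ih =>
    rintro P hP
    have hex : ∃ m a, P a ∧ F a N = m := by
      obtain ⟨a, ha⟩ := hP; exact ⟨_, a, ha, rfl⟩
    obtain ⟨a, ⟨ha, haN⟩, hmin⟩ := ih (fun a => P a ∧ F a N = Nat.find hex) (Nat.find_spec hex)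
    refine ⟨a, ha, fun a' ha' => ?_⟩
    rintro ⟨j, hj, hlt, hle⟩
    have hge : Nat.find hex ≤ F a' N := Nat.find_min' hex ⟨a', ha', rfl⟩
    have hle' := hle N (by omega)
    have hjN : j ≠ N := by rintro rfl; omega
    exact hmin a' ⟨ha', by omega⟩ ⟨j, by omega, hlt, hle⟩

/-- A path decomposition in terms of a sequence of finsets. -/
structure IsPD {V : Type*} (G : SimpleGraph V) (n : ℕ) (B : ℕ → Finset V) : Prop where
  cov : ∀ v, ∃ i < n, v ∈ B i
  edge : ∀ u v, G.Adj u v → ∃ i < n, u ∈ B i ∧ v ∈ B i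
  conv : ∀ v s u t, s ≤ u → u ≤ t → t < n → v ∈ B s → v ∈ B t → v ∈ B u

section sep
variable {V : Type*} {G : SimpleGraph V}

lemma IsSep.corner {X Y A C : Finset V} (h : IsSep G X Y) (h' : IsSep G A C) :
    IsSep G (X ∪ A) (Y ∩ C) := by
  constructor
  · intro v
    have := h.1 v; have := h'.1 v
    simp only [mem_union, mem_inter]; tauto
  · intro u v huv
    have := h.2 u v huv; have := h'.2 u v huv
    simp only [mem_union, mem_inter]; tauto

lemma IsSep.symm {X Y : Finset V} (h : IsSep G X Y) : IsSep G Y X :=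
  ⟨fun v => (h.1 v).symm, fun u v huv => (h.2 u v huv).symm⟩

lemma IsSep.corner' {X Y A C : Finset V} (h : IsSep G X Y) (h' : IsSep G A C) :
    IsSep G (X ∩ A) (Y ∪ C) := (h.symm.corner h'.symm).symm

end sep

section main
variable {V : Type*} [Fintype V] {G : SimpleGraph V}

/-- The union of the bags up to `i`. -/
noncomputable def low (B : ℕ → Finset V) (i : ℕ) : Finset V :=
  univ.filter fun v => ∃ j ≤ i, v ∈ B j

/-- The union of the bags from `i` on. -/
noncomputable def upp (n : ℕ) (B : ℕ → Finset V) (i : ℕ) : Finset V :=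
  univ.filter fun v => ∃ j, i ≤ j ∧ j < n ∧ v ∈ B j

lemma mem_low (B : ℕ → Finset V) (i : ℕ) (v : V) : v ∈ low B i ↔ ∃ j ≤ i, v ∈ B j := by
  simp [low]

lemma mem_upp (n : ℕ) (B : ℕ → Finset V) (i : ℕ) (v : V) :
    v ∈ upp n B i ↔ ∃ j, i ≤ j ∧ j < n ∧ v ∈ B j := by
  simp [upp]

lemma low_mono (B : ℕ → Finset V) {i j : ℕ} (h : i ≤ j) : low B i ⊆ low B j := by
  intro v hv
  rw [mem_low] at *
  obtain ⟨a, ha, hv⟩ := hv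
  exact ⟨a, by omega, hv⟩

lemma upp_anti (n : ℕ) (B : ℕ → Finset V) {i j : ℕ} (h : i ≤ j) : upp n B j ⊆ upp n B i := by
  intro v hv
  rw [mem_upp] at *
  obtain ⟨a, ha, hv⟩ := hv
  exact ⟨a, by omega, hv⟩

lemma sep_low {n : ℕ} {B : ℕ → Finset V} (h : IsPD G n B) (i : ℕ) :
    IsSep G (low B i) (upp n B i) := by
  constructor
  · intro v
    obtain ⟨j, hj, hv⟩ := h.cov v
    rcases le_total j i with hji | hji
    · left; rw [mem_low]; exact ⟨j, hji, hv⟩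
    · right; rw [mem_upp]; exact ⟨j, hji, hj, hv⟩
  · intro u v huv
    obtain ⟨j, hj, hu, hv⟩ := h.edge u v huv
    rcases le_total j i with hji | hji
    · left; rw [mem_low, mem_low]; exact ⟨⟨j, hji, hu⟩, ⟨j, hji, hv⟩⟩
    · right; rw [mem_upp, mem_upp]; exact ⟨⟨j, hji, hj, hu⟩, ⟨j, hji, hj, hv⟩⟩

lemma mem_bag_iff {n : ℕ} {B : ℕ → Finset V} (h : IsPD G n B) {i : ℕ} (hi : i < n) (v : V) :
    v ∈ B i ↔ v ∈ low B i ∧ v ∈ upp n B i := by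
  rw [mem_low, mem_upp]
  constructor
  · intro hv; exact ⟨⟨i, le_rfl, hv⟩, ⟨i, le_rfl, hi, hv⟩⟩
  · rintro ⟨⟨a, ha, hva⟩, ⟨c, hc, hcn, hvc⟩⟩
    exact h.conv v a i c ha hc hcn hva hvc

/-- The left corner bags. -/
noncomputable def lbag (B : ℕ → Finset V) (X Y : Finset V) (i : ℕ) : Finset V :=
  (B i ∩ X) ∪ (low B i ∩ (X ∩ Y))

/-- The right corner bags. -/
noncomputable def rbag (n : ℕ) (B : ℕ → Finset V) (X Y : Finset V) (i : ℕ) : Finset V :=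
  (B i ∩ Y) ∪ (upp n B i ∩ (X ∩ Y))

lemma splice_pd {n : ℕ} {B : ℕ → Finset V} (h : IsPD G n B) {s t : ℕ} (hst : s ≤ t) (htn : t < n)
    {X Y : Finset V} (hs : IsSep G X Y) (hL : low B s ⊆ X) (hR : upp n B t ⊆ Y) :
    IsPD G (t + 1 + (n - s)) (splice s t (lbag B X Y) (rbag n B X Y)) := by
  set c := splice s t (lbag B X Y) (rbag n B X Y) with hc
  have cL : ∀ p, p ≤ t → c p = lbag B X Y p := fun p hp => by simp [c, splice, hp]
  have cR : ∀ p, ¬ p ≤ t → c p = rbag n B X Y (p - (t + 1) + s) :=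
    fun p hp => by simp [c, splice, hp]
  have cR' : ∀ i, s ≤ i → c (i - s + (t + 1)) = rbag n B X Y i := by
    intro i hi
    rw [cR _ (by omega)]
    congr 1
    omega
  have toX : ∀ i v, i < s → v ∈ B i → v ∈ X := fun i v hi hv =>
    hL ((mem_low _ _ _).2 ⟨i, hi.le, hv⟩)
  have toY : ∀ i v, i < n → t < i → v ∈ B i → v ∈ Y := fun i v hi hi' hv =>
    hR ((mem_upp _ _ _ _).2 ⟨i, hi'.le, hi, hv⟩)
  have inl : ∀ i v, v ∈ B i → v ∈ X → v ∈ lbag B X Y i := by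
    intro i v h1 h2
    simp [lbag, h1, h2]
  have inr : ∀ i v, v ∈ B i → v ∈ Y → v ∈ rbag n B X Y i := by
    intro i v h1 h2
    simp [rbag, h1, h2]
  have place : ∀ i < n, ∀ W : Finset V, W ⊆ B i → (W ⊆ X ∨ W ⊆ Y) →
      ∃ p < t + 1 + (n - s), W ⊆ c p := by
    intro i hi W hW hXY
    have hll : i ≤ t → W ⊆ X → ∃ p < t + 1 + (n - s), W ⊆ c p := by
      intro hit hWX
      refine ⟨i, by omega, fun v hv => ?_⟩
      rw [cL i hit]
      exact inl i v (hW hv) (hWX hv)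
    have hrr : s ≤ i → W ⊆ Y → ∃ p < t + 1 + (n - s), W ⊆ c p := by
      intro hit hWY
      refine ⟨i - s + (t + 1), by omega, fun v hv => ?_⟩
      rw [cR' i hit]
      exact inr i v (hW hv) (hWY hv)
    rcases hXY with hx | hy
    · by_cases hit : i ≤ t
      · exact hll hit hx
      · exact hrr (by omega) (fun v hv => toY i v hi (by omega) (hW hv))
    · by_cases hit : s ≤ i
      · exact hrr hit hy
      · exact hll (by omega) (fun v hv => toX i v (by omega) (hW hv))
  have lX : ∀ i v, v ∈ lbag B X Y i → v ∈ X ∧ v ∈ low B i := by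
    intro i v hv
    simp only [lbag, mem_union, mem_inter] at hv
    have : v ∈ B i → v ∈ low B i := fun h => (mem_low _ _ _).2 ⟨i, le_rfl, h⟩
    tauto
  have rY : ∀ i v, i < n → v ∈ rbag n B X Y i → v ∈ Y ∧ v ∈ upp n B i := by
    intro i v hi hv
    simp only [rbag, mem_union, mem_inter] at hv
    have : v ∈ B i → v ∈ upp n B i := fun h => (mem_upp _ _ _ _).2 ⟨i, le_rfl, hi, h⟩
    tauto
  have lS : ∀ i v, v ∈ low B i → v ∈ X → v ∈ Y → v ∈ lbag B X Y i := by
    intro i v h1 h2 h3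
    simp [lbag, h1, h2, h3]
  have rS : ∀ i v, v ∈ upp n B i → v ∈ X → v ∈ Y → v ∈ rbag n B X Y i := by
    intro i v h1 h2 h3
    simp [rbag, h1, h2, h3]
  refine ⟨?_, ?_, ?_⟩
  · intro v
    obtain ⟨i, hi, hv⟩ := h.cov v
    obtain ⟨p, hp, hW⟩ := place i hi {v} (by simpa using hv) (by simpa using hs.1 v)
    exact ⟨p, hp, hW (by simp)⟩
  · intro u v huv
    obtain ⟨i, hi, hu, hv⟩ := h.edge u v huv
    obtain ⟨p, hp, hW⟩ := place i hi {u, v} (by intro x; simp; rintro (rfl | rfl) <;> assumption)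
      (by
        rcases hs.2 u v huv with ⟨a, b⟩ | ⟨a, b⟩
        · left; intro x; simp; rintro (rfl | rfl) <;> assumption
        · right; intro x; simp; rintro (rfl | rfl) <;> assumption)
    exact ⟨p, hp, hW (by simp), hW (by simp)⟩
  · intro v p q r hpq hqr hr hvp hvr
    by_cases hrt : r ≤ t
    · rw [cL _ (by omega)] at hvp hvr ⊢
      have hX := (lX _ _ hvp).1
      have hlow := low_mono B hpq (lX _ _ hvp).2
      by_cases hY : v ∈ Y
      · exact lS _ _ hlow hX hY
      · refine inl _ _ ?_ hX
        simp only [lbag, mem_union, mem_inter, hX, hY, and_true, and_false, or_false] at hvp hvr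
        exact h.conv v p q r hpq hqr (by omega) hvp hvr
    · by_cases hpt : p ≤ t
      · rw [cL _ hpt] at hvp
        rw [cR _ hrt] at hvr
        obtain ⟨hX, hlow⟩ := lX _ _ hvp
        obtain ⟨hY, hupp⟩ := rY _ _ (by omega) hvr
        by_cases hqt : q ≤ t
        · rw [cL _ hqt]
          exact lS _ _ (low_mono B hpq hlow) hX hY
        · rw [cR _ hqt]
          exact rS _ _ (upp_anti n B (by omega) hupp) hX hY
      · rw [cR _ (by omega)] at hvp hvr ⊢
        have hY := (rY _ _ (by omega) hvr).1
        have hupp := upp_anti n B (by omega : q - (t + 1) + s ≤ r - (t + 1) + s)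
          (rY _ _ (by omega) hvr).2
        by_cases hX : v ∈ X
        · exact rS _ _ hupp hX hY
        · refine inr _ _ ?_ hY
          simp only [rbag, mem_union, mem_inter, hX, hY, and_true, and_false, or_false] at hvp hvr
          exact h.conv v _ _ _ (by omega) (by omega) (by omega) hvp hvr

lemma splice_map {α β : Type*} (f : α → β) (s t : ℕ) (l r : ℕ → α) :
    (fun i => f (splice s t l r i)) = splice s t (fun i => f (l i)) (fun i => f (r i)) := by
  funext p
  simp only [splice]
  split_ifs <;> rfl

/-- The improvement step. -/
lemma improve {n : ℕ} {B : ℕ → Finset V} (h : IsPD G n B) {s t : ℕ} (hst : s ≤ t) (htn : t < n)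
    (k N : ℕ) (hk : ∀ i, s ≤ i → i ≤ t → k ≤ (B i).card) (hN : ∀ i < n, (B i).card ≤ N)
    (hno : ¬ Nonempty (Linkage G k (B s : Set V) (B t : Set V))) :
    ∃ (n' : ℕ) (B' : ℕ → Finset V), IsPD G n' B' ∧ (∀ i < n', (B' i).card ≤ N) ∧
      ∃ j ≤ N, (runs (fun i => (B' i).card) n' j).card < (runs (fun i => (B i).card) n j).card ∧
      ∀ j', j ≤ j' → (runs (fun i => (B' i).card) n' j').card
        ≤ (runs (fun i => (B i).card) n j').card := by
  have hex0 : ∃ X Y, IsSep G X Y ∧ B s ⊆ X ∧ B t ⊆ Y ∧ (X ∩ Y).card < k := by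
    by_contra hcon
    push Not at hcon
    exact hno (menger G (B s) (B t) k hcon)
  have hex : ∃ m X Y, IsSep G X Y ∧ low B s ⊆ X ∧ upp n B t ⊆ Y ∧ (X ∩ Y).card = m := by
    obtain ⟨m, X, Y, _⟩ : ∃ m X Y, IsSep G X Y ∧ low B s ⊆ X ∧ upp n B t ⊆ Y ∧
      (X ∩ Y).card = m := ⟨_, univ, univ, ⟨by simp, by simp⟩, by simp, by simp, rfl⟩
    exact ⟨m, X, Y, by assumption⟩
  obtain ⟨X, Y, hs, hL, hR, hσ⟩ := Nat.find_spec hex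
  have hmin : ∀ X' Y', IsSep G X' Y' → low B s ⊆ X' → upp n B t ⊆ Y' →
      (X ∩ Y).card ≤ (X' ∩ Y').card := by
    intro X' Y' h1 h2 h3
    rw [hσ]
    exact Nat.find_min' hex ⟨X', Y', h1, h2, h3, rfl⟩
  have hσk : (X ∩ Y).card < k := by
    obtain ⟨X', Y', hs', hX', hY', hlt⟩ := hex0
    have c1 := hs'.corner (sep_low h s)
    have c2 := c1.corner' (sep_low h t)
    refine lt_of_le_of_lt ((hmin _ _ c2 ?_ ?_).trans (card_le_card ?_)) hlt
    · intro v hv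
      have := low_mono B hst hv
      simp [hv, this]
    · exact subset_union_right
    · intro v hv
      have a1 := mem_bag_iff h (by omega : s < n) v
      have a2 := mem_bag_iff h htn v
      have a3 := @hX' v
      have a4 := @hY' v
      have a5 : v ∈ low B s → v ∈ low B t := fun h => low_mono B hst h
      have a6 : v ∈ upp n B t → v ∈ upp n B s := fun h => upp_anti n B hst h
      clear hs hL hR hσ hmin hno hN hk hs' hlt c1 c2
      simp only [mem_union, mem_inter] at hv ⊢
      obtain ⟨⟨b1, b2⟩, b3⟩ := hv
      grind
  have hlm : ∀ i < n, ∀ v, v ∈ lbag B X Y i ↔ v ∈ (X ∩ low B i) ∩ (Y ∪ upp n B i) := by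
    intro i hi v
    have a1 := mem_bag_iff h hi v
    simp only [lbag, mem_union, mem_inter]
    tauto
  have hrm : ∀ i < n, ∀ v, v ∈ rbag n B X Y i ↔ v ∈ (X ∪ low B i) ∩ (Y ∩ upp n B i) := by
    intro i hi v
    have a1 := mem_bag_iff h hi v
    simp only [rbag, mem_union, mem_inter]
    tauto
  have hsum : ∀ i < n, (lbag B X Y i).card + (rbag n B X Y i).card
      = (B i).card + (X ∩ Y).card := by
    intro i hi
    rw [← card_union_add_card_inter, ← card_union_add_card_inter (B i)]
    congr 2
    · ext v
      have a1 := mem_bag_iff h hi v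
      have a2 := hs.1 v
      have a3 := (sep_low h i).1 v
      simp only [lbag, rbag, mem_union, mem_inter]
      tauto
    · ext v
      have a1 := mem_bag_iff h hi v
      simp only [lbag, rbag, mem_union, mem_inter]
      tauto
  have hlge : ∀ i, s ≤ i → i < n → (X ∩ Y).card ≤ (lbag B X Y i).card := by
    intro i hi hin
    rw [Finset.ext (hlm i hin)]
    refine hmin _ _ (hs.corner' (sep_low h i)) (subset_inter hL (low_mono B hi)) ?_
    exact hR.trans subset_union_left
  have hrge : ∀ i, i ≤ t → (X ∩ Y).card ≤ (rbag n B X Y i).card := by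
    intro i hi
    rw [Finset.ext (hrm i (by omega))]
    exact hmin _ _ (hs.corner (sep_low h i)) (hL.trans subset_union_left)
      (subset_inter hR (upp_anti n B hi))
  have hl : ∀ i ≤ t, (lbag B X Y i).card ≤ (B i).card := by
    intro i hi
    have := hsum i (by omega)
    have := hrge i hi
    omega
  have hr : ∀ i, s ≤ i → i < n → (rbag n B X Y i).card ≤ (B i).card := by
    intro i hi hin
    have := hsum i (by omega)
    have := hlge i hi hin
    omega
  have hlt : (lbag B X Y t).card ≤ (X ∩ Y).card := by
    apply card_le_card
    intro v hv
    have a1 := mem_bag_iff h htn v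
    have a2 := @hR v
    simp only [lbag, mem_union, mem_inter] at hv ⊢
    tauto
  have hrs : (rbag n B X Y s).card ≤ (X ∩ Y).card := by
    apply card_le_card
    intro v hv
    have a1 := mem_bag_iff h (by omega : s < n) v
    have a2 := @hL v
    simp only [rbag, mem_union, mem_inter] at hv ⊢
    tauto
  refine ⟨t + 1 + (n - s), splice s t (lbag B X Y) (rbag n B X Y),
    splice_pd h hst htn hs hL hR, ?_, ?_⟩
  · intro p hp
    simp only [splice]
    split_ifs with hpt
    · exact (hl p hpt).trans (hN p (by omega))
    · exact (hr _ (by omega) (by omega)).trans (hN _ (by omega))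
  · rw [splice_map (fun S : Finset V => S.card)]
    exact potential (fun i => (B i).card) _ _ n s t k (X ∩ Y).card hst htn hσk hl hr hlt hrs
      (fun i hi1 hi2 => hsum i (by omega)) hk N hN

lemma exists_linked {N : ℕ} (hex : ∃ x : ℕ × (ℕ → Finset V), IsPD G x.1 x.2 ∧
      ∀ i < x.1, (x.2 i).card ≤ N) :
    ∃ (n : ℕ) (B : ℕ → Finset V), IsPD G n B ∧ (∀ i < n, (B i).card ≤ N) ∧
      ∀ s t k, s ≤ t → t < n → (∀ i, s ≤ i → i ≤ t → k ≤ (B i).card) →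
        Nonempty (Linkage G k (B s : Set V) (B t : Set V)) := by
  obtain ⟨⟨n, B⟩, ⟨h1, h2⟩, hmin⟩ := lex_min
    (fun (x : ℕ × (ℕ → Finset V)) j => (runs (fun i => (x.2 i).card) x.1 j).card) (N + 1) _ hex
  refine ⟨n, B, h1, h2, fun s t k hst htn hk => ?_⟩
  by_contra hno
  obtain ⟨n', B', hpd, hN', j, hj, hlt, hle⟩ := improve h1 hst htn k N hk h2 hno
  exact hmin (n', B') ⟨hpd, hN'⟩ ⟨j, by omega, hlt, hle⟩

end main

end LinkedPD

/-- Every finite simple graph has a linked path decomposition of width exactly its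
pathwidth. -/
theorem stmt_3 {V : Type*} [Fintype V] (G : SimpleGraph V) :
    ∃ D : PathDecomp G, D.width = pathwidth G ∧ D.IsLinked := by
  classical
  have hne : {w | ∃ D : PathDecomp G, D.width = w}.Nonempty :=
    ⟨_, ⟨1, fun _ => Set.univ, fun _ => ⟨0, trivial⟩, fun _ _ _ => ⟨0, trivial, trivial⟩,
      fun _ _ _ _ _ _ _ _ => trivial⟩, rfl⟩
  obtain ⟨D0, hD0⟩ := Nat.sInf_mem hne
  obtain ⟨n, B, hpd, hN, hlink⟩ := LinkedPD.exists_linked (G := G)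
      (N := ⨆ t, (D0.bag t).ncard)
    ⟨(D0.n, fun i => if h : i < D0.n then (D0.bag ⟨i, h⟩).toFinset else ∅), by
      refine ⟨⟨?_, ?_, ?_⟩, ?_⟩
      · intro v
        obtain ⟨t, ht⟩ := D0.mem_bag v
        exact ⟨t, t.2, by simpa using ht⟩
      · intro u v huv
        obtain ⟨t, ht⟩ := D0.edge_bag u v huv
        exact ⟨t, t.2, by simpa using ht⟩
      · intro v s u t hsu hut ht hvs hvt
        simp only at ht
        simp only [ht, show s < D0.n by omega, show u < D0.n by omega, dif_pos,
          Set.mem_toFinset] at hvs hvt ⊢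
        exact D0.convex v ⟨s, by omega⟩ ⟨u, by omega⟩ ⟨t, ht⟩ hsu hut hvs hvt
      · intro i hi
        simp only at hi
        simp only [hi, dif_pos]
        rw [← Set.ncard_eq_toFinset_card']
        exact le_ciSup (f := fun t => (D0.bag t).ncard) (Set.finite_range _).bddAbove ⟨i, hi⟩⟩
  let D : PathDecomp G :=
    { n := n
      bag := fun i => (B i : Set V)
      mem_bag := fun v => by
        obtain ⟨i, hi, hv⟩ := hpd.cov v
        exact ⟨⟨i, hi⟩, hv⟩
      edge_bag := fun u v huv => by
        obtain ⟨i, hi, hv⟩ := hpd.edge u v huv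
        exact ⟨⟨i, hi⟩, hv⟩
      convex := fun v s u t hsu hut hs ht => hpd.conv v s u t hsu hut t.2 hs ht }
  have hcard : ∀ i : Fin n, (D.bag i).ncard = (B i).card := fun i => Set.ncard_coe_finset _
  refine ⟨D, le_antisymm ?_ (Nat.sInf_le ⟨D, rfl⟩), ?_⟩
  · unfold pathwidth
    rw [← hD0]
    unfold PathDecomp.width
    refine Nat.sub_le_sub_right ?_ 1
    exact ciSup_le' fun t => (hcard t).trans_le (hN t t.2)
  · have main : ∀ s t : Fin n, s ≤ t → ∀ k, (∀ i : Fin n, s ≤ i → i ≤ t → k ≤ (D.bag i).ncard) →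
        Nonempty (Linkage G k (D.bag s) (D.bag t)) := by
      intro s t hst k hk
      refine hlink s t k hst t.2 fun i hi1 hi2 => ?_
      have := hk ⟨i, by omega⟩ hi1 hi2
      rwa [hcard] at this
    intro t t'
    rcases le_total t t' with h | h
    · apply main t t' h
      intro i h1 h2
      exact Nat.sInf_le ⟨i, by simpa [h] using h1, by simpa [h] using h2, rfl⟩
    · apply LinkedPD.linkage_symm
      apply main t' t h
      intro i h1 h2
      exact Nat.sInf_le ⟨i, by simpa [h] using h1, by simpa [h] using h2, rfl⟩
end
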